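/- Suppose m,n > 5 and fix a swap sequence of length at most K transforming the initial placement of the constructed token swapping instance into its target placement in which no pair of tokens swaps with each other more than once. Then at every point in time during the sequence, every slot gadget contains at least one item token at distance at least k·(1 − 1/(4n)) from the root. -/

import Mathlib

namespace UnweightedTS

/-- Vertices of the constructed tree: the root, ordering-gadget vertices `ord d`
(distance `d+1` from the root), slot-gadget path vertices `slot i d` (distance `d+1`
from the root in slot gadget `i`), and nooks.  (Coordinates range over all of `ℕ`;
the graph below only has edges between the vertices of the construction, so the
remaining vertices are isolated and carry no tokens.) -/
inductive Vtx (m : ℕ) where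
  | root : Vtx m
  | ord : ℕ → Vtx m
  | slot : Fin m → ℕ → Vtx m
  | nook : Fin m → Vtx m
deriving DecidableEq

/-- Adjacency generator for the tree: `len i` = length of the path of slot gadget `i`,
`lenOrd` = length of the ordering path, `nd` = distance from the root of the path
vertex to which the nook of each slot gadget is attached. -/
def rel {m : ℕ} (len : Fin m → ℕ) (lenOrd nd : ℕ) : Vtx m → Vtx m → Prop
  | .root, .ord d => d = 0 ∧ 0 < lenOrd
  | .ord d, .ord d' => d' = d + 1 ∧ d' < lenOrd
  | .root, .slot i d => d = 0 ∧ 0 < len i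
  | .slot i d, .slot i' d' => i = i' ∧ d' = d + 1 ∧ d' < len i
  | .slot i d, .nook i' => i = i' ∧ d + 1 = nd ∧ d < len i
  | _, _ => False

/-- The constructed tree, as a simple graph. -/
def Tree {m : ℕ} (len : Fin m → ℕ) (lenOrd nd : ℕ) : SimpleGraph (Vtx m) :=
  SimpleGraph.fromRel (rel len lenOrd nd)

/-- Swap the two values `e.1`, `e.2`. -/
def swapV {V : Type*} [DecidableEq V] (e : V × V) (v : V) : V :=
  if v = e.1 then e.2 else if v = e.2 then e.1 else v

/-- Apply a sequence of swaps to a token placement (token ↦ vertex). -/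
def applySwaps {T V : Type*} [DecidableEq V] (σ : List (V × V)) (f : T → V) : T → V :=
  σ.foldl (fun g e => fun t => swapV e (g t)) f

/-- Apply a sequence of star swaps (each given by a leaf) to a placement on the star
with center `none` and leaves `some l`. -/
def starApply {L : Type*} [DecidableEq L] (σ : List L) (f : Option L → Option L) :
    Option L → Option L :=
  σ.foldl (fun g l => fun t => swapV ((none : Option L), some l) (g t)) f

/-- The Star STS instance is a YES instance. -/
def StarSTSYes {L : Type*} [DecidableEq L] (π : Equiv.Perm (Option L)) (σ : List L) : Prop :=
  ∃ σ' : List L, σ'.Sublist σ ∧ starApply σ' id = ⇑π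

/-- `k = (mn)^25`, the length of a big segment. -/
def kk (m n : ℕ) : ℕ := (m * n) ^ 25

/-- `k' = k / n^8`, the length of a padding segment. -/
def kk' (m n : ℕ) : ℕ := kk m n / n ^ 8

variable {m n : ℕ}

/-- `nᵢ`: the number of occurrences of slot `i` in the swap sequence. -/
def cnt (s : Fin n → Fin m) (i : Fin m) : ℕ :=
  (Finset.univ.filter fun j : Fin n => s j = i).card

/-- Length of the ordering path: `nk + nmk'`. -/
def lenOrd (m n : ℕ) : ℕ := n * kk m n + n * m * kk' m n

/-- Length of the path of slot gadget `i`: `nᵢ k + n k'`. -/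
def lenSlot (s : Fin n → Fin m) (i : Fin m) : ℕ := cnt s i * kk m n + n * kk' m n

/-- The non-item tokens: big segments `xⱼ`, `yⱼ` of `k` tokens each, and padding
segments `p_{i,j}`, `q_{i,j}` of `k'` tokens each (in this order of the sum). -/
abbrev NonItem (m n : ℕ) :=
  (Fin n × Fin (kk m n)) ⊕ (Fin n × Fin (kk m n)) ⊕
    (Fin m × Fin n × Fin (kk' m n)) ⊕ (Fin m × Fin n × Fin (kk' m n))

/-- All tokens: item tokens (`Option (Fin m)`, `none` = item 0) and the non-item
tokens. -/
abbrev Tok (m n : ℕ) := Option (Fin m) ⊕ NonItem m n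

/-- The constructed tree: ordering path of length `nk + nmk'`, slot path `i` of
length `nᵢk + nk'`, nooks attached at distance `k` from the root. -/
def TheGraph (s : Fin n → Fin m) : SimpleGraph (Vtx m) :=
  Tree (lenSlot s) (lenOrd m n) (kk m n)

/-- The distance from the root, in slot gadget `i`, at which the block of segment
`q_{i,j}` (preceded by `yⱼ` when `s j = i`) starts in the initial configuration. -/
def offQ (s : Fin n → Fin m) (i : Fin m) (j : Fin n) : ℕ :=
  ∑ j' ∈ Finset.univ.filter (fun j' : Fin n => j'.val < j.val),
    (kk' m n + if s j' = i then kk m n else 0)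

/-- The slot occurring next after position `j` in the swap sequence, if any. -/
def nxt (s : Fin n → Fin m) (j : Fin n) : Option (Fin m) :=
  if h : j.val + 1 < n then some (s ⟨j.val + 1, h⟩) else none

/-- The rank (`0`-based position) of the padding segment `q_{i,j}` among the `m`
padding segments following `yⱼ` in the target configuration of the ordering gadget:
`q_{s_{j+1},j}` first, `q_{s_j,j}` last, and the others in increasing order of `i`. -/
def rho (s : Fin n → Fin m) (i : Fin m) (j : Fin n) : ℕ :=
  if some i = nxt s j then 0
  else if i = s j then m - 1
  else (if (nxt s j).isSome then 1 else 0) +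
    (Finset.univ.filter fun i' : Fin m =>
      i'.val < i.val ∧ i' ≠ s j ∧ some i' ≠ nxt s j).card

/-- The distance from the root, in slot gadget `i`, at which the block of segment
`p_{i,j}` (followed by `xⱼ` when `s j = i`) starts in the target configuration. -/
def tOffP (s : Fin n → Fin m) (i : Fin m) (j : Fin n) : ℕ :=
  ∑ j' ∈ Finset.univ.filter (fun j' : Fin n => j.val < j'.val),
    (kk' m n + if s j' = i then kk m n else 0)

/-- The initial placement of the tokens.  Item `0` is at the root and item `i` at the
nook of slot gadget `i`.  The ordering gadget contains, from the root outward, the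
blocks `x₁, p_{·,1}, x₂, p_{·,2}, …, xₙ, p_{·,n}` (the `m` padding blocks after `xⱼ`
ordered by `rho`); slot gadget `i` contains, from the root outward, the blocks
`q_{i,1},…,q_{i,n}` with `yⱼ` inserted immediately on the root side of `q_{i,j}`
whenever `s j = i`.  Within a segment the coordinate `a` increases away from the root
in slot gadgets and away from the root in the ordering gadget. -/
def initTok (s : Fin n → Fin m) : Tok m n → Vtx m
  | Sum.inl none => .root
  | Sum.inl (some i) => .nook i
  | Sum.inr (Sum.inl (j, a)) => .ord (j.val * (kk m n + m * kk' m n) + a.val)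
  | Sum.inr (Sum.inr (Sum.inl (j, a))) => .slot (s j) (offQ s (s j) j + a.val)
  | Sum.inr (Sum.inr (Sum.inr (Sum.inl (i, j, a)))) =>
      .ord (j.val * (kk m n + m * kk' m n) + kk m n + rho s i j * kk' m n + a.val)
  | Sum.inr (Sum.inr (Sum.inr (Sum.inr (i, j, a)))) =>
      .slot i (offQ s i j + (if s j = i then kk m n else 0) + a.val)

/-- The target placement of the tokens.  Item `o` goes to the position of item `π o`;
the ordering gadget contains, from its far end toward the root, the blocks
`y₁, q_{·,1}, y₂, q_{·,2}, …, yₙ, q_{·,n}` (the `m` padding blocks after `yⱼ` ordered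
by `rho`); slot gadget `i` contains, from the root outward, the blocks
`p_{i,n},…,p_{i,1}` with `xⱼ` inserted immediately after (away from the root)
`p_{i,j}` whenever `s j = i`.  The left-to-right order of the tokens within each
segment is the same as in the initial configuration. -/
def tgtTok (s : Fin n → Fin m) (π : Equiv.Perm (Option (Fin m))) : Tok m n → Vtx m
  | Sum.inl o => (match π o with | none => .root | some i => .nook i)
  | Sum.inr (Sum.inl (j, a)) =>
      .slot (s j) (tOffP s (s j) j + kk' m n + (kk m n - 1 - a.val))
  | Sum.inr (Sum.inr (Sum.inl (j, a))) =>
      .ord (lenOrd m n - 1 - (j.val * (kk m n + m * kk' m n) + a.val))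
  | Sum.inr (Sum.inr (Sum.inr (Sum.inl (i, j, a)))) =>
      .slot i (tOffP s i j + (kk' m n - 1 - a.val))
  | Sum.inr (Sum.inr (Sum.inr (Sum.inr (i, j, a)))) =>
      .ord (lenOrd m n - 1 -
        (j.val * (kk m n + m * kk' m n) + kk m n + rho s i j * kk' m n + a.val))

/-- `d_t`: the tree distance between token `t`'s initial and target vertices. -/
noncomputable def dd (s : Fin n → Fin m) (π : Equiv.Perm (Option (Fin m)))
    (t : Tok m n) : ℕ :=
  (TheGraph s).dist (initTok s t) (tgtTok s π t)

end UnweightedTS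

namespace UnweightedTS

variable {m n : ℕ}

/-- The placement after the first `τ` swaps of `σ` (time `τ`). -/
def placeAt (σ : List (Vtx m × Vtx m)) (f : Tok m n → Vtx m) (τ : ℕ) : Tok m n → Vtx m :=
  applySwaps (σ.take τ) f

/-- `isLeftMove u v` holds when a token moving across an edge from `u` to `v` makes a
*left* move: towards the root within a slot gadget (including out of a nook), or away
from the root within the ordering gadget. -/
def isLeftMove : Vtx m → Vtx m → Bool
  | .root, .ord _ => true
  | .ord _, .root => false
  | .ord d, .ord d' => decide (d < d')
  | .root, .slot _ _ => false
  | .slot _ _, .root => true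
  | .slot _ d, .slot _ d' => decide (d' < d)
  | .nook _, .slot _ _ => true
  | .slot _ _, .nook _ => false
  | _, _ => false

/-- A token of a `y` or `q` segment (initial vertex in a slot gadget). -/
def isSlotTok : Tok m n → Prop
  | Sum.inr (Sum.inr (Sum.inl _)) => True
  | Sum.inr (Sum.inr (Sum.inr (Sum.inr _))) => True
  | _ => False

/-- A token of an `x` or `p` segment (initial vertex in the ordering gadget). -/
def isNonSlotTok : Tok m n → Prop
  | Sum.inr (Sum.inl _) => True
  | Sum.inr (Sum.inr (Sum.inr (Sum.inl _))) => True
  | _ => False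

/-- `isContrary t u v` holds when a move of token `t` from `u` to `v` is a *contrary*
move: a right move of a slot token, a right move of an item token, or a left move of a
non-slot token. -/
def isContrary (t : Tok m n) (u v : Vtx m) : Bool :=
  match t with
  | Sum.inr (Sum.inl _) => isLeftMove u v
  | Sum.inr (Sum.inr (Sum.inr (Sum.inl _))) => isLeftMove u v
  | _ => !isLeftMove u v

/-- `c_t`: the number of contrary moves made by token `t` during the swap sequence
(starting from the placement `f`). -/
def cCount (t : Tok m n) : List (Vtx m × Vtx m) → (Tok m n → Vtx m) → ℕ
  | [], _ => 0
  | e :: rest, f =>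
      ((if f t = e.1 ∧ isContrary t e.1 e.2 = true then 1 else 0) +
        (if f t = e.2 ∧ isContrary t e.2 e.1 = true then 1 else 0)) +
        cCount t rest (fun t' => swapV e (f t'))

/-- Membership of a vertex in a gadget (`none` = the ordering gadget, `some i` = slot
gadget `i`, which includes its nook).  The root belongs to no gadget. -/
def memGadget : Vtx m → Option (Fin m) → Prop
  | .ord _, none => True
  | .slot i _, some i' => i = i'
  | .nook i, some i' => i = i'
  | _, _ => False

/-- The pair of tokens `t₁`, `t₂` is exchanged by the swap at step `idx` of `σ`. -/
def swapsPairAt (σ : List (Vtx m × Vtx m)) (f : Tok m n → Vtx m) (idx : ℕ)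
    (t₁ t₂ : Tok m n) : Prop :=
  ∃ h : idx < σ.length,
    (placeAt σ f idx t₁ = (σ.get ⟨idx, h⟩).1 ∧ placeAt σ f idx t₂ = (σ.get ⟨idx, h⟩).2) ∨
    (placeAt σ f idx t₁ = (σ.get ⟨idx, h⟩).2 ∧ placeAt σ f idx t₂ = (σ.get ⟨idx, h⟩).1)

/-- No pair of tokens swaps with each other more than once during `σ`. -/
def MinimalSeq (σ : List (Vtx m × Vtx m)) (f : Tok m n → Vtx m) : Prop :=
  ∀ (t₁ t₂ : Tok m n) (i₁ i₂ : ℕ), i₁ < i₂ →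
    swapsPairAt σ f i₁ t₁ t₂ → ¬ swapsPairAt σ f i₂ t₁ t₂

/-- The gadget containing a vertex, if any. -/
def gadgetOfV : Vtx m → Option (Fin m)
  | .slot i _ => some i
  | .nook i => some i
  | _ => none

/-- The free item token at time `τ`: the item token that was most recently at the
root (initially item `0`, i.e. `none`). -/
noncomputable def freeAt (σ : List (Vtx m × Vtx m)) (f : Tok m n → Vtx m) :
    ℕ → Option (Fin m)
  | 0 => none
  | τ + 1 =>
      if h : ∃ o : Option (Fin m), placeAt σ f (τ + 1) (Sum.inl o) = Vtx.root then
        h.choose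
      else freeAt σ f τ

/-- The exchange sequence `χ` built from the first `τ` steps: each time an item token
that was just in slot gadget `i` becomes the new free item token, `i` is appended. -/
noncomputable def chiList (σ : List (Vtx m × Vtx m)) (f : Tok m n → Vtx m) :
    ℕ → List (Fin m)
  | 0 => []
  | τ + 1 =>
      chiList σ f τ ++
        (if freeAt σ f (τ + 1) ≠ freeAt σ f τ then
          (match gadgetOfV (placeAt σ f τ (Sum.inl (freeAt σ f (τ + 1)))) with
            | some i => [i]
            | none => [])
        else [])

end UnweightedTS

/-!
Each swap moves one token left and the other right on the line that runs from the far end of the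
ordering gadget through the root into a slot gadget. Comparing the length of the sequence with the
distances the tokens have to cover, all tokens together make at most `N + n` moves against their
direction of travel, where `N` is the length of the ordering path. The tokens that leave the
ordering gadget have to give way to one another and to those that enter it, and as every pair may
swap only once, each departure of the sequence from the order of events prescribed by the target
costs one more contrary move. Hence these departures, counted by the defect and the rank slack of
the run, total at most `n`, and up to an error of `O(mn)` the incoming and outgoing tokens of each
slot gadget cross the root in the order in which they are laid out in segments.

Suppose that at some time no item is deep in slot gadget `i`, and take the maximal interval of such
times. Each item swaps at most once with each token, so while the nook is left to non-item tokens,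
nearly `k` incoming tokens of the gadget get past depth `k`. While a token of gadget `i` itself
stands in the nook, only few tokens get past. A foreign token standing there is away from its own
gadget during a whole big segment of `i`; since the labels of the padding are spread evenly, this
pins the number of deep incoming tokens near a multiple of `k`. A number that rises by nearly `k`
in small steps must also take values far from all multiples of `k`.
-/

namespace UnweightedTS

open Finset

/-! ### Words and ranks -/

section Counting

lemma card_filter_eq_add {α : Type*} [Fintype α] (P Q : α → Prop) [DecidablePred P]
    [DecidablePred Q] : #{a | P a} = #{a | P a ∧ Q a} + #{a | P a ∧ ¬ Q a} := by
  rw [← card_filter_add_card_filter_not (s := univ.filter P) Q, filter_filter, filter_filter]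

lemma sum_card_label_eq {α β : Type*} [Fintype α] [Fintype β] [DecidableEq β] (lab : α → β)
    (P : α → Prop) [DecidablePred P] : ∑ i, #{c | lab c = i ∧ P c} = #{c | P c} := by
  rw [card_eq_sum_card_fiberwise (s := univ.filter P) (t := univ) (f := lab) (by simp)]
  simp only [filter_filter, and_comm]

lemma card_filter_exists_eq_sum {α β γ : Type*} [Fintype α] (s : Finset β) (P : α → β → Prop)
    (f : β → γ) {g : α → γ} (hg : g.Injective) [DecidablePred fun b => ∃ a, P a b ∧ f b = g a]
    [∀ a, DecidablePred fun b => P a b ∧ f b = g a] :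
    #{b ∈ s | ∃ a, P a b ∧ f b = g a} = ∑ a, #{b ∈ s | P a b ∧ f b = g a} := by
  classical
  rw [← card_biUnion]
  · congr 1
    ext b
    simp
  · intro a _ a' _ hne
    refine disjoint_filter.2 fun b _ h h' => hne (hg (h.2.symm.trans h'.2))

lemma card_filter_reflect (S : ℕ) (P : ℕ → Prop) [DecidablePred P] :
    #{s ∈ range S | P (S - 1 - s)} = #{s ∈ range S | P s} := by
  refine card_bij (fun s _ => S - 1 - s) ?_ ?_ ?_
  · simp only [mem_filter, mem_range]
    grind
  · simp only [mem_filter, mem_range]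
    grind
  · intro b hb
    simp only [mem_filter, mem_range] at hb
    have hinv : S - 1 - (S - 1 - b) = b := by omega
    exact ⟨S - 1 - b, by simp only [mem_filter, mem_range, hinv]; exact ⟨by omega, hb.2⟩, hinv⟩

lemma card_filter_eq_of_reflect {S : ℕ} {P Q : ℕ → Prop} [DecidablePred P] [DecidablePred Q]
    (h : ∀ s < S, P s ↔ Q (S - 1 - s)) :
    #{s ∈ range S | P s} = #{s ∈ range S | Q s} := by
  rw [← card_filter_reflect S Q]
  exact congrArg card (filter_congr fun s hs => h s (mem_range.1 hs))

end Counting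

section Words

variable {α : Type*} [DecidableEq α] {N : ℕ} (lab : Fin N → α)

/-- The number of earlier positions of the word `lab` carrying the same letter as position `c`. -/
def labelRank (c : Fin N) : ℕ := #{c' | c' < c ∧ lab c' = lab c}

/-- The number of occurrences of the letter `i` in the word `lab`. -/
def labelCount (i : α) : ℕ := #{c | lab c = i}

/-- The number of occurrences of the letter `i` among the first `g` positions of `lab`. -/
def labelCountBefore (i : α) (g : ℕ) : ℕ := #{c | lab c = i ∧ c.val < g}

lemma labelRank_lt_labelCount (c : Fin N) : labelRank lab c < labelCount lab (lab c) :=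
  card_lt_card <| Finset.ssubset_iff_subset_ne.2
    ⟨fun x => by simp, fun h => by simpa using Finset.ext_iff.1 h c⟩

lemma labelCountBefore_mono (i : α) {g g' : ℕ} (h : g ≤ g') :
    labelCountBefore lab i g ≤ labelCountBefore lab i g' :=
  card_le_card <| monotone_filter_right _ fun _ _ hc => ⟨hc.1, hc.2.trans_le h⟩

lemma card_filter_rev (P : Fin N → Prop) [DecidablePred P] :
    #{c : Fin N | P c.rev} = #{c | P c} :=
  card_bij (fun c _ => c.rev) (by simp) (by simp) fun b hb => ⟨b.rev, by simpa using hb, by simp⟩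

lemma labelCount_comp_rev (i : α) : labelCount (fun c => lab c.rev) i = labelCount lab i :=
  card_filter_rev fun c => lab c = i

lemma labelCount_eq_labelRank_add (c : Fin N) :
    labelCount lab (lab c) = labelRank lab c + 1 + #{c' | c < c' ∧ lab c' = lab c} := by
  have hsplit : ({c' | lab c' = lab c} : Finset (Fin N)) =
      insert c (({c' | c' < c ∧ lab c' = lab c} : Finset (Fin N)) ∪
        ({c' | c < c' ∧ lab c' = lab c} : Finset (Fin N))) := by
    grind
  have hdisj : Disjoint ({c' | c' < c ∧ lab c' = lab c} : Finset (Fin N))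
      ({c' | c < c' ∧ lab c' = lab c} : Finset (Fin N)) :=
    disjoint_filter.2 fun _ _ h h' => h.1.not_gt h'.1
  rw [labelCount, hsplit, card_insert_of_notMem (by simp), card_union_of_disjoint hdisj, labelRank]
  omega

lemma labelRank_comp_rev (c : Fin N) :
    labelRank (fun c => lab c.rev) c =
      labelCount lab (lab c.rev) - 1 - labelRank lab c.rev := by
  have hrev : labelRank (fun c => lab c.rev) c = #{c' | c.rev < c' ∧ lab c' = lab c.rev} := by
    rw [labelRank]
    convert card_filter_rev fun c' => c.rev < c' ∧ lab c' = lab c.rev using 4 with c'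
    rw [Fin.rev_lt_rev]
  have := labelCount_eq_labelRank_add lab c.rev
  omega

end Words

section Ranks

variable {N : ℕ} {β : Type*} [LinearOrder β] (f : Fin N → β)

/-- The rank of the value `f a` among the values of `f`. -/
def valueRank (a : Fin N) : ℕ := #{b | f b < f a}

/-- The number of inversions of `f`. -/
def inversions : ℕ := #{p : Fin N × Fin N | p.1 < p.2 ∧ f p.2 < f p.1}

variable {f}

lemma valueRank_lt_valueRank {a b : Fin N} (h : f a < f b) : valueRank f a < valueRank f b :=
  card_lt_card <| Finset.ssubset_iff_subset_ne.2
    ⟨fun x => by simpa using fun hx => hx.trans h,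
      fun he => by simpa [h] using Finset.ext_iff.1 he a⟩

lemma valueRank_injective (hf : f.Injective) : (valueRank f).Injective := by
  intro a b h
  rcases lt_trichotomy (f a) (f b) with hlt | heq | hgt
  · exact absurd h (valueRank_lt_valueRank hlt).ne
  · exact hf heq
  · exact absurd h (valueRank_lt_valueRank hgt).ne'

variable (f) in
lemma sum_valueRank_sub_le_inversions : ∑ a, (valueRank f a - a.val) ≤ inversions f := by
  have hsum : inversions f = ∑ a, #{b | a < b ∧ f b < f a} := by
    simp only [inversions, card_filter, ← univ_product_univ, sum_product]
  rw [hsum]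
  refine sum_le_sum fun a _ => ?_
  have hcover : ({b | f b < f a} : Finset (Fin N)) ⊆
      Iio a ∪ ({b | a < b ∧ f b < f a} : Finset (Fin N)) := by
    intro b hb
    rcases lt_trichotomy a b with h | rfl | h <;> simp_all
  have := (card_le_card hcover).trans (card_union_le _ _)
  rw [Fin.card_Iio] at this
  rw [valueRank]
  omega

lemma sum_sub_valueRank_le_inversions (hf : f.Injective) :
    ∑ a, (a.val - valueRank f a) ≤ inversions f := by
  have hsum : inversions f = ∑ a, #{b | b < a ∧ f a < f b} := by
    simp only [inversions, card_filter, ← univ_product_univ, sum_product]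
    rw [sum_comm]
  rw [hsum]
  refine sum_le_sum fun a _ => ?_
  have hcover : Iio a ⊆ ({b | f b < f a} : Finset (Fin N)) ∪
      ({b | b < a ∧ f a < f b} : Finset (Fin N)) := by
    intro b hb
    rcases lt_trichotomy (f a) (f b) with h | h | h
    · simp_all
    · simp [hf h] at hb
    · simp_all
  have := (card_le_card hcover).trans (card_union_le _ _)
  rw [Fin.card_Iio] at this
  rw [valueRank]
  omega

section TwoOrders

variable {α : Type*} [DecidableEq α] (lab : Fin N → α)

/-- The number of pairs `c < a` of equally labelled positions with `c` at or beyond the rank of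
`f a`; it measures how far the order of the values of `f` runs ahead of the order of positions. -/
def rankSlack (f : Fin N → β) : ℕ :=
  ∑ a, #{c : Fin N | lab c = lab a ∧ valueRank f a ≤ c.val ∧ c < a}

lemma sum_card_valueRank_lt_le {γ : Type*} [LinearOrder γ] {g : Fin N → γ} (hf : f.Injective) :
    ∑ a, #{c | lab c = lab a ∧ valueRank g c < valueRank f a} ≤
      ∑ a, #{c | lab c = lab a ∧ c.val < valueRank f a} + ∑ c, (c.val - valueRank g c) := by
  have hlate : ∑ a, #{c | valueRank g c < valueRank f a ∧ valueRank f a ≤ c.val} ≤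
      ∑ c, (c.val - valueRank g c) := by
    simp only [card_filter]
    rw [sum_comm]
    refine sum_le_sum fun c _ => ?_
    rw [← card_filter, ← card_image_of_injective _ (valueRank_injective hf), ← Nat.card_Ioc]
    exact card_le_card fun p => by simp only [mem_image, mem_filter, mem_Ioc]; grind
  refine le_trans ?_ (Nat.add_le_add_left hlate _)
  rw [← sum_add_distrib]
  refine sum_le_sum fun a _ => le_trans (card_le_card fun c => ?_) (card_union_le _ _)
  simp only [mem_filter, mem_union]
  grind

lemma card_lt_valueRank_add_le (a : Fin N) :
    #{c | lab c = lab a ∧ c.val < valueRank f a} +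
        #{c : Fin N | lab c = lab a ∧ valueRank f a ≤ c.val ∧ c < a} ≤
      labelRank lab a + (valueRank f a - a.val) := by
  have hdisj : Disjoint ({c | lab c = lab a ∧ c.val < valueRank f a} : Finset (Fin N))
      ({c | lab c = lab a ∧ valueRank f a ≤ c.val ∧ c < a} : Finset (Fin N)) :=
    disjoint_filter.2 fun c _ h h' => (h.2.trans_le h'.2.1).false
  have hmid : #{c : Fin N | a.val ≤ c.val ∧ c.val < valueRank f a} ≤ valueRank f a - a.val := by
    rw [← Nat.card_Ico, ← card_image_of_injective _ Fin.val_injective]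
    exact card_le_card fun p => by simp only [mem_image, mem_filter, mem_Ico]; grind
  rw [← card_union_of_disjoint hdisj]
  refine le_trans (card_le_card (t := ({c | c < a ∧ lab c = lab a} : Finset (Fin N)) ∪
    ({c | a.val ≤ c.val ∧ c.val < valueRank f a} : Finset (Fin N))) fun c => ?_)
    ((card_union_le _ _).trans (Nat.add_le_add_left hmid _))
  simp only [mem_filter, mem_union, mem_univ, true_and, Fin.lt_def]
  grind

/- If position `c` has left before `a` arrives, then either `c` lies among the first
`valueRank f a` positions, or `c` overtook someone, which costs inversions of `g`; comparing
`valueRank f a` with `a` costs inversions of `f`. -/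
lemma sum_card_valueRank_lt_add_rankSlack_le {γ : Type*} [LinearOrder γ] {g : Fin N → γ}
    (hf : f.Injective) (hg : g.Injective) :
    ∑ a, #{c | lab c = lab a ∧ valueRank g c < valueRank f a} + rankSlack lab f ≤
      ∑ a, labelRank lab a + inversions f + inversions g := by
  have hpos : ∑ a, #{c | lab c = lab a ∧ c.val < valueRank f a} + rankSlack lab f ≤
      ∑ a, labelRank lab a + ∑ a, (valueRank f a - a.val) := by
    rw [rankSlack, ← sum_add_distrib, ← sum_add_distrib]
    exact sum_le_sum fun a _ => card_lt_valueRank_add_le lab a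
  have := sum_card_valueRank_lt_le lab (g := g) hf
  have := sum_valueRank_sub_le_inversions f
  have := sum_sub_valueRank_le_inversions hg
  omega

variable (f) (τ : β)

lemma card_label_overtaking_le (i : α) :
    #{a : Fin N | lab a = i ∧ f a < τ ∧ ¬ a.val < #{b | f b < τ}} ≤ rankSlack lab f + 1 := by
  set early := ({a : Fin N | lab a = i ∧ f a < τ ∧ ¬ a.val < #{b | f b < τ}} : Finset (Fin N))
  obtain h | h := early.eq_empty_or_nonempty
  · simp [h]
  obtain ⟨a, ha, hmax⟩ := exists_max_image early id h
  simp only [early, mem_filter, mem_univ, true_and, id] at ha hmax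
  have hsub : early ⊆
      insert a ({c | lab c = lab a ∧ valueRank f a ≤ c.val ∧ c < a} : Finset (Fin N)) := by
    intro c hc
    simp only [early, mem_filter, mem_univ, true_and, mem_insert] at hc ⊢
    have hrank : valueRank f a ≤ #{b | f b < τ} :=
      card_le_card <| monotone_filter_right _ fun _ _ hb => hb.trans ha.2.1
    rcases (hmax c hc).eq_or_lt with rfl | hlt
    · exact .inl rfl
    · exact .inr ⟨hc.1.trans ha.1.symm, by omega, hlt⟩
  have hterm : #{c | lab c = lab a ∧ valueRank f a ≤ c.val ∧ c < a} ≤ rankSlack lab f :=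
    single_le_sum (f := fun a => #{c : Fin N | lab c = lab a ∧ valueRank f a ≤ c.val ∧ c < a})
      (fun _ _ => Nat.zero_le _) (mem_univ a)
  exact (card_le_card hsub).trans ((card_insert_le _ _).trans (Nat.add_le_add_right hterm 1))

variable [Fintype α]

lemma card_overtaking_le : #{a : Fin N | f a < τ ∧ ¬ a.val < #{b | f b < τ}} ≤
    Fintype.card α * (rankSlack lab f + 1) := by
  rw [← sum_card_label_eq lab, ← card_univ, ← smul_eq_mul]
  exact sum_le_card_nsmul _ _ _ fun i _ => card_label_overtaking_le f lab τ i

lemma card_overtaken_le : #{a : Fin N | a.val < #{b | f b < τ} ∧ ¬ f a < τ} ≤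
    Fintype.card α * (rankSlack lab f + 1) := by
  have hfirst : #{a : Fin N | a.val < #{b | f b < τ}} = #{b | f b < τ} := by
    rw [Fin.card_filter_val_lt, min_eq_right]
    simpa using card_le_univ ({b | f b < τ} : Finset (Fin N))
  have := card_filter_eq_add (fun a => f a < τ) fun a => a.val < #{b | f b < τ}
  have := card_filter_eq_add (fun a : Fin N => a.val < #{b | f b < τ}) fun a => f a < τ
  have := card_overtaking_le f lab τ
  simp only [and_comm (a := f _ < τ) (b := _ < _)] at *
  omega

lemma card_label_lt_le_labelCountBefore_add (i : α) : #{a | lab a = i ∧ f a < τ} ≤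
    labelCountBefore lab i #{a | f a < τ} + Fintype.card α * (rankSlack lab f + 1) := by
  refine le_trans ?_ ((card_union_le _ _).trans
    (Nat.add_le_add_left (card_overtaking_le f lab τ) _))
  refine card_le_card fun a ha => ?_
  simp only [mem_filter, mem_union, mem_univ, true_and] at ha ⊢
  tauto

lemma labelCountBefore_le_card_label_lt_add (i : α) : labelCountBefore lab i #{a | f a < τ} ≤
    #{a | lab a = i ∧ f a < τ} + Fintype.card α * (rankSlack lab f + 1) := by
  refine le_trans ?_ ((card_union_le _ _).trans
    (Nat.add_le_add_left (card_overtaken_le f lab τ) _))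
  refine card_le_card fun a ha => ?_
  simp only [mem_filter, mem_union, mem_univ, true_and] at ha ⊢
  tauto

end TwoOrders

end Ranks

open scoped Classical

/-! ### Swap runs -/

/-- The tokens of a swap run: the items, the tokens `outgoing c` which travel from a slot gadget to
the ordering gadget (the slot tokens of the construction), and the tokens `incoming c` which travel
from the ordering gadget to a slot gadget (the non-slot tokens). -/
inductive Token (m N : ℕ) where
  | item (o : Option (Fin m)) : Token m N
  | outgoing (c : Fin N) : Token m N
  | incoming (c : Fin N) : Token m N
deriving DecidableEq, Fintype

/-- `RightArc k u v`: a move from `u` to its neighbour `v` is a right move, that is, towards the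
root in the ordering gadget and away from it in a slot gadget; nooks hang at distance `k`. -/
inductive RightArc {m : ℕ} (k : ℕ) : Vtx m → Vtx m → Prop where
  | ord_root : RightArc k (.ord 0) .root
  | ord_ord (d : ℕ) : RightArc k (.ord (d + 1)) (.ord d)
  | root_slot (i : Fin m) : RightArc k .root (.slot i 0)
  | slot_slot (i : Fin m) (d : ℕ) : RightArc k (.slot i d) (.slot i (d + 1))
  | slot_nook (i : Fin m) (d : ℕ) (h : d + 1 = k) : RightArc k (.slot i d) (.nook i)

/-- The vertices of the tree whose ordering path has length `N` and whose slot paths have the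
lengths counted by the word `lab`. -/
def IsVertex {m N : ℕ} (lab : Fin N → Fin m) : Vtx m → Prop
  | .root => True
  | .ord d => d < N
  | .slot i d => d < labelCount lab i
  | .nook _ => True

/-- The home vertices of the items. -/
def IsRootOrNook {m : ℕ} : Vtx m → Prop
  | .root => True
  | .ord _ => False
  | .slot _ _ => False
  | .nook _ => True

/-- The distance from the root for vertices of the ordering gadget, and `0` elsewhere. -/
def Vtx.ordDepth {m : ℕ} : Vtx m → ℕ
  | .ord d => d + 1
  | _ => 0

/-- The distance from the root for vertices of slot gadget `i`, and `0` elsewhere. -/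
def Vtx.slotDepth {m : ℕ} (k : ℕ) (i : Fin m) : Vtx m → ℕ
  | .slot i' d => if i' = i then d + 1 else 0
  | .nook i' => if i' = i then k + 1 else 0
  | _ => 0

lemma RightArc.ordDepth_eq {m k : ℕ} {u v : Vtx m} (h : RightArc k u v) :
    u.ordDepth = v.ordDepth + if gadgetOfV v = none then 1 else 0 := by
  cases h <;> simp [Vtx.ordDepth, gadgetOfV]

lemma RightArc.slotDepth_eq {m k : ℕ} {u v : Vtx m} (h : RightArc k u v) (i : Fin m) :
    v.slotDepth k i = u.slotDepth k i + if gadgetOfV v = some i then 1 else 0 := by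
  cases h <;> simp only [Vtx.slotDepth, gadgetOfV, Option.some.injEq] <;> grind

/-- A sequence of `S` swaps on the tree described by `lab` that solves the instance in which
`incoming c` exchanges its place in the ordering gadget for one in slot gadget `lab c`, and
`outgoing c` the other way round. In step `s` the token `leftMover s` makes a left move and trades
places with `rightMover s`; no two tokens trade places twice. -/
structure SwapRun (m N k S : ℕ) (lab : Fin N → Fin m) where
  pos : ℕ → Token m N → Vtx m
  leftMover : ℕ → Token m N
  rightMover : ℕ → Token m N
  arc : ∀ s < S, RightArc k (pos s (rightMover s)) (pos s (leftMover s))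
  pos_leftMover : ∀ s < S, pos (s + 1) (leftMover s) = pos s (rightMover s)
  pos_rightMover : ∀ s < S, pos (s + 1) (rightMover s) = pos s (leftMover s)
  pos_of_ne : ∀ s < S, ∀ x, x ≠ leftMover s → x ≠ rightMover s → pos (s + 1) x = pos s x
  pos_injective : ∀ s ≤ S, (pos s).Injective
  isVertex_pos : ∀ s ≤ S, ∀ x, IsVertex lab (pos s x)
  exists_pos_eq : ∀ s ≤ S, ∀ v, IsVertex lab v → ∃ x, pos s x = v
  pos_zero_outgoing : ∀ c, pos 0 (.outgoing c) = .slot (lab c) (labelRank lab c)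
  pos_last_outgoing : ∀ c, pos S (.outgoing c) = .ord (N - 1 - c)
  pos_zero_incoming : ∀ c, pos 0 (.incoming c) = .ord c
  pos_last_incoming : ∀ c,
    pos S (.incoming c) = .slot (lab c) (labelCount lab (lab c) - 1 - labelRank lab c)
  pos_zero_item : ∀ o, IsRootOrNook (pos 0 (.item o))
  pos_last_item : ∀ o, IsRootOrNook (pos S (.item o))
  not_swap_twice : ∀ s s', s < S → s' < S → s ≠ s' →
    ¬ ((leftMover s = leftMover s' ∧ rightMover s = rightMover s') ∨
      (leftMover s = rightMover s' ∧ rightMover s = leftMover s'))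

namespace SwapRun

variable {m N k S : ℕ} {lab : Fin N → Fin m} (R : SwapRun m N k S lab)

/-- The gadget in which step `s` takes place: slot gadget `i` for `some i`, and the ordering gadget
for `none`. -/
def gadget (s : ℕ) : Option (Fin m) := gadgetOfV (R.pos s (R.leftMover s))

/-- The depth of token `x` in the ordering gadget at time `s`. -/
def ordDepth (s : ℕ) (x : Token m N) : ℕ := (R.pos s x).ordDepth

/-- The depth of token `x` in slot gadget `i` at time `s`. -/
def slotDepth (i : Fin m) (s : ℕ) (x : Token m N) : ℕ := (R.pos s x).slotDepth k i

section Depth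

variable {s : ℕ}

lemma leftMover_ne_rightMover (hs : s < S) : R.leftMover s ≠ R.rightMover s := by
  intro h
  have harc := R.arc s hs
  have hord := harc.ordDepth_eq
  rw [h] at hord harc
  rcases hg : gadgetOfV (R.pos s (R.rightMover s)) with _ | i
  · simp [hg] at hord
  · simpa [hg] using harc.slotDepth_eq i

lemma ordDepth_succ_leftMover (hs : s < S) :
    R.ordDepth (s + 1) (R.leftMover s) = R.ordDepth s (R.rightMover s) := by
  rw [ordDepth, R.pos_leftMover s hs, ordDepth]

lemma ordDepth_succ_rightMover (hs : s < S) :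
    R.ordDepth (s + 1) (R.rightMover s) = R.ordDepth s (R.leftMover s) := by
  rw [ordDepth, R.pos_rightMover s hs, ordDepth]

lemma slotDepth_succ_leftMover (i : Fin m) (hs : s < S) :
    R.slotDepth i (s + 1) (R.leftMover s) = R.slotDepth i s (R.rightMover s) := by
  rw [slotDepth, R.pos_leftMover s hs, slotDepth]

lemma slotDepth_succ_rightMover (i : Fin m) (hs : s < S) :
    R.slotDepth i (s + 1) (R.rightMover s) = R.slotDepth i s (R.leftMover s) := by
  rw [slotDepth, R.pos_rightMover s hs, slotDepth]

lemma ordDepth_rightMover (hs : s < S) :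
    R.ordDepth s (R.rightMover s) =
      R.ordDepth s (R.leftMover s) + if R.gadget s = none then 1 else 0 :=
  (R.arc s hs).ordDepth_eq

lemma slotDepth_leftMover (i : Fin m) (hs : s < S) :
    R.slotDepth i s (R.leftMover s) =
      R.slotDepth i s (R.rightMover s) + if R.gadget s = some i then 1 else 0 :=
  (R.arc s hs).slotDepth_eq i

lemma ordDepth_step (hs : s < S) (x : Token m N) :
    (R.gadget s = none ∧ R.leftMover s = x ∧ R.ordDepth (s + 1) x = R.ordDepth s x + 1) ∨
    (R.gadget s = none ∧ R.rightMover s = x ∧ R.ordDepth s x = R.ordDepth (s + 1) x + 1) ∨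
    (R.ordDepth (s + 1) x = R.ordDepth s x ∧
      (R.gadget s = none → x ≠ R.leftMover s ∧ x ≠ R.rightMover s)) := by
  have hl := R.ordDepth_succ_leftMover hs
  have hr := R.ordDepth_succ_rightMover hs
  have hlr := R.ordDepth_rightMover hs
  by_cases hxl : x = R.leftMover s
  · grind
  by_cases hxr : x = R.rightMover s
  · grind
  · exact .inr (.inr ⟨by rw [ordDepth, R.pos_of_ne s hs x hxl hxr, ordDepth],
      fun _ => ⟨hxl, hxr⟩⟩)

lemma slotDepth_step (i : Fin m) (hs : s < S) (x : Token m N) :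
    (R.gadget s = some i ∧ R.rightMover s = x ∧
      R.slotDepth i (s + 1) x = R.slotDepth i s x + 1) ∨
    (R.gadget s = some i ∧ R.leftMover s = x ∧
      R.slotDepth i s x = R.slotDepth i (s + 1) x + 1) ∨
    (R.slotDepth i (s + 1) x = R.slotDepth i s x ∧
      (R.gadget s = some i → x ≠ R.leftMover s ∧ x ≠ R.rightMover s)) := by
  have hl := R.slotDepth_succ_leftMover i hs
  have hr := R.slotDepth_succ_rightMover i hs
  have hlr := R.slotDepth_leftMover i hs
  by_cases hxl : x = R.leftMover s
  · grind
  by_cases hxr : x = R.rightMover s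
  · grind
  · exact .inr (.inr ⟨by rw [slotDepth, R.pos_of_ne s hs x hxl hxr, slotDepth],
      fun _ => ⟨hxl, hxr⟩⟩)

lemma slotDepth_of_gadget_eq_some {i : Fin m} (hs : s < S) (h : R.gadget s = some i) :
    R.slotDepth i s (R.leftMover s) = R.slotDepth i s (R.rightMover s) + 1 ∧
      R.slotDepth i (s + 1) (R.leftMover s) = R.slotDepth i s (R.rightMover s) ∧
      R.slotDepth i (s + 1) (R.rightMover s) = R.slotDepth i s (R.leftMover s) :=
  ⟨by simpa [h] using R.slotDepth_leftMover i hs, R.slotDepth_succ_leftMover i hs,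
    R.slotDepth_succ_rightMover i hs⟩

lemma ordDepth_eq_zero_of_gadget_ne_none (hs : s < S) (h : R.gadget s ≠ none) :
    R.ordDepth s (R.leftMover s) = 0 ∧ R.ordDepth s (R.rightMover s) = 0 := by
  have hzero : R.ordDepth s (R.leftMover s) = 0 := by
    rw [gadget] at h
    rw [ordDepth]
    generalize R.pos s (R.leftMover s) = v at h
    cases v <;> simp_all [gadgetOfV, Vtx.ordDepth]
  exact ⟨hzero, by simp [R.ordDepth_rightMover hs, h, hzero]⟩

variable {R} {x y : Token m N}

lemma eq_of_ordDepth_eq (hs : s ≤ S) (h : R.ordDepth s x = R.ordDepth s y)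
    (hpos : 0 < R.ordDepth s x) : x = y := by
  apply R.pos_injective s hs
  unfold ordDepth at h hpos
  generalize R.pos s x = v at *
  generalize R.pos s y = w at *
  cases v <;> cases w <;> simp_all [Vtx.ordDepth]

lemma eq_of_slotDepth_eq {i : Fin m} (hs : s ≤ S) (h : R.slotDepth i s x = R.slotDepth i s y)
    (hpos : 0 < R.slotDepth i s x) (hx : R.pos s x ≠ .nook i) (hy : R.pos s y ≠ .nook i) :
    x = y := by
  apply R.pos_injective s hs
  unfold slotDepth at h hpos
  generalize R.pos s x = v at *
  generalize R.pos s y = w at *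
  cases v <;> cases w <;> simp_all [Vtx.slotDepth]
  all_goals grind

lemma slotDepth_of_pos_eq_nook {i : Fin m} (hx : R.pos s x = .nook i) :
    R.slotDepth i s x = k + 1 := by
  simp [slotDepth, hx, Vtx.slotDepth]

lemma slotDepth_eq_zero_of_ne {i j : Fin m} (hij : i ≠ j) (h : 0 < R.slotDepth i s x) :
    R.slotDepth j s x = 0 := by
  unfold slotDepth at *
  generalize R.pos s x = v at *
  cases v <;> simp_all [Vtx.slotDepth] <;> grind

lemma ordDepth_eq_zero_of_slotDepth_pos {i : Fin m} (h : 0 < R.slotDepth i s x) :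
    R.ordDepth s x = 0 := by
  unfold slotDepth ordDepth at *
  generalize R.pos s x = v at *
  cases v <;> simp_all [Vtx.slotDepth, Vtx.ordDepth]

end Depth

section Telescope

variable (x : Token m N) {p q : ℕ}

lemma ordDepth_add_card_rightMover (hpq : p ≤ q) (hq : q ≤ S) :
    R.ordDepth q x + #{s ∈ Ico p q | R.gadget s = none ∧ R.rightMover s = x} =
      R.ordDepth p x + #{s ∈ Ico p q | R.gadget s = none ∧ R.leftMover s = x} := by
  induction q, hpq using Nat.le_induction with
  | base => simp
  | succ q hpq ih =>
    have ih := ih (by omega)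
    have hne := R.leftMover_ne_rightMover (s := q) (by omega)
    rw [← insert_Ico_right_eq_Ico_add_one hpq, filter_insert, filter_insert]
    rcases R.ordDepth_step (s := q) (by omega) x with ⟨h1, h2, h3⟩ | ⟨h1, h2, h3⟩ | ⟨h1, h2⟩
    · rw [if_neg (by grind), if_pos (by grind), card_insert_of_notMem (by simp)]
      omega
    · rw [if_pos (by grind), if_neg (by grind), card_insert_of_notMem (by simp)]
      omega
    · rw [if_neg (by grind), if_neg (by grind)]
      omega

lemma slotDepth_add_card_leftMover (i : Fin m) (hpq : p ≤ q) (hq : q ≤ S) :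
    R.slotDepth i q x + #{s ∈ Ico p q | R.gadget s = some i ∧ R.leftMover s = x} =
      R.slotDepth i p x + #{s ∈ Ico p q | R.gadget s = some i ∧ R.rightMover s = x} := by
  induction q, hpq using Nat.le_induction with
  | base => simp
  | succ q hpq ih =>
    have ih := ih (by omega)
    have hne := R.leftMover_ne_rightMover (s := q) (by omega)
    rw [← insert_Ico_right_eq_Ico_add_one hpq, filter_insert, filter_insert]
    rcases R.slotDepth_step i (s := q) (by omega) x with ⟨h1, h2, h3⟩ | ⟨h1, h2, h3⟩ | ⟨h1, h2⟩
    · rw [if_neg (by grind), if_pos (by grind), card_insert_of_notMem (by simp)]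
      omega
    · rw [if_pos (by grind), if_neg (by grind), card_insert_of_notMem (by simp)]
      omega
    · rw [if_neg (by grind), if_neg (by grind)]
      omega

end Telescope

lemma ordDepth_lt_of_not_swap {x y : Token m N} {p q : ℕ} (hpq : p ≤ q) (hq : q ≤ S)
    (hx : ∀ s, p < s → s ≤ q → 0 < R.ordDepth s x) (h : R.ordDepth p x < R.ordDepth p y)
    (hno : ∀ s, p ≤ s → s < q → R.gadget s = none → R.leftMover s = x → R.rightMover s ≠ y) :
    R.ordDepth q x < R.ordDepth q y := by
  induction q, hpq using Nat.le_induction with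
  | base => exact h
  | succ q hpq ih =>
    have ih := ih (by omega) (fun s h1 h2 => hx s h1 (by omega))
      (fun s h1 h2 => hno s h1 (by omega))
    have hno' := hno q hpq (by omega)
    have hxy : x ≠ y := by
      rintro rfl
      omega
    have hne : R.ordDepth (q + 1) x ≠ R.ordDepth (q + 1) y :=
      fun h => hxy (eq_of_ordDepth_eq hq h (hx (q + 1) (by omega) le_rfl))
    have hx := R.ordDepth_step hq x
    have hy := R.ordDepth_step hq y
    grind

end SwapRun

/-! ### Time reversal -/

section TokenReverse

variable {m N : ℕ}

/-- The bijection on tokens that accompanies time reversal. -/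
def Token.reverse : Token m N → Token m N
  | .item o => .item o
  | .outgoing c => .incoming c.rev
  | .incoming c => .outgoing c.rev

@[simp] lemma Token.reverse_item (o : Option (Fin m)) :
    (Token.item o : Token m N).reverse = .item o := rfl

@[simp] lemma Token.reverse_outgoing (c : Fin N) :
    (Token.outgoing c : Token m N).reverse = .incoming c.rev := rfl

@[simp] lemma Token.reverse_incoming (c : Fin N) :
    (Token.incoming c : Token m N).reverse = .outgoing c.rev := rfl

@[simp] lemma Token.reverse_reverse (x : Token m N) : x.reverse.reverse = x := by
  cases x <;> simp

lemma Token.reverse_injective : (Token.reverse : Token m N → Token m N).Injective :=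
  Function.LeftInverse.injective Token.reverse_reverse

lemma Token.reverse_eq_iff {x y : Token m N} : x.reverse = y ↔ x = y.reverse :=
  ⟨fun h => by rw [← h, reverse_reverse], fun h => by rw [h, reverse_reverse]⟩

end TokenReverse

lemma isVertex_comp_rev {m N : ℕ} (lab : Fin N → Fin m) (v : Vtx m) :
    IsVertex (fun c => lab c.rev) v ↔ IsVertex lab v := by
  cases v <;> simp [IsVertex, labelCount_comp_rev]

namespace SwapRun

variable {m N k S : ℕ} {lab : Fin N → Fin m} (R : SwapRun m N k S lab)

/-- The run played backwards. It exchanges the roles of outgoing and incoming tokens, so that every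
statement about a run has a mirror image. -/
def reverse : SwapRun m N k S (fun c => lab c.rev) where
  pos s x := R.pos (S - s) x.reverse
  leftMover s := (R.rightMover (S - 1 - s)).reverse
  rightMover s := (R.leftMover (S - 1 - s)).reverse
  arc s hs := by
    have hsucc : S - s = S - 1 - s + 1 := by omega
    simp only [Token.reverse_reverse]
    rw [hsucc, R.pos_leftMover _ (by omega), R.pos_rightMover _ (by omega)]
    exact R.arc _ (by omega)
  pos_leftMover s hs := by
    have hsucc : S - s = S - 1 - s + 1 := by omega
    have hpred : S - (s + 1) = S - 1 - s := by omega
    simp only [Token.reverse_reverse]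
    rw [hsucc, hpred, R.pos_leftMover _ (by omega)]
  pos_rightMover s hs := by
    have hsucc : S - s = S - 1 - s + 1 := by omega
    have hpred : S - (s + 1) = S - 1 - s := by omega
    simp only [Token.reverse_reverse]
    rw [hsucc, hpred, R.pos_rightMover _ (by omega)]
  pos_of_ne s hs x hl hr := by
    have hsucc : S - s = S - 1 - s + 1 := by omega
    have hpred : S - (s + 1) = S - 1 - s := by omega
    rw [hsucc, hpred, R.pos_of_ne _ (by omega)]
    · rwa [ne_eq, Token.reverse_eq_iff]
    · rwa [ne_eq, Token.reverse_eq_iff]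
  pos_injective s hs := (R.pos_injective _ (by omega)).comp Token.reverse_injective
  isVertex_pos s hs x := (isVertex_comp_rev lab _).2 (R.isVertex_pos _ (by omega) _)
  exists_pos_eq s hs v hv := by
    obtain ⟨x, hx⟩ := R.exists_pos_eq (S - s) (by omega) v ((isVertex_comp_rev lab v).1 hv)
    exact ⟨x.reverse, by simpa using hx⟩
  pos_zero_outgoing c := by
    rw [Token.reverse_outgoing, Nat.sub_zero, R.pos_last_incoming, labelRank_comp_rev]
  pos_last_outgoing c := by
    rw [Token.reverse_outgoing, Nat.sub_self, R.pos_zero_incoming, Fin.val_rev]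
    congr 1
    omega
  pos_zero_incoming c := by
    rw [Token.reverse_incoming, Nat.sub_zero, R.pos_last_outgoing, Fin.val_rev]
    congr 1
    omega
  pos_last_incoming c := by
    rw [Token.reverse_incoming, Nat.sub_self, R.pos_zero_outgoing, labelRank_comp_rev,
      labelCount_comp_rev]
    have := labelRank_lt_labelCount lab c.rev
    congr 1
    omega
  pos_zero_item o := by simpa using R.pos_last_item o
  pos_last_item o := by simpa using R.pos_zero_item o
  not_swap_twice s s' hs hs' hne h := by
    apply R.not_swap_twice (S - 1 - s) (S - 1 - s') (by omega) (by omega) (by omega)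
    simp only [Token.reverse_injective.eq_iff] at h
    tauto

@[simp] lemma reverse_pos (s : ℕ) (x : Token m N) :
    R.reverse.pos s x = R.pos (S - s) x.reverse := rfl

@[simp] lemma reverse_ordDepth (s : ℕ) (x : Token m N) :
    R.reverse.ordDepth s x = R.ordDepth (S - s) x.reverse := rfl

@[simp] lemma reverse_slotDepth (i : Fin m) (s : ℕ) (x : Token m N) :
    R.reverse.slotDepth i s x = R.slotDepth i (S - s) x.reverse := rfl

@[simp] lemma reverse_leftMover (s : ℕ) :
    R.reverse.leftMover s = (R.rightMover (S - 1 - s)).reverse := rfl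

@[simp] lemma reverse_rightMover (s : ℕ) :
    R.reverse.rightMover s = (R.leftMover (S - 1 - s)).reverse := rfl

lemma reverse_gadget {s : ℕ} (hs : s < S) : R.reverse.gadget s = R.gadget (S - 1 - s) := by
  have hsucc : S - s = S - 1 - s + 1 := by omega
  rw [gadget, reverse_leftMover, reverse_pos, Token.reverse_reverse, hsucc,
    R.pos_rightMover _ (by omega), gadget]

end SwapRun

/-! ### Entering and leaving the ordering gadget -/

namespace SwapRun

variable {m N k S : ℕ} {lab : Fin N → Fin m} (R : SwapRun m N k S lab)

section Endpoints

variable (a : Fin N) (o : Option (Fin m)) (i : Fin m)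

lemma ordDepth_zero_outgoing : R.ordDepth 0 (.outgoing a) = 0 := by
  simp [ordDepth, R.pos_zero_outgoing, Vtx.ordDepth]

lemma ordDepth_last_outgoing : R.ordDepth S (.outgoing a) = N - a := by
  simp only [ordDepth, R.pos_last_outgoing, Vtx.ordDepth]
  omega

lemma ordDepth_last_incoming : R.ordDepth S (.incoming a) = 0 := by
  simp [ordDepth, R.pos_last_incoming, Vtx.ordDepth]

lemma ordDepth_zero_item : R.ordDepth 0 (.item o) = 0 := by
  have h := R.pos_zero_item o
  rw [ordDepth]
  revert h
  cases R.pos 0 (.item o) <;> simp [Vtx.ordDepth, IsRootOrNook]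

lemma slotDepth_zero_outgoing :
    R.slotDepth i 0 (.outgoing a) = if lab a = i then labelRank lab a + 1 else 0 := by
  simp [slotDepth, R.pos_zero_outgoing, Vtx.slotDepth]

lemma slotDepth_last_outgoing : R.slotDepth i S (.outgoing a) = 0 := by
  simp [slotDepth, R.pos_last_outgoing, Vtx.slotDepth]

lemma slotDepth_zero_incoming : R.slotDepth i 0 (.incoming a) = 0 := by
  simp [slotDepth, R.pos_zero_incoming, Vtx.slotDepth]

lemma slotDepth_last_incoming : R.slotDepth i S (.incoming a) =
    if lab a = i then labelCount lab (lab a) - labelRank lab a else 0 := by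
  have := labelRank_lt_labelCount lab a
  simp only [slotDepth, R.pos_last_incoming, Vtx.slotDepth]
  split_ifs <;> omega

end Endpoints

/-- The time from which on the outgoing token `a` stays in the ordering gadget. -/
def enterTime (a : Fin N) : ℕ := Nat.findGreatest (fun s => R.ordDepth s (.outgoing a) = 0) S

/-- The time at which the incoming token `a` leaves the ordering gadget for the first time. -/
def exitTime (a : Fin N) : ℕ := S - R.reverse.enterTime a.rev

section Times

variable {a : Fin N} {s : ℕ}

lemma ordDepth_enterTime (a : Fin N) : R.ordDepth (R.enterTime a) (.outgoing a) = 0 :=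
  Nat.findGreatest_spec (P := fun s => R.ordDepth s (.outgoing a) = 0) (Nat.zero_le S)
    (R.ordDepth_zero_outgoing a)

lemma enterTime_lt (a : Fin N) : R.enterTime a < S := by
  refine lt_of_le_of_ne (Nat.findGreatest_le S) fun h => ?_
  have := R.ordDepth_enterTime a
  rw [h, ordDepth_last_outgoing] at this
  omega

lemma ordDepth_pos_of_enterTime_lt (h : R.enterTime a < s) (hs : s ≤ S) :
    0 < R.ordDepth s (.outgoing a) :=
  Nat.pos_of_ne_zero <|
    Nat.findGreatest_is_greatest (P := fun s => R.ordDepth s (.outgoing a) = 0) h hs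

lemma le_enterTime (hs : s ≤ S) (h : R.ordDepth s (.outgoing a) = 0) : s ≤ R.enterTime a :=
  Nat.le_findGreatest hs h

lemma ordDepth_exitTime (a : Fin N) : R.ordDepth (R.exitTime a) (.incoming a) = 0 := by
  simpa [exitTime] using R.reverse.ordDepth_enterTime a.rev

lemma exitTime_le (a : Fin N) : R.exitTime a ≤ S := Nat.sub_le _ _

lemma exitTime_pos (a : Fin N) : 0 < R.exitTime a :=
  Nat.sub_pos_of_lt (R.reverse.enterTime_lt a.rev)

lemma ordDepth_pos_of_lt_exitTime (h : s < R.exitTime a) : 0 < R.ordDepth s (.incoming a) := by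
  have hS := R.exitTime_le a
  have hpos := R.reverse.ordDepth_pos_of_enterTime_lt (a := a.rev) (s := S - s)
    (by rw [exitTime] at h; omega) (by omega)
  simpa [Nat.sub_sub_self (h.le.trans hS)] using hpos

lemma exitTime_le_of_ordDepth_eq_zero (h : R.ordDepth s (.incoming a) = 0) :
    R.exitTime a ≤ s :=
  le_of_not_gt fun hlt => (R.ordDepth_pos_of_lt_exitTime hlt).ne' h

lemma reverse_enterTime (a : Fin N) : R.reverse.enterTime a = S - R.exitTime a.rev := by
  have := R.reverse.enterTime_lt a
  rw [exitTime, Fin.rev_rev]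
  omega

lemma reverse_exitTime (a : Fin N) : R.reverse.exitTime a = S - R.enterTime a.rev := by
  have hS := R.enterTime_lt a.rev
  apply le_antisymm
  · apply R.reverse.exitTime_le_of_ordDepth_eq_zero
    simpa [Nat.sub_sub_self hS.le] using R.ordDepth_enterTime a.rev
  · have hzero := R.reverse.ordDepth_exitTime a
    have := R.reverse.exitTime_le a
    have := R.le_enterTime (a := a.rev) (Nat.sub_le _ _) (by simpa using hzero)
    omega

lemma gadget_enterTime (a : Fin N) :
    R.gadget (R.enterTime a) = none ∧ R.leftMover (R.enterTime a) = .outgoing a := by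
  have hS := R.enterTime_lt a
  have hzero := R.ordDepth_enterTime a
  have := R.ordDepth_pos_of_enterTime_lt (a := a) (Nat.lt_add_one _) hS
  rcases R.ordDepth_step hS (.outgoing a) with h | h | h
  · exact ⟨h.1, h.2.1⟩
  all_goals omega

lemma gadget_exitTime_sub_one (a : Fin N) :
    R.gadget (R.exitTime a - 1) = none ∧ R.rightMover (R.exitTime a - 1) = .incoming a := by
  have hpos := R.exitTime_pos a
  have hS := R.exitTime_le a
  have hrev := R.reverse.gadget_enterTime a.rev
  rw [R.reverse_gadget (R.reverse.enterTime_lt _), reverse_leftMover, Token.reverse_eq_iff,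
    reverse_enterTime, Fin.rev_rev, Token.reverse_outgoing, Fin.rev_rev] at hrev
  rwa [show S - 1 - (S - R.exitTime a) = R.exitTime a - 1 by omega] at hrev

lemma enterTime_injective : R.enterTime.Injective := by
  intro a b h
  have ha := (R.gadget_enterTime a).2
  rw [h, (R.gadget_enterTime b).2] at ha
  simpa using ha.symm

lemma exitTime_injective : R.exitTime.Injective := by
  intro a b h
  have ha := (R.gadget_exitTime_sub_one a).2
  rw [h, (R.gadget_exitTime_sub_one b).2] at ha
  simpa using ha.symm

end Times

lemma card_le_card_steps {ι : Type*} (A : Finset ι) (f g : ι → Token m N)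
    (hfg : ∀ a ∈ A, ∀ b ∈ A, f a = f b → g a = g b → a = b) (P : ℕ → Prop)
    [DecidablePred P] (h : ∀ a ∈ A, ∃ s < S, P s ∧ R.leftMover s = f a ∧ R.rightMover s = g a) :
    #A ≤ #{s ∈ range S | P s} := by
  choose! F hF hP hf hg using h
  refine card_le_card_of_injOn F (fun a ha => mem_coe.2 ?_) fun a ha b hb hab => hfg a ha b hb ?_ ?_
  · exact mem_filter.2 ⟨mem_range.2 (hF a ha), hP a ha⟩
  · rw [← hf a ha, ← hf b hb, hab]
  · rw [← hg a ha, ← hg b hb, hab]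

lemma inversions_enterTime_le : inversions R.enterTime ≤
    #{s ∈ range S | R.gadget s = none ∧ ∃ b, R.enterTime b < s ∧ R.rightMover s = .outgoing b} := by
  rw [inversions]
  refine R.card_le_card_steps _ (fun p : Fin N × Fin N => .outgoing p.1)
    (fun p => .outgoing p.2) ?_ _ ?_
  · rintro ⟨a, b⟩ _ ⟨a', b'⟩ _ h h'
    simp_all
  · rintro ⟨a, b⟩ h
    simp only [mem_filter, mem_univ, true_and] at h
    by_contra! hno
    have hlt := R.ordDepth_lt_of_not_swap (x := .outgoing a) (y := .outgoing b)
      (R.enterTime_lt a).le le_rfl (fun s h1 h2 => R.ordDepth_pos_of_enterTime_lt h1 h2)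
      (by rw [ordDepth_enterTime]; exact R.ordDepth_pos_of_enterTime_lt h.2 (R.enterTime_lt a).le)
      (fun s h1 h2 h3 h4 h5 => hno s h2 ⟨h3, b, by omega, h5⟩ h4 h5)
    rw [ordDepth_last_outgoing, ordDepth_last_outgoing] at hlt
    have := Fin.lt_def.1 h.1
    omega

lemma inversions_reverse_enterTime : inversions R.reverse.enterTime = inversions R.exitTime := by
  symm
  refine card_bij (fun p _ => (p.2.rev, p.1.rev)) ?_ ?_ ?_
  · rintro ⟨a, b⟩ h
    have := R.exitTime_le a
    simp only [mem_filter, mem_univ, true_and, reverse_enterTime, Fin.rev_rev,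
      Fin.rev_lt_rev] at h ⊢
    omega
  · rintro ⟨a, b⟩ _ ⟨a', b'⟩ _ h
    simpa [and_comm] using h
  · rintro ⟨a, b⟩ h
    refine ⟨(b.rev, a.rev), ?_, by simp⟩
    simp only [mem_filter, mem_univ, true_and, reverse_enterTime, Fin.rev_lt_rev] at h ⊢
    omega

lemma inversions_exitTime_le : inversions R.exitTime ≤
    #{s ∈ range S | R.gadget s = none ∧ ∃ b, s < R.exitTime b ∧ R.leftMover s = .incoming b} := by
  rw [← inversions_reverse_enterTime]
  refine R.reverse.inversions_enterTime_le.trans ?_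
  rw [card_filter_eq_of_reflect (Q := fun s => R.gadget s = none ∧
    ∃ b : Fin N, S - R.exitTime b.rev < S - 1 - s ∧ R.leftMover s = .incoming b.rev)]
  · refine card_le_card (monotone_filter_right _ fun s _ ⟨hg, b, hlt, hb⟩ => ⟨hg, b.rev, ?_, hb⟩)
    omega
  · intro s hs
    simp only [R.reverse_gadget hs, reverse_rightMover, Token.reverse_eq_iff, reverse_enterTime,
      Token.reverse_outgoing, Nat.sub_sub_self (Nat.le_sub_one_of_lt hs)]

end SwapRun

/-! ### The accounting inequality -/

lemma Token.outgoing_injective {m N : ℕ} :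
    (Token.outgoing : Fin N → Token m N).Injective := fun _ _ h => by simpa using h

lemma Token.incoming_injective {m N : ℕ} :
    (Token.incoming : Fin N → Token m N).Injective := fun _ _ h => by simpa using h

/-- `x` is an incoming token. -/
def Token.IsIncoming {m N : ℕ} (x : Token m N) : Prop := ∃ c, x = .incoming c

namespace SwapRun

variable {m N k S : ℕ} {lab : Fin N → Fin m} (R : SwapRun m N k S lab)

lemma card_ordDepth_pos {s : ℕ} (hs : s ≤ S) : #{y | 0 < R.ordDepth s y} = N := by
  conv_rhs => rw [← card_range N]
  refine card_bij (fun y _ => R.ordDepth s y - 1) (fun y hy => ?_) (fun y hy z hz h => ?_)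
    fun d hd => ?_
  · simp only [mem_filter, mem_univ, true_and, mem_range] at hy ⊢
    have hvertex := R.isVertex_pos s hs y
    unfold ordDepth at *
    revert hvertex hy
    cases R.pos s y <;> simp [Vtx.ordDepth, IsVertex]
  · simp only [mem_filter, mem_univ, true_and] at hy hz
    exact eq_of_ordDepth_eq hs (by omega) hy
  · obtain ⟨x, hx⟩ := R.exists_pos_eq s hs (.ord d) (by simpa [IsVertex] using hd)
    have hdepth : R.ordDepth s x = d + 1 := by simp [ordDepth, hx, Vtx.ordDepth]
    exact ⟨x, by simp [hdepth], by simp [hdepth]⟩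

/-- The tokens in the ordering gadget at time `enterTime a` other than the outgoing ones that stay
there for good and the incoming ones that have not left it yet. -/
def strays (a : Fin N) : Finset (Token m N) :=
  {y | 0 < R.ordDepth (R.enterTime a) y ∧ ((∃ o, y = .item o) ∨
    (∃ b, y = .outgoing b ∧ R.enterTime a < R.enterTime b) ∨
    ∃ c, y = .incoming c ∧ R.exitTime c ≤ R.enterTime a)}

lemma filter_ordDepth_pos_eq (a : Fin N) :
    ({y | 0 < R.ordDepth (R.enterTime a) y} : Finset (Token m N)) =
      (image Token.outgoing {b | R.enterTime b < R.enterTime a} ∪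
        image Token.incoming {c | ¬ R.exitTime c ≤ R.enterTime a}) ∪ R.strays a := by
  ext y
  simp only [mem_filter, mem_univ, true_and, mem_union, mem_image, strays]
  constructor
  · intro hpos
    cases y with
    | item o => exact .inr ⟨hpos, .inl ⟨o, rfl⟩⟩
    | outgoing b =>
      rcases lt_trichotomy (R.enterTime b) (R.enterTime a) with hlt | heq | hgt
      · exact .inl (.inl ⟨b, hlt, rfl⟩)
      · rw [R.enterTime_injective heq, ordDepth_enterTime] at hpos
        exact absurd hpos (lt_irrefl 0)
      · exact .inr ⟨hpos, .inr (.inl ⟨b, rfl, hgt⟩)⟩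
    | incoming c =>
      by_cases hle : R.exitTime c ≤ R.enterTime a
      · exact .inr ⟨hpos, .inr (.inr ⟨c, rfl, hle⟩)⟩
      · exact .inl (.inr ⟨c, hle, rfl⟩)
  · rintro ((⟨b, hb, rfl⟩ | ⟨c, hc, rfl⟩) | h)
    · exact R.ordDepth_pos_of_enterTime_lt hb (R.enterTime_lt a).le
    · exact R.ordDepth_pos_of_lt_exitTime (not_le.1 hc)
    · exact h.1

/- The ordering gadget is always full, so each incoming token that has left makes room for an
outgoing token or for a stray. -/
lemma card_exitTime_le_eq (a : Fin N) :
    #{c | R.exitTime c ≤ R.enterTime a} = valueRank R.enterTime a + #(R.strays a) := by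
  have hfull := R.card_ordDepth_pos (R.enterTime_lt a).le
  rw [filter_ordDepth_pos_eq, card_union_of_disjoint, card_union_of_disjoint,
    card_image_of_injective _ Token.outgoing_injective,
    card_image_of_injective _ Token.incoming_injective] at hfull
  · have hcompl := card_filter_add_card_filter_not (s := (univ : Finset (Fin N)))
      fun c => R.exitTime c ≤ R.enterTime a
    rw [card_univ, Fintype.card_fin] at hcompl
    rw [valueRank]
    omega
  · simp only [disjoint_left, mem_image]
    grind
  · simp only [disjoint_left, mem_image, mem_union, strays, mem_filter, mem_univ, true_and]
    grind

lemma exists_swap_of_mem_strays {a : Fin N} {y : Token m N} (hy : y ∈ R.strays a) :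
    ∃ s < S, (R.gadget s = none ∧ ((∃ o, R.rightMover s = .item o) ∨
      (∃ b, s < R.enterTime b ∧ R.rightMover s = .outgoing b) ∨
      ∃ c, R.exitTime c ≤ s ∧ R.rightMover s = .incoming c)) ∧
      R.leftMover s = .outgoing a ∧ R.rightMover s = y := by
  simp only [strays, mem_filter, mem_univ, true_and] at hy
  obtain ⟨hpos, hy⟩ := hy
  have hlt := R.enterTime_lt a
  have hswap : ∀ q, R.enterTime a ≤ q → q ≤ S → R.ordDepth q y = 0 →
      ∃ s, R.enterTime a ≤ s ∧ s < q ∧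
        R.gadget s = none ∧ R.leftMover s = .outgoing a ∧ R.rightMover s = y := by
    intro q hq hqS hzero
    by_contra! hno
    have := R.ordDepth_lt_of_not_swap (x := .outgoing a) hq hqS
      (fun s h1 h2 => R.ordDepth_pos_of_enterTime_lt h1 (h2.trans hqS))
      (by rwa [ordDepth_enterTime]) hno
    omega
  obtain ⟨o, rfl⟩ | ⟨b, rfl, hb⟩ | ⟨c, rfl, hc⟩ := hy
  · obtain ⟨s, -, hs, hg, hl, hr⟩ := hswap S hlt.le le_rfl (R.reverse.ordDepth_zero_item o)
    exact ⟨s, hs, ⟨hg, .inl ⟨o, hr⟩⟩, hl, hr⟩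
  · obtain ⟨s, -, hs, hg, hl, hr⟩ := hswap _ hb.le (R.enterTime_lt b).le (R.ordDepth_enterTime b)
    exact ⟨s, hs.trans (R.enterTime_lt b), ⟨hg, .inr (.inl ⟨b, hs, hr⟩)⟩, hl, hr⟩
  · obtain ⟨s, hs', hs, hg, hl, hr⟩ := hswap S hlt.le le_rfl (R.ordDepth_last_incoming c)
    exact ⟨s, hs, ⟨hg, .inr (.inr ⟨c, hc.trans hs', hr⟩)⟩, hl, hr⟩

lemma sum_card_strays_le : ∑ a, #(R.strays a) ≤
    #{s ∈ range S | R.gadget s = none ∧ ∃ o, R.rightMover s = .item o} +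
    #{s ∈ range S | R.gadget s = none ∧ ∃ b, s < R.enterTime b ∧ R.rightMover s = .outgoing b} +
    #{s ∈ range S | R.gadget s = none ∧ ∃ c, R.exitTime c ≤ s ∧ R.rightMover s = .incoming c} := by
  rw [← card_sigma]
  refine (R.card_le_card_steps _ (fun p => .outgoing p.1) (fun p => p.2) ?_ _
    fun p hp => R.exists_swap_of_mem_strays (mem_sigma.1 hp).2).trans ?_
  · rintro ⟨a, y⟩ _ ⟨a', y'⟩ _ h h'
    simp_all
  · simp only [and_or_left, filter_or]
    rw [add_assoc]
    exact (card_union_le _ _).trans (Nat.add_le_add_left (card_union_le _ _) _)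

lemma card_rightMover_incoming_eq_card_leftMover_incoming :
    #{s ∈ range S | R.gadget s = none ∧ ∃ c, R.exitTime c ≤ s ∧ R.rightMover s = .incoming c} =
      #{s ∈ range S | R.gadget s = none ∧ ∃ c, R.exitTime c ≤ s ∧ R.leftMover s = .incoming c} := by
  have hsum : ∀ tok : ℕ → Token m N,
      #{s ∈ range S | R.gadget s = none ∧ ∃ c, R.exitTime c ≤ s ∧ tok s = .incoming c} =
        ∑ c, #{s ∈ Ico (R.exitTime c) S | R.gadget s = none ∧ tok s = .incoming c} := by
    intro tok
    have hcomm : ∀ s, (R.gadget s = none ∧ ∃ c, R.exitTime c ≤ s ∧ tok s = .incoming c) ↔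
        ∃ c, (R.gadget s = none ∧ R.exitTime c ≤ s) ∧ tok s = .incoming c := by grind
    simp only [hcomm, card_filter_exists_eq_sum (range S)
      (fun c s => R.gadget s = none ∧ R.exitTime c ≤ s) tok Token.incoming_injective]
    refine sum_congr rfl fun c _ => congrArg card (ext fun s => ?_)
    simp only [mem_filter, mem_range, mem_Ico]
    tauto
  rw [hsum, hsum]
  refine sum_congr rfl fun c _ => ?_
  simpa [ordDepth_last_incoming, ordDepth_exitTime] using
    R.ordDepth_add_card_rightMover (.incoming c) (R.exitTime_le c) le_rfl

/-- The number of contrary moves made in the steps satisfying `P`. -/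
noncomputable def contraryMoves (P : ℕ → Prop) [DecidablePred P] : ℕ :=
  #{s ∈ range S | P s ∧ (R.leftMover s).IsIncoming} +
    #{s ∈ range S | P s ∧ ¬ (R.rightMover s).IsIncoming}

lemma inversions_add_sum_card_strays_le :
    inversions R.enterTime + inversions R.exitTime + ∑ a, #(R.strays a) ≤
      R.contraryMoves fun s => R.gadget s = none := by
  have hincoming :
      #{s ∈ range S | R.gadget s = none ∧ ∃ c, R.exitTime c ≤ s ∧ R.leftMover s = .incoming c} +
        #{s ∈ range S | R.gadget s = none ∧ ∃ b, s < R.exitTime b ∧ R.leftMover s = .incoming b} ≤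
      #{s ∈ range S | R.gadget s = none ∧ (R.leftMover s).IsIncoming} := by
    simp only [card_filter, ← sum_add_distrib]
    refine sum_le_sum fun s _ => ?_
    simp only [Token.IsIncoming]
    cases R.leftMover s <;> simp only [Token.incoming.injEq, reduceCtorEq, exists_eq',
      exists_eq_right', and_false, exists_false] <;> grind
  have hother :
      #{s ∈ range S | R.gadget s = none ∧ ∃ o, R.rightMover s = .item o} +
        #{s ∈ range S | R.gadget s = none ∧ ∃ b, s < R.enterTime b ∧ R.rightMover s = .outgoing b} +
        #{s ∈ range S | R.gadget s = none ∧ ∃ b, R.enterTime b < s ∧ R.rightMover s = .outgoing b} ≤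
      #{s ∈ range S | R.gadget s = none ∧ ¬ (R.rightMover s).IsIncoming} := by
    simp only [card_filter, ← sum_add_distrib]
    refine sum_le_sum fun s _ => ?_
    simp only [Token.IsIncoming]
    cases R.rightMover s <;> simp only [Token.outgoing.injEq, Token.item.injEq, reduceCtorEq,
      exists_eq', exists_eq_right', and_false, exists_false] <;> grind
  have := R.inversions_enterTime_le
  have := R.inversions_exitTime_le
  have := R.sum_card_strays_le
  have := R.card_rightMover_incoming_eq_card_leftMover_incoming
  rw [contraryMoves]
  omega

/-- `x` is an outgoing token whose first slot gadget is the gadget of step `s`. -/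
def IsHomeOutgoing (s : ℕ) (x : Token m N) : Prop :=
  ∃ a, R.gadget s = some (lab a) ∧ x = .outgoing a

/-- `x` is an incoming token whose last slot gadget is the gadget of step `s`. -/
def IsHomeIncoming (s : ℕ) (x : Token m N) : Prop :=
  ∃ a, R.gadget s = some (lab a) ∧ x = .incoming a

lemma card_leftMover_isHomeOutgoing :
    #{s ∈ range S | R.IsHomeOutgoing s (R.leftMover s)} =
      ∑ a, labelRank lab a + N + #{s ∈ range S | R.IsHomeOutgoing s (R.rightMover s)} := by
  have hsum : ∀ tok : ℕ → Token m N, #{s ∈ range S | R.IsHomeOutgoing s (tok s)} =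
      ∑ a, #{s ∈ range S | R.gadget s = some (lab a) ∧ tok s = .outgoing a} := by
    intro tok
    convert card_filter_exists_eq_sum (range S) (fun a s => R.gadget s = some (lab a)) tok
      Token.outgoing_injective using 2
    exact filter_congr fun _ _ => Iff.rfl
  have hconst : ∑ a, labelRank lab a + N = ∑ a : Fin N, (labelRank lab a + 1) := by
    simp [sum_add_distrib]
  rw [hsum, hsum, hconst, ← sum_add_distrib]
  refine sum_congr rfl fun a _ => ?_
  simpa [slotDepth_zero_outgoing, slotDepth_last_outgoing] using
    R.slotDepth_add_card_leftMover (.outgoing a) (lab a) (Nat.zero_le S) le_rfl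

lemma card_foreign_incoming :
    #{s ∈ range S | R.gadget s ≠ none ∧ (R.leftMover s).IsIncoming ∧
      ¬ R.IsHomeIncoming s (R.leftMover s)} =
    #{s ∈ range S | R.gadget s ≠ none ∧ (R.rightMover s).IsIncoming ∧
      ¬ R.IsHomeIncoming s (R.rightMover s)} := by
  have hsum : ∀ tok : ℕ → Token m N,
      #{s ∈ range S | R.gadget s ≠ none ∧ (tok s).IsIncoming ∧ ¬ R.IsHomeIncoming s (tok s)} =
        ∑ p : Fin m × Fin N,
          #{s ∈ range S | p.1 ≠ lab p.2 ∧ (R.gadget s, tok s) = (some p.1, .incoming p.2)} := by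
    intro tok
    rw [← card_filter_exists_eq_sum (range S) (fun (p : Fin m × Fin N) _ => p.1 ≠ lab p.2)
      (fun s => (R.gadget s, tok s)) (g := fun p => (some p.1, .incoming p.2))
      (fun p p' h => by simpa [Prod.ext_iff] using h)]
    refine congrArg card (filter_congr fun s _ => ?_)
    simp only [Token.IsIncoming, IsHomeIncoming, Prod.exists, Prod.mk.injEq]
    rcases R.gadget s with _ | i <;> cases tok s <;> simp
  rw [hsum, hsum]
  refine sum_congr rfl fun ⟨i, c⟩ _ => ?_
  by_cases hic : i = lab c
  · simp [hic]
  · simpa [slotDepth_zero_incoming, slotDepth_last_incoming, hic, Ne.symm hic] using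
      R.slotDepth_add_card_leftMover (.incoming c) i (Nat.zero_le S) le_rfl

lemma contraryMoves_slot_gadgets_add :
    (R.contraryMoves fun s => R.gadget s ≠ none) +
      #{s ∈ range S | R.IsHomeOutgoing s (R.leftMover s) ∧
        R.IsHomeIncoming s (R.rightMover s)} =
    #{s ∈ range S | R.IsHomeIncoming s (R.leftMover s)} +
      #{s ∈ range S | R.gadget s ≠ none ∧ ¬ R.IsHomeOutgoing s (R.leftMover s) ∧
        ¬ R.IsHomeIncoming s (R.rightMover s)} +
      #{s ∈ range S | R.IsHomeOutgoing s (R.leftMover s)} := by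
  have hforeign := R.card_foreign_incoming
  suffices hpointwise : (R.contraryMoves fun s => R.gadget s ≠ none) +
      #{s ∈ range S | R.IsHomeOutgoing s (R.leftMover s) ∧
        R.IsHomeIncoming s (R.rightMover s)} +
      #{s ∈ range S | R.gadget s ≠ none ∧ (R.rightMover s).IsIncoming ∧
        ¬ R.IsHomeIncoming s (R.rightMover s)} =
      #{s ∈ range S | R.IsHomeIncoming s (R.leftMover s)} +
      #{s ∈ range S | R.gadget s ≠ none ∧ ¬ R.IsHomeOutgoing s (R.leftMover s) ∧
        ¬ R.IsHomeIncoming s (R.rightMover s)} +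
      #{s ∈ range S | R.IsHomeOutgoing s (R.leftMover s)} +
      #{s ∈ range S | R.gadget s ≠ none ∧ (R.leftMover s).IsIncoming ∧
        ¬ R.IsHomeIncoming s (R.leftMover s)} by omega
  simp only [contraryMoves, card_filter, ← sum_add_distrib]
  refine sum_congr rfl fun s _ => ?_
  have hin : ∀ x, R.IsHomeIncoming s x → R.gadget s ≠ none ∧ x.IsIncoming := by
    rintro x ⟨a, h, rfl⟩
    exact ⟨by simp [h], a, rfl⟩
  have hout : ∀ x, R.IsHomeOutgoing s x → R.gadget s ≠ none := by
    rintro x ⟨a, h, rfl⟩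
    simp [h]
  grind

/-- The outgoing token `a` and the incoming token `c` share a slot gadget, and `c` left the ordering
gadget before `a` entered it, but they do not trade places in the slot gadget. -/
def MissedSwap (a c : Fin N) : Prop := lab c = lab a ∧ R.exitTime c ≤ R.enterTime a ∧
  ¬ ∃ s < S, R.gadget s = some (lab a) ∧ R.leftMover s = .outgoing a ∧
    R.rightMover s = .incoming c

/-- The number of deviations in the slot gadgets from the ideal behaviour, in which every step moves
a home outgoing token to the left or a home incoming one to the right, none of them ever moves back,
and no swap is missed. -/
noncomputable def defect : ℕ :=
  #{s ∈ range S | R.gadget s ≠ none ∧ ¬ R.IsHomeOutgoing s (R.leftMover s) ∧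
    ¬ R.IsHomeIncoming s (R.rightMover s)} +
  #{s ∈ range S | R.IsHomeOutgoing s (R.rightMover s)} +
  #{s ∈ range S | R.IsHomeIncoming s (R.leftMover s)} +
  #{p : Fin N × Fin N | R.MissedSwap p.1 p.2}

lemma card_home_swaps_le :
    #{s ∈ range S | R.IsHomeOutgoing s (R.leftMover s) ∧ R.IsHomeIncoming s (R.rightMover s)} ≤
      #{p : Fin N × Fin N | (lab p.2 = lab p.1 ∧ R.exitTime p.2 ≤ R.enterTime p.1) ∧
        ∃ s < S, R.gadget s = some (lab p.1) ∧ R.leftMover s = .outgoing p.1 ∧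
          R.rightMover s = .incoming p.2} := by
  have hinj : (fun p : Fin N × Fin N =>
      ((.outgoing p.1, .incoming p.2) : Token m N × Token m N)).Injective :=
    fun p p' h => by simpa [Prod.ext_iff] using h
  rw [← card_image_of_injective _ hinj]
  refine card_le_card_of_injOn (fun s => (R.leftMover s, R.rightMover s))
    (fun s hs => ?_) fun s hs s' hs' h => ?_
  · obtain ⟨hs, ⟨a, ha, hl⟩, c, hc, hr⟩ := mem_filter.1 (mem_coe.1 hs)
    rw [mem_range] at hs
    have hlab : lab c = lab a := Option.some.inj (hc.symm.trans ha)
    have hzero := R.ordDepth_eq_zero_of_gadget_ne_none hs (by simp [ha])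
    rw [hl, hr] at hzero
    refine mem_coe.2 (mem_image.2 ⟨(a, c), mem_filter.2 ⟨mem_univ _, ⟨hlab, ?_⟩, s, hs, ha, hl, hr⟩,
      by simp [hl, hr]⟩)
    exact (R.exitTime_le_of_ordDepth_eq_zero hzero.2).trans (R.le_enterTime hs.le hzero.1)
  · by_contra hne
    have hs := mem_range.1 (mem_filter.1 (mem_coe.1 hs)).1
    have hs' := mem_range.1 (mem_filter.1 (mem_coe.1 hs')).1
    exact R.not_swap_twice s s' hs hs' hne (.inl (Prod.ext_iff.1 h))

lemma card_home_swaps_add_card_missedSwap_le :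
    #{s ∈ range S | R.IsHomeOutgoing s (R.leftMover s) ∧ R.IsHomeIncoming s (R.rightMover s)} +
      #{p : Fin N × Fin N | R.MissedSwap p.1 p.2} ≤
    ∑ a, #{c | lab c = lab a ∧ R.exitTime c ≤ R.enterTime a} := by
  have hpairs : #{p : Fin N × Fin N | lab p.2 = lab p.1 ∧ R.exitTime p.2 ≤ R.enterTime p.1} =
      ∑ a, #{c | lab c = lab a ∧ R.exitTime c ≤ R.enterTime a} := by
    simp only [card_filter, ← univ_product_univ, sum_product]
  have hsplit := card_filter_add_card_filter_not
    (s := ({p | lab p.2 = lab p.1 ∧ R.exitTime p.2 ≤ R.enterTime p.1} : Finset (Fin N × Fin N)))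
    fun p => ∃ s < S, R.gadget s = some (lab p.1) ∧ R.leftMover s = .outgoing p.1 ∧
      R.rightMover s = .incoming p.2
  rw [filter_filter, filter_filter] at hsplit
  have := R.card_home_swaps_le
  simp only [MissedSwap, ← and_assoc] at *
  omega

lemma card_exitTime_le_le (a : Fin N) :
    #{c | lab c = lab a ∧ R.exitTime c ≤ R.enterTime a} ≤
      #{c | lab c = lab a ∧ valueRank R.exitTime c < valueRank R.enterTime a} +
        #(R.strays a) := by
  have hcard := R.card_exitTime_le_eq a
  set r := valueRank R.enterTime a
  have hlate : #{c | r ≤ valueRank R.exitTime c ∧ valueRank R.exitTime c < r + #(R.strays a)} ≤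
      #(R.strays a) := by
    calc _ ≤ #(Ico r (r + #(R.strays a))) := card_le_card_of_injOn (valueRank R.exitTime)
          (fun c hc => mem_coe.2 (mem_Ico.2 (mem_filter.1 (mem_coe.1 hc)).2))
          (valueRank_injective R.exitTime_injective).injOn
      _ = #(R.strays a) := by rw [Nat.card_Ico, Nat.add_sub_cancel_left]
  refine le_trans (card_le_card fun c => ?_)
    ((card_union_le _ _).trans (Nat.add_le_add_left hlate _))
  simp only [mem_filter, mem_univ, true_and, mem_union]
  rintro ⟨hlab, hle⟩
  have hrank : valueRank R.exitTime c < r + #(R.strays a) := by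
    rw [← hcard]
    refine card_lt_card <| Finset.ssubset_iff_subset_ne.2 ⟨fun b => ?_, fun he => ?_⟩
    · simpa using fun hb => hb.le.trans hle
    · simpa [hle] using Finset.ext_iff.1 he c
  by_cases h : valueRank R.exitTime c < r
  · exact .inl ⟨hlab, h⟩
  · exact .inr ⟨not_lt.1 h, hrank⟩

/- Sum over both kinds of gadgets: inversions and strays cost contrary moves in the ordering gadget,
and they are the only way to save swaps inside the slot gadgets. -/
lemma defect_add_rankSlack_le {n : ℕ} (h : R.contraryMoves (fun _ => True) ≤ N + n) :
    R.defect + rankSlack lab R.enterTime ≤ n := by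
  have hsplit : R.contraryMoves (fun _ => True) =
      (R.contraryMoves fun s => R.gadget s = none) +
        R.contraryMoves fun s => R.gadget s ≠ none := by
    simp only [contraryMoves, card_filter, ← sum_add_distrib]
    refine sum_congr rfl fun s _ => ?_
    grind
  have hown := sum_le_sum fun a (_ : a ∈ univ) => R.card_exitTime_le_le a
  rw [sum_add_distrib] at hown
  have := R.inversions_add_sum_card_strays_le
  have := R.contraryMoves_slot_gadgets_add
  have := R.card_leftMover_isHomeOutgoing
  have := R.card_home_swaps_add_card_missedSwap_le
  have := sum_card_valueRank_lt_add_rankSlack_le lab R.enterTime_injective R.exitTime_injective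
  rw [defect]
  omega

end SwapRun

/-! ### Consequences of a small defect -/

/-- The error with which a run of defect at most `n` follows the prescribed order of events. -/
def tolerance (m n : ℕ) : ℕ := (m + 1) * (2 * n + 2)

lemma tolerance_eq (m n : ℕ) : tolerance m n = m * (2 * n + 1) + m + 2 * n + 2 := by
  rw [tolerance]
  ring

namespace SwapRun

variable {m N k S : ℕ} {lab : Fin N → Fin m} (R : SwapRun m N k S lab)

lemma reverse_isHomeOutgoing {s : ℕ} (hs : s < S) (x : Token m N) :
    R.reverse.IsHomeOutgoing s x ↔ R.IsHomeIncoming (S - 1 - s) x.reverse := by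
  rw [IsHomeOutgoing, IsHomeIncoming, R.reverse_gadget hs, Fin.rev_involutive.surjective.exists]
  simp [Token.reverse_eq_iff]

lemma reverse_isHomeIncoming {s : ℕ} (hs : s < S) (x : Token m N) :
    R.reverse.IsHomeIncoming s x ↔ R.IsHomeOutgoing (S - 1 - s) x.reverse := by
  rw [IsHomeOutgoing, IsHomeIncoming, R.reverse_gadget hs, Fin.rev_involutive.surjective.exists]
  simp [Token.reverse_eq_iff]

lemma reverse_missedSwap (a c : Fin N) :
    R.reverse.MissedSwap a c ↔ R.MissedSwap c.rev a.rev := by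
  have htimes : S - R.enterTime c.rev ≤ S - R.exitTime a.rev ↔
      R.exitTime a.rev ≤ R.enterTime c.rev := by
    have := R.enterTime_lt c.rev
    have := R.exitTime_le a.rev
    omega
  have hswap : ∀ s < S, (R.reverse.gadget s = some (lab a.rev) ∧
      R.reverse.leftMover s = .outgoing a ∧ R.reverse.rightMover s = .incoming c) ↔
      R.gadget (S - 1 - s) = some (lab a.rev) ∧ R.leftMover (S - 1 - s) = .outgoing c.rev ∧
        R.rightMover (S - 1 - s) = .incoming a.rev := by
    intro s hs
    simp only [R.reverse_gadget hs, reverse_leftMover, reverse_rightMover, Token.reverse_eq_iff]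
    simp [and_comm]
  have hexists : (∃ s < S, R.reverse.gadget s = some (lab a.rev) ∧
      R.reverse.leftMover s = .outgoing a ∧ R.reverse.rightMover s = .incoming c) ↔
      ∃ s < S, R.gadget s = some (lab a.rev) ∧ R.leftMover s = .outgoing c.rev ∧
        R.rightMover s = .incoming a.rev := by
    refine ⟨fun ⟨s, hs, h⟩ => ⟨S - 1 - s, by omega, (hswap s hs).1 h⟩,
      fun ⟨s, hs, h⟩ => ⟨S - 1 - s, by omega, (hswap _ (by omega)).2 ?_⟩⟩
    rwa [show S - 1 - (S - 1 - s) = s by omega]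
  rw [MissedSwap, MissedSwap, hexists, reverse_enterTime, reverse_exitTime, htimes,
    eq_comm (a := lab c.rev)]
  grind

lemma reverse_defect : R.reverse.defect = R.defect := by
  have hmissed : #{p : Fin N × Fin N | R.reverse.MissedSwap p.1 p.2} =
      #{p : Fin N × Fin N | R.MissedSwap p.1 p.2} := by
    refine card_bij (fun p _ => (p.2.rev, p.1.rev)) (fun p hp => ?_) (by grind) fun p hp => ?_
    · simpa [reverse_missedSwap] using hp
    · exact ⟨(p.2.rev, p.1.rev), by simpa [reverse_missedSwap] using hp, by simp⟩
  have hforeign : #{s ∈ range S | R.reverse.gadget s ≠ none ∧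
      ¬ R.reverse.IsHomeOutgoing s (R.reverse.leftMover s) ∧
      ¬ R.reverse.IsHomeIncoming s (R.reverse.rightMover s)} =
      #{s ∈ range S | R.gadget s ≠ none ∧ ¬ R.IsHomeOutgoing s (R.leftMover s) ∧
        ¬ R.IsHomeIncoming s (R.rightMover s)} :=
    card_filter_eq_of_reflect fun s hs => by
      simp only [R.reverse_isHomeIncoming hs, R.reverse_isHomeOutgoing hs, R.reverse_gadget hs,
        reverse_leftMover, reverse_rightMover, Token.reverse_reverse]
      tauto
  have hright : #{s ∈ range S | R.reverse.IsHomeOutgoing s (R.reverse.rightMover s)} =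
      #{s ∈ range S | R.IsHomeIncoming s (R.leftMover s)} :=
    card_filter_eq_of_reflect fun s hs => by simp [R.reverse_isHomeOutgoing hs]
  have hleft : #{s ∈ range S | R.reverse.IsHomeIncoming s (R.reverse.leftMover s)} =
      #{s ∈ range S | R.IsHomeOutgoing s (R.rightMover s)} :=
    card_filter_eq_of_reflect fun s hs => by simp [R.reverse_isHomeIncoming hs]
  rw [defect, defect, hmissed, hforeign, hright, hleft]
  omega

lemma card_foreign_steps_le_defect : #{s ∈ range S | R.gadget s ≠ none ∧
    ¬ R.IsHomeOutgoing s (R.leftMover s) ∧ ¬ R.IsHomeIncoming s (R.rightMover s)} ≤ R.defect := by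
  rw [defect]
  omega

lemma card_rightMover_isHomeOutgoing_le_defect :
    #{s ∈ range S | R.IsHomeOutgoing s (R.rightMover s)} ≤ R.defect := by
  rw [defect]
  omega

lemma card_leftMover_isHomeIncoming_le_defect :
    #{s ∈ range S | R.IsHomeIncoming s (R.leftMover s)} ≤ R.defect := by
  rw [defect]
  omega

lemma card_missedSwap_le_defect : #{p : Fin N × Fin N | R.MissedSwap p.1 p.2} ≤ R.defect := by
  rw [defect]
  omega

lemma card_missedSwap_left_le_defect (a : Fin N) : #{c | R.MissedSwap a c} ≤ R.defect :=
  (card_le_card_of_injOn (fun c => (a, c)) (fun c hc => by simpa using hc)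
    (Prod.mk_right_injective a).injOn).trans R.card_missedSwap_le_defect

lemma card_missedSwap_right_le_defect (c : Fin N) : #{a | R.MissedSwap a c} ≤ R.defect :=
  (card_le_card_of_injOn (fun a => (a, c)) (fun a ha => by simpa using ha)
    (Prod.mk_left_injective c).injOn).trans R.card_missedSwap_le_defect

/-- The number of incoming tokens with slot gadget `i` that have left the ordering gadget by time
`τ`. -/
noncomputable def exitCount (i : Fin m) (τ : ℕ) : ℕ := #{c | lab c = i ∧ R.exitTime c ≤ τ}

/-- The number of outgoing tokens with slot gadget `i` that are in the ordering gadget for good at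
time `τ`. -/
noncomputable def enterCount (i : Fin m) (τ : ℕ) : ℕ := #{c | lab c = i ∧ R.enterTime c < τ}

lemma exitCount_mono (i : Fin m) {τ τ' : ℕ} (h : τ ≤ τ') : R.exitCount i τ ≤ R.exitCount i τ' :=
  card_le_card <| monotone_filter_right _ fun _ _ hc => ⟨hc.1, hc.2.trans h⟩

/- The outgoing token `a` has to move left `labelRank lab a + 1` times in its slot gadget, and every
incoming token that left before it was swapped with it there, unless that swap is missed. -/
lemma exitCount_enterTime_le (a : Fin N) :
    R.exitCount (lab a) (R.enterTime a) ≤ labelRank lab a + 1 + 2 * R.defect := by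
  have hsplit := card_filter_eq_add (fun c => lab c = lab a ∧ R.exitTime c ≤ R.enterTime a)
    fun c => ∃ s < S, R.gadget s = some (lab a) ∧ R.leftMover s = .outgoing a ∧
      R.rightMover s = .incoming c
  have hswapped : #{c | (lab c = lab a ∧ R.exitTime c ≤ R.enterTime a) ∧
      ∃ s < S, R.gadget s = some (lab a) ∧ R.leftMover s = .outgoing a ∧
        R.rightMover s = .incoming c} ≤
      #{s ∈ range S | R.gadget s = some (lab a) ∧ R.leftMover s = .outgoing a} := by
    refine R.card_le_card_steps _ (fun _ => .outgoing a) (fun c => .incoming c) ?_ _ ?_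
    · intro b _ b' _ _ h
      exact Token.incoming_injective h
    · intro c hc
      obtain ⟨-, -, s, hs, hg, hl, hr⟩ := mem_filter.1 hc
      exact ⟨s, hs, ⟨hg, hl⟩, hl, hr⟩
  have hmissed : #{c | (lab c = lab a ∧ R.exitTime c ≤ R.enterTime a) ∧
      ¬ ∃ s < S, R.gadget s = some (lab a) ∧ R.leftMover s = .outgoing a ∧
        R.rightMover s = .incoming c} ≤ R.defect := by
    refine le_trans (card_le_card <| monotone_filter_right _ fun c _ hc => ?_)
      (R.card_missedSwap_left_le_defect a)
    exact ⟨hc.1.1, hc.1.2, hc.2⟩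
  have hback : #{s ∈ range S | R.gadget s = some (lab a) ∧ R.rightMover s = .outgoing a} ≤
      R.defect :=
    (card_le_card <| monotone_filter_right _ fun s _ h => ⟨a, h⟩).trans
      R.card_rightMover_isHomeOutgoing_le_defect
  have hmoves := R.slotDepth_add_card_leftMover (.outgoing a) (lab a) (Nat.zero_le S) le_rfl
  rw [slotDepth_zero_outgoing, slotDepth_last_outgoing, if_pos rfl, zero_add,
    ← range_eq_Ico] at hmoves
  rw [exitCount]
  omega

lemma exitCount_le (i : Fin m) (τ : ℕ) :
    R.exitCount i τ ≤ R.enterCount i τ + (2 * R.defect + 1) := by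
  by_cases h : ({a | lab a = i ∧ τ ≤ R.enterTime a} : Finset (Fin N)).Nonempty
  · obtain ⟨a, ha, hmin⟩ := exists_min_image _ id h
    simp only [mem_filter, mem_univ, true_and, id, and_imp] at ha hmin
    obtain ⟨rfl, ha⟩ := ha
    have hrank : labelRank lab a ≤ R.enterCount (lab a) τ := by
      refine card_le_card fun c hc => ?_
      simp only [mem_filter, mem_univ, true_and] at hc ⊢
      exact ⟨hc.2, not_le.1 fun hle => hc.1.not_ge (hmin c hc.2 hle)⟩
    have := R.exitCount_enterTime_le a
    have := R.exitCount_mono (lab a) ha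
    omega
  · refine le_add_right (card_le_card fun c hc => ?_)
    simp only [not_nonempty_iff_eq_empty, filter_eq_empty_iff, mem_univ, true_implies] at h
    simp only [mem_filter, mem_univ, true_and] at hc ⊢
    exact ⟨hc.1, not_le.1 fun hle => h ⟨hc.1, hle⟩⟩

lemma card_enterTime_lt_le {τ : ℕ} (hτ : τ ≤ S) :
    #{c | R.enterTime c < τ} ≤ #{c | R.exitTime c ≤ τ} := by
  have hsub : image Token.outgoing {c | R.enterTime c < τ} ∪
      image Token.incoming {c | ¬ R.exitTime c ≤ τ} ⊆
        ({y | 0 < R.ordDepth τ y} : Finset (Token m N)) := by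
    intro y
    simp only [mem_union, mem_image, mem_filter, mem_univ, true_and]
    rintro (⟨c, h, rfl⟩ | ⟨c, h, rfl⟩)
    · exact R.ordDepth_pos_of_enterTime_lt h hτ
    · exact R.ordDepth_pos_of_lt_exitTime (not_le.1 h)
  have hcard := card_le_card hsub
  rw [R.card_ordDepth_pos hτ, card_union_of_disjoint,
    card_image_of_injective _ Token.outgoing_injective,
    card_image_of_injective _ Token.incoming_injective] at hcard
  · have hcompl := card_filter_add_card_filter_not (s := (univ : Finset (Fin N)))
      fun c => R.exitTime c ≤ τ
    rw [card_univ, Fintype.card_fin] at hcompl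
    omega
  · simp only [disjoint_left, mem_image]
    grind

variable {R} {n : ℕ}

lemma exitCount_le_enterCount_add (hR : R.defect ≤ n) (i : Fin m) (τ : ℕ) :
    R.exitCount i τ ≤ R.enterCount i τ + tolerance m n := by
  have := R.exitCount_le i τ
  rw [tolerance_eq]
  omega

/- Overall at least as many tokens have exited as have entered, and no slot gadget has a large
surplus of exits, so none has a large deficit either. -/
lemma enterCount_le_exitCount_add (hR : R.defect ≤ n) (i : Fin m) {τ : ℕ} (hτ : τ ≤ S) :
    R.enterCount i τ ≤ R.exitCount i τ + tolerance m n := by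
  have htotal : ∑ i, R.enterCount i τ ≤ ∑ i, R.exitCount i τ := by
    simpa only [enterCount, exitCount, sum_card_label_eq] using R.card_enterTime_lt_le hτ
  have hothers : ∑ j ∈ univ.erase i, R.exitCount j τ ≤
      ∑ j ∈ univ.erase i, R.enterCount j τ + m * (2 * n + 1) := by
    calc ∑ j ∈ univ.erase i, R.exitCount j τ
        ≤ ∑ j ∈ univ.erase i, (R.enterCount j τ + (2 * n + 1)) :=
          sum_le_sum fun j _ => (R.exitCount_le j τ).trans (by omega)
      _ ≤ ∑ j ∈ univ.erase i, R.enterCount j τ + m * (2 * n + 1) := by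
          rw [sum_add_distrib, sum_const, card_erase_of_mem (mem_univ i), card_univ,
            Fintype.card_fin, smul_eq_mul]
          gcongr
          omega
  have := add_sum_erase univ (fun i => R.enterCount i τ) (mem_univ i)
  have := add_sum_erase univ (fun i => R.exitCount i τ) (mem_univ i)
  rw [tolerance_eq]
  omega

lemma enterCount_le_labelCountBefore_add (hslack : rankSlack lab R.enterTime ≤ n)
    (i : Fin m) (τ : ℕ) :
    R.enterCount i τ ≤ labelCountBefore lab i #{a | R.enterTime a < τ} + tolerance m n := by
  have := card_label_lt_le_labelCountBefore_add R.enterTime lab τ i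
  have : Fintype.card (Fin m) * (rankSlack lab R.enterTime + 1) ≤ tolerance m n := by
    rw [Fintype.card_fin]
    exact Nat.mul_le_mul (by omega) (by omega)
  rw [enterCount]
  omega

lemma labelCountBefore_le_enterCount_add (hslack : rankSlack lab R.enterTime ≤ n)
    (i : Fin m) (τ : ℕ) :
    labelCountBefore lab i #{a | R.enterTime a < τ} ≤ R.enterCount i τ + tolerance m n := by
  have := labelCountBefore_le_card_label_lt_add R.enterTime lab τ i
  have : Fintype.card (Fin m) * (rankSlack lab R.enterTime + 1) ≤ tolerance m n := by
    rw [Fintype.card_fin]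
    exact Nat.mul_le_mul (by omega) (by omega)
  rw [enterCount]
  omega

end SwapRun

/-! ### Tame tokens -/

namespace SwapRun

variable {m N k S : ℕ} {lab : Fin N → Fin m} (R : SwapRun m N k S lab)

/-- The incoming token `c` never moves left in its own slot gadget. -/
def IsTameIncoming (c : Fin N) : Prop :=
  ∀ s < S, R.gadget s = some (lab c) → R.leftMover s ≠ .incoming c

/-- The outgoing token `a` never moves right in its own slot gadget. -/
def IsTameOutgoing (a : Fin N) : Prop :=
  ∀ s < S, R.gadget s = some (lab a) → R.rightMover s ≠ .outgoing a

/-- `x` is a tame token whose own slot gadget is `i`. -/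
def IsTameIn (i : Fin m) (x : Token m N) : Prop :=
  (∃ a, x = .outgoing a ∧ lab a = i ∧ R.IsTameOutgoing a) ∨
    ∃ c, x = .incoming c ∧ lab c = i ∧ R.IsTameIncoming c

lemma reverse_isTameIncoming (c : Fin N) :
    R.reverse.IsTameIncoming c ↔ R.IsTameOutgoing c.rev := by
  have hstep : ∀ s < S, (R.reverse.gadget s = some (lab c.rev) →
      R.reverse.leftMover s ≠ .incoming c) ↔
      (R.gadget (S - 1 - s) = some (lab c.rev) →
        R.rightMover (S - 1 - s) ≠ .outgoing c.rev) := fun s hs => by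
    rw [R.reverse_gadget hs, reverse_leftMover, Ne, Token.reverse_eq_iff, Token.reverse_incoming]
  refine ⟨fun h s hs => ?_, fun h s hs => (hstep s hs).2 (h _ (by omega))⟩
  have := (hstep (S - 1 - s) (by omega)).1 (h _ (by omega))
  rwa [show S - 1 - (S - 1 - s) = s by omega] at this

variable {R} {n : ℕ}

lemma pos_succ_of_pos_eq_nook {i : Fin m} {s : ℕ} (hs : s < S) {x : Token m N}
    (h : R.pos s x = .nook i) :
    R.pos (s + 1) x = .nook i ∨ (R.leftMover s = x ∧ R.gadget s = some i ∧
      R.slotDepth i (s + 1) x = k ∧ R.pos (s + 1) (R.rightMover s) = .nook i) := by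
  have harc := R.arc s hs
  by_cases hl : x = R.leftMover s
  · subst hl
    refine .inr ⟨rfl, ?_, ?_, by rw [R.pos_rightMover s hs, h]⟩
    · rw [gadget, h]
      rfl
    · rw [slotDepth, R.pos_leftMover s hs]
      rw [h] at harc
      generalize R.pos s (R.rightMover s) = w at *
      cases harc with
      | slot_nook _ d hd => simp [Vtx.slotDepth, hd]
  by_cases hr : x = R.rightMover s
  · subst hr
    rw [h] at harc
    cases harc
  · exact .inl (by rw [R.pos_of_ne s hs x hl hr, h])

lemma pos_of_pos_succ_eq_nook {i : Fin m} {s : ℕ} (hs : s < S) {x : Token m N}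
    (h : R.pos (s + 1) x = .nook i) :
    R.pos s x = .nook i ∨ (R.rightMover s = x ∧ R.gadget s = some i ∧
      R.slotDepth i s x = k ∧ R.pos s (R.leftMover s) = .nook i) := by
  have harc := R.arc s hs
  by_cases hr : x = R.rightMover s
  · subst hr
    rw [R.pos_rightMover s hs] at h
    refine .inr ⟨rfl, ?_, ?_, h⟩
    · rw [gadget, h]
      rfl
    · rw [slotDepth]
      rw [h] at harc
      generalize R.pos s (R.rightMover s) = w at *
      cases harc with
      | slot_nook _ d hd => simp [Vtx.slotDepth, hd]
  by_cases hl : x = R.leftMover s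
  · subst hl
    rw [R.pos_leftMover s hs] at h
    rw [h] at harc
    cases harc
  · exact .inl (by rw [← R.pos_of_ne s hs x hl hr, h])

section Tame

variable {c : Fin N} {p q s : ℕ}

lemma IsTameIncoming.slotDepth_mono (h : R.IsTameIncoming c) (hpq : p ≤ q) (hq : q ≤ S) :
    R.slotDepth (lab c) p (.incoming c) ≤ R.slotDepth (lab c) q (.incoming c) := by
  induction q, hpq using Nat.le_induction with
  | base => exact le_rfl
  | succ q _ ih =>
    have := ih (by omega)
    rcases R.slotDepth_step (lab c) (s := q) (by omega) (.incoming c) with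
      ⟨-, -, hstep⟩ | ⟨hg, hl, -⟩ | ⟨hstep, -⟩
    · omega
    · exact absurd hl (h q (by omega) hg)
    · omega

lemma IsTameIncoming.pos_ne_nook (h : R.IsTameIncoming c) (hs : s ≤ S) :
    R.pos s (.incoming c) ≠ .nook (lab c) := by
  intro hnook
  have hstay : ∀ q, s ≤ q → q ≤ S → R.pos q (.incoming c) = .nook (lab c) := by
    intro q hq
    induction q, hq using Nat.le_induction with
    | base => exact fun _ => hnook
    | succ q _ ih =>
      intro hqS
      rcases pos_succ_of_pos_eq_nook hqS (ih (by omega)) with hpos | ⟨hl, hg, -⟩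
      · exact hpos
      · exact absurd hl (h q hqS hg)
  simpa [R.pos_last_incoming] using hstay S hs le_rfl

lemma IsTameOutgoing.pos_ne_nook (h : R.IsTameOutgoing c) (hs : s ≤ S) :
    R.pos s (.outgoing c) ≠ .nook (lab c) := by
  have hrev : R.reverse.IsTameIncoming c.rev := by rwa [reverse_isTameIncoming, Fin.rev_rev]
  simpa [Nat.sub_sub_self hs] using hrev.pos_ne_nook (s := S - s) (by omega)

end Tame

lemma card_not_isTameIncoming_le : #{c | ¬ R.IsTameIncoming c} ≤ R.defect := by
  refine le_trans ?_ R.card_leftMover_isHomeIncoming_le_defect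
  have h : ∀ c ∈ ({c | ¬ R.IsTameIncoming c} : Finset (Fin N)), ∃ s < S,
      R.gadget s = some (lab c) ∧ R.leftMover s = .incoming c := fun c hc => by
    simpa [IsTameIncoming] using hc
  choose! F hF hg hl using h
  refine card_le_card_of_injOn F (fun c hc => ?_) fun c hc d hd hcd => ?_
  · exact mem_coe.2 (mem_filter.2 ⟨mem_range.2 (hF c hc), c, hg c hc, hl c hc⟩)
  · have := hl c hc
    rw [hcd, hl d hd] at this
    exact Token.incoming_injective this.symm

lemma card_not_isTameOutgoing_le : #{a | ¬ R.IsTameOutgoing a} ≤ R.defect := by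
  have := card_not_isTameIncoming_le (R := R.reverse)
  rw [reverse_defect] at this
  simp only [reverse_isTameIncoming] at this
  rwa [card_filter_rev fun c => ¬ R.IsTameOutgoing c] at this

/-! ### Occupancy of a slot gadget -/

/- Let `c₀` be the first of these tokens to leave the ordering gadget: it has been swapped with none
of the outgoing tokens of its gadget that entered between its exit and `τ`, so they are few. -/
lemma card_tame_waiting_le (hR : R.defect ≤ n) (i : Fin m) {τ : ℕ} (hτ : τ ≤ S) :
    #{c | (lab c = i ∧ R.exitTime c ≤ τ ∧ R.slotDepth i τ (.incoming c) = 0) ∧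
      R.IsTameIncoming c} ≤ 2 * tolerance m n + n + 1 := by
  set W := ({c | (lab c = i ∧ R.exitTime c ≤ τ ∧ R.slotDepth i τ (.incoming c) = 0) ∧
      R.IsTameIncoming c} : Finset (Fin N)) with hW
  obtain h | h := W.eq_empty_or_nonempty
  · simp [h]
  obtain ⟨c₀, hc₀, hmin⟩ := exists_min_image W R.exitTime h
  simp only [hW, mem_filter, mem_univ, true_and] at hc₀
  obtain ⟨⟨rfl, -, hdepth⟩, htame⟩ := hc₀
  have hmissed : #{a | lab a = lab c₀ ∧ R.exitTime c₀ ≤ R.enterTime a ∧ R.enterTime a < τ} ≤ n := by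
    refine (card_le_card <| monotone_filter_right _ fun a _ ha => ?_).trans
      ((R.card_missedSwap_right_le_defect c₀).trans hR)
    refine ⟨ha.1.symm, ha.2.1, fun ⟨s, hs, hg, hl, hr⟩ => ?_⟩
    have hstep := R.slotDepth_of_gadget_eq_some hs (ha.1 ▸ hg)
    rw [hl, hr] at hstep
    by_cases hsτ : s + 1 ≤ τ
    · have := htame.slotDepth_mono hsτ hτ
      omega
    · have := R.ordDepth_pos_of_enterTime_lt (a := a) (s := s) (by omega) hs.le
      have := R.ordDepth_eq_zero_of_gadget_ne_none hs (by simp [hg])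
      rw [hl] at this
      omega
  have henter : R.enterCount (lab c₀) τ ≤ R.enterCount (lab c₀) (R.exitTime c₀) +
      #{a | lab a = lab c₀ ∧ R.exitTime c₀ ≤ R.enterTime a ∧ R.enterTime a < τ} := by
    refine le_trans (card_le_card fun c => ?_) (card_union_le _ _)
    simp only [mem_filter, mem_union, mem_univ, true_and]
    grind
  have hexit : #W + R.exitCount (lab c₀) (R.exitTime c₀) ≤ R.exitCount (lab c₀) τ + 1 := by
    rw [exitCount, exitCount, ← card_union_add_card_inter]
    refine Nat.add_le_add (card_le_card fun c => ?_) (card_le_one.2 fun a ha b hb => ?_)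
    · simp only [hW, mem_filter, mem_union, mem_univ, true_and]
      grind
    · simp only [mem_inter, mem_filter, mem_univ, true_and] at ha hb
      exact R.exitTime_injective ((ha.2.2.trans (hmin b hb.1)).antisymm
        (hb.2.2.trans (hmin a ha.1)))
  have := exitCount_le_enterCount_add hR (lab c₀) τ
  have := enterCount_le_exitCount_add hR (lab c₀) (R.exitTime_le c₀)
  omega

lemma card_incoming_waiting_le (hR : R.defect ≤ n) (i : Fin m) {τ : ℕ} (hτ : τ ≤ S) :
    #{c | lab c = i ∧ R.exitTime c ≤ τ ∧ R.slotDepth i τ (.incoming c) = 0} ≤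
      3 * tolerance m n := by
  rw [card_filter_eq_add _ R.IsTameIncoming]
  have hwild : #{c | (lab c = i ∧ R.exitTime c ≤ τ ∧ R.slotDepth i τ (.incoming c) = 0) ∧
      ¬ R.IsTameIncoming c} ≤ #{c | ¬ R.IsTameIncoming c} :=
    card_le_card <| monotone_filter_right _ fun _ _ h => h.2
  have := card_tame_waiting_le hR i hτ
  have := card_not_isTameIncoming_le (R := R)
  have := tolerance_eq m n
  omega

lemma card_outgoing_gone_le (hR : R.defect ≤ n) (i : Fin m) {τ : ℕ} (hτ : τ ≤ S) :
    #{a | lab a = i ∧ τ ≤ R.enterTime a ∧ R.slotDepth i τ (.outgoing a) = 0} ≤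
      3 * tolerance m n := by
  have hrev := card_incoming_waiting_le (R := R.reverse) (n := n) (by rwa [reverse_defect]) i
    (τ := S - τ) (by omega)
  rw [← card_filter_rev fun a => lab a = i ∧ τ ≤ R.enterTime a ∧ R.slotDepth i τ (.outgoing a) = 0]
  refine le_of_eq_of_le (congrArg card (filter_congr fun c _ => ?_)) hrev
  have := R.enterTime_lt c.rev
  rw [reverse_exitTime, reverse_slotDepth, Token.reverse_incoming, Nat.sub_sub_self hτ,
    show S - R.enterTime c.rev ≤ S - τ ↔ τ ≤ R.enterTime c.rev by omega]

lemma card_slotDepth_pos_le (i : Fin m) {τ : ℕ} (hτ : τ ≤ S) :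
    #{y | 0 < R.slotDepth i τ y} ≤ labelCount lab i + 1 := by
  have hsub : #{y | 0 < R.slotDepth i τ y} ≤
      #(insert (.nook i) ((range (labelCount lab i)).image fun d => (Vtx.slot i d : Vtx m))) := by
    refine card_le_card_of_injOn (R.pos τ) (fun y hy => ?_) fun a _ b _ h => R.pos_injective τ hτ h
    have hvertex := R.isVertex_pos τ hτ y
    have hpos : 0 < (R.pos τ y).slotDepth k i := (mem_filter.1 (mem_coe.1 hy)).2
    clear hy
    generalize R.pos τ y = v at *
    cases v <;> simp_all [Vtx.slotDepth, IsVertex] <;> grind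
  refine hsub.trans ((card_insert_le _ _).trans (Nat.add_le_add_right ?_ 1))
  simpa using card_image_le (s := range (labelCount lab i)) (f := fun d => (Vtx.slot i d : Vtx m))

lemma exitCount_le_card_tame_add (hR : R.defect ≤ n) (i : Fin m) {τ : ℕ} (hτ : τ ≤ S) :
    R.exitCount i τ ≤
      #{c | lab c = i ∧ R.exitTime c ≤ τ ∧ 0 < R.slotDepth i τ (.incoming c) ∧
        R.IsTameIncoming c} + (3 * tolerance m n + n) := by
  have hcover : R.exitCount i τ ≤
      #{c | lab c = i ∧ R.exitTime c ≤ τ ∧ 0 < R.slotDepth i τ (.incoming c) ∧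
        R.IsTameIncoming c} +
      (#{c | lab c = i ∧ R.exitTime c ≤ τ ∧ R.slotDepth i τ (.incoming c) = 0} +
        #{c | ¬ R.IsTameIncoming c}) := by
    refine le_trans (card_le_card fun c => ?_)
      ((card_union_le _ _).trans (Nat.add_le_add_left (card_union_le _ _) _))
    simp only [mem_filter, mem_union, mem_univ, true_and]
    grind
  have := card_incoming_waiting_le hR i hτ
  have := card_not_isTameIncoming_le (R := R)
  omega

lemma labelCount_le_enterCount_add_card_tame_add (hR : R.defect ≤ n) (i : Fin m) {τ : ℕ}
    (hτ : τ ≤ S) :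
    labelCount lab i ≤ R.enterCount i τ +
      #{a | lab a = i ∧ τ ≤ R.enterTime a ∧ 0 < R.slotDepth i τ (.outgoing a) ∧
        R.IsTameOutgoing a} + (3 * tolerance m n + n) := by
  have hcover : labelCount lab i ≤ R.enterCount i τ +
      (#{a | lab a = i ∧ τ ≤ R.enterTime a ∧ 0 < R.slotDepth i τ (.outgoing a) ∧
        R.IsTameOutgoing a} +
      (#{a | lab a = i ∧ τ ≤ R.enterTime a ∧ R.slotDepth i τ (.outgoing a) = 0} +
        #{a | ¬ R.IsTameOutgoing a})) := by
    refine le_trans (card_le_card fun c => ?_) ((card_union_le _ _).trans (Nat.add_le_add_left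
      ((card_union_le _ _).trans (Nat.add_le_add_left (card_union_le _ _) _)) _))
    simp only [mem_filter, mem_union, mem_univ, true_and]
    grind
  have := card_outgoing_gone_le hR i hτ
  have := card_not_isTameOutgoing_le (R := R)
  omega

lemma card_not_isTameIn_le (hR : R.defect ≤ n) (i : Fin m) {τ : ℕ} (hτ : τ ≤ S) :
    #{y | 0 < R.slotDepth i τ y ∧ ¬ R.IsTameIn i y} ≤ 10 * tolerance m n := by
  have htame :
      #{c | lab c = i ∧ R.exitTime c ≤ τ ∧ 0 < R.slotDepth i τ (.incoming c) ∧
        R.IsTameIncoming c} +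
      #{a | lab a = i ∧ τ ≤ R.enterTime a ∧ 0 < R.slotDepth i τ (.outgoing a) ∧
        R.IsTameOutgoing a} ≤ #{y | 0 < R.slotDepth i τ y ∧ R.IsTameIn i y} := by
    rw [← card_image_of_injective _ (Token.incoming_injective (m := m)),
      ← card_image_of_injective ({a | _} : Finset (Fin N)) (Token.outgoing_injective (m := m)),
      ← card_union_of_disjoint]
    · refine card_le_card fun y => ?_
      simp only [mem_union, mem_image, mem_filter, mem_univ, true_and]
      rintro (⟨c, h, rfl⟩ | ⟨a, h, rfl⟩)
      · exact ⟨h.2.2.1, .inr ⟨c, rfl, h.1, h.2.2.2⟩⟩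
      · exact ⟨h.2.2.1, .inl ⟨a, rfl, h.1, h.2.2.2⟩⟩
    · simp only [disjoint_left, mem_image]
      grind
  have := card_slotDepth_pos_le (R := R) i hτ
  have := card_filter_eq_add (fun y => 0 < R.slotDepth i τ y) (R.IsTameIn i)
  have := exitCount_le_card_tame_add hR i hτ
  have := labelCount_le_enterCount_add_card_tame_add hR i hτ
  have := enterCount_le_exitCount_add hR i hτ
  have := tolerance_eq m n
  omega

end SwapRun

/-! ### Deep tokens -/

/-- Token `x` starts or ends in the path of slot gadget `i`. -/
def Token.IsOwn {m N : ℕ} (lab : Fin N → Fin m) (i : Fin m) : Token m N → Prop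
  | .item _ => False
  | .outgoing c => lab c = i
  | .incoming c => lab c = i

lemma Token.isOwn_reverse {m N : ℕ} {lab : Fin N → Fin m} {i : Fin m} {x : Token m N} :
    x.reverse.IsOwn (fun c => lab c.rev) i ↔ x.IsOwn lab i := by
  cases x <;> simp [Token.IsOwn]

lemma card_image_outgoing_union_image_incoming {m N : ℕ} (A C : Finset (Fin N)) :
    #(A.image (Token.outgoing (m := m)) ∪ C.image Token.incoming) = #A + #C := by
  rw [card_union_of_disjoint, card_image_of_injective _ Token.outgoing_injective,
    card_image_of_injective _ Token.incoming_injective]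
  simp only [disjoint_left, mem_image]
  grind

namespace SwapRun

variable {m N k S : ℕ} {lab : Fin N → Fin m} (R : SwapRun m N k S lab)

/-- The number of tame incoming tokens of slot gadget `i` beyond depth `d` in it at time `τ`. -/
noncomputable def deepIncoming (i : Fin m) (d τ : ℕ) : ℕ :=
  #{c | lab c = i ∧ R.IsTameIncoming c ∧ d < R.slotDepth i τ (.incoming c)}

/-- The number of tame outgoing tokens of slot gadget `i` beyond depth `d` in it at time `τ`. -/
noncomputable def deepOutgoing (i : Fin m) (d τ : ℕ) : ℕ :=
  #{a | lab a = i ∧ R.IsTameOutgoing a ∧ d < R.slotDepth i τ (.outgoing a)}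

lemma reverse_deepIncoming (i : Fin m) (d τ : ℕ) :
    R.reverse.deepIncoming i d τ = R.deepOutgoing i d (S - τ) := by
  rw [deepOutgoing, ← card_filter_rev]
  exact congrArg card (filter_congr fun c _ => by simp [reverse_isTameIncoming])

variable {R} {n : ℕ}

lemma deepIncoming_mono (i : Fin m) (d : ℕ) {p q : ℕ} (hpq : p ≤ q) (hq : q ≤ S) :
    R.deepIncoming i d p ≤ R.deepIncoming i d q := by
  refine card_le_card <| monotone_filter_right _ fun c _ h => ?_
  obtain ⟨rfl, htame, hdeep⟩ := h
  exact ⟨rfl, htame, hdeep.trans_le (htame.slotDepth_mono hpq hq)⟩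

lemma deepIncoming_succ_le (i : Fin m) (d : ℕ) {s : ℕ} (hs : s < S) :
    R.deepIncoming i d (s + 1) ≤ R.deepIncoming i d s + 1 := by
  have hcover : R.deepIncoming i d (s + 1) ≤
      R.deepIncoming i d s + #{c | R.rightMover s = .incoming c} := by
    refine le_trans (card_le_card fun c => ?_) (card_union_le _ _)
    simp only [mem_filter, mem_union, mem_univ, true_and]
    have := R.slotDepth_step i hs (.incoming c)
    grind
  refine hcover.trans (Nat.add_le_add_left (card_le_one.2 fun a ha b hb => ?_) _)
  simp only [mem_filter, mem_univ, true_and] at ha hb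
  exact Token.incoming_injective (ha.symm.trans hb)

lemma slotDepth_le_labelCount {i : Fin m} {τ : ℕ} (hτ : τ ≤ S) {x : Token m N}
    (hx : R.pos τ x ≠ .nook i) : R.slotDepth i τ x ≤ labelCount lab i := by
  have hvertex := R.isVertex_pos τ hτ x
  unfold slotDepth
  generalize R.pos τ x = v at *
  cases v <;> simp_all [Vtx.slotDepth, IsVertex]
  grind

lemma deepOutgoing_add_deepIncoming_le (i : Fin m) (d : ℕ) {τ : ℕ} (hτ : τ ≤ S) :
    R.deepOutgoing i d τ + R.deepIncoming i d τ ≤ labelCount lab i - d := by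
  have hdeep : ∀ x ∈
      ({a | lab a = i ∧ R.IsTameOutgoing a ∧ d < R.slotDepth i τ (.outgoing a)} :
        Finset (Fin N)).image Token.outgoing ∪
      ({c | lab c = i ∧ R.IsTameIncoming c ∧ d < R.slotDepth i τ (.incoming c)} :
        Finset (Fin N)).image Token.incoming,
      R.pos τ x ≠ .nook i ∧ d < R.slotDepth i τ x := by
    intro x hx
    simp only [mem_union, mem_image, mem_filter, mem_univ, true_and] at hx
    rcases hx with ⟨c, ⟨rfl, htame, hc⟩, rfl⟩ | ⟨c, ⟨rfl, htame, hc⟩, rfl⟩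
    · exact ⟨htame.pos_ne_nook hτ, hc⟩
    · exact ⟨htame.pos_ne_nook hτ, hc⟩
  rw [deepOutgoing, deepIncoming, ← card_image_outgoing_union_image_incoming (m := m),
    ← Nat.card_Ioc]
  refine card_le_card_of_injOn (R.slotDepth i τ) (fun x hx => ?_) fun x hx y hy h => ?_
  · exact mem_coe.2 (mem_Ioc.2 ⟨(hdeep x hx).2, slotDepth_le_labelCount hτ (hdeep x hx).1⟩)
  · exact eq_of_slotDepth_eq hτ h (by grind) (hdeep x hx).1 (hdeep y hy).1

lemma labelCount_sub_le_card_deep (i : Fin m) (d : ℕ) {τ : ℕ} (hτ : τ ≤ S) :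
    labelCount lab i - d ≤ #{x | d < R.slotDepth i τ x ∧ R.pos τ x ≠ .nook i} := by
  have hfull : ∀ e ∈ Ioc d (labelCount lab i), ∃ x, R.pos τ x = .slot i (e - 1) := fun e he => by
    rw [mem_Ioc] at he
    exact R.exists_pos_eq τ hτ _ (by simp only [IsVertex]; omega)
  have : Nonempty (Token m N) := ⟨.item none⟩
  choose! F hF using hfull
  rw [← Nat.card_Ioc]
  refine card_le_card_of_injOn F (fun e he => ?_) fun e he e' he' h => ?_
  · have hpos := hF e he
    rw [mem_coe, mem_Ioc] at he
    rw [mem_coe, mem_filter, slotDepth, hpos]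
    simp [Vtx.slotDepth]
    omega
  · have hpos := hF e he
    rw [h, hF e' he'] at hpos
    rw [mem_coe, mem_Ioc] at he he'
    simp only [Vtx.slot.injEq, true_and] at hpos
    omega

lemma labelCount_sub_le_deepOutgoing_add_deepIncoming_add (hR : R.defect ≤ n) (i : Fin m) (d : ℕ)
    {τ : ℕ} (hτ : τ ≤ S) :
    labelCount lab i - d ≤
      R.deepOutgoing i d τ + R.deepIncoming i d τ + 10 * tolerance m n := by
  refine (labelCount_sub_le_card_deep (R := R) i d hτ).trans ?_
  rw [deepOutgoing, deepIncoming, ← card_image_outgoing_union_image_incoming (m := m)]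
  refine le_trans (card_le_card fun y => ?_) ((card_union_le _ _).trans
    (Nat.add_le_add_left (card_not_isTameIn_le hR i hτ) _))
  simp only [mem_filter, mem_union, mem_image, mem_univ, true_and]
  rintro ⟨hdeep, -⟩
  by_cases h : R.IsTameIn i y
  · rcases h with ⟨a, rfl, hlab, htame⟩ | ⟨a, rfl, hlab, htame⟩
    · exact .inl (.inl ⟨a, ⟨hlab, htame, hdeep⟩, rfl⟩)
    · exact .inl (.inr ⟨a, ⟨hlab, htame, hdeep⟩, rfl⟩)
  · exact .inr ⟨by omega, h⟩

/-! ### Foreign tokens crossing a slot gadget -/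

section Foreign

variable (R)

lemma card_swaps_with_incoming_le (x : Token m N) (Z : Finset (Fin N)) :
    #{s ∈ range S | R.leftMover s = x ∧ ∃ c ∈ Z, R.rightMover s = .incoming c} ≤ #Z := by
  rw [← card_image_of_injective Z (Token.incoming_injective (m := m))]
  refine card_le_card_of_injOn R.rightMover (fun s hs => ?_) fun s hs s' hs' h => ?_
  · obtain ⟨-, -, c, hc, hr⟩ := mem_filter.1 (mem_coe.1 hs)
    exact mem_coe.2 (mem_image.2 ⟨c, hc, hr.symm⟩)
  · simp only [coe_filter, Set.mem_ofPred_eq, mem_range] at hs hs'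
    by_contra hne
    exact R.not_swap_twice s s' hs.1 hs'.1 hne (.inl ⟨hs.2.1.trans hs'.2.1.symm, h⟩)

lemma lt_add_card_leftMover (i : Fin m) (x : Token m N) {p q A : ℕ} (B : ℕ) (hpq : p ≤ q)
    (hq : q ≤ S) (hA : A < R.slotDepth i p x) :
    A < max B (R.slotDepth i q x) + #{s ∈ Ico p q | R.gadget s = some i ∧ R.leftMover s = x ∧
      B < R.slotDepth i s x ∧ R.slotDepth i s x ≤ A + 1} := by
  induction q, hpq using Nat.le_induction with
  | base => omega
  | succ q hpq ih =>
    have ih := ih (by omega)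
    rw [← insert_Ico_right_eq_Ico_add_one hpq, filter_insert]
    have := R.slotDepth_step i (s := q) (by omega) x
    split_ifs with h
    · rw [card_insert_of_notMem (by simp)]
      omega
    · grind

lemma foreign_step_or_rightMover_eq_incoming {i : Fin m} {s : ℕ} (hg : R.gadget s = some i)
    (hx : ¬ (R.leftMover s).IsOwn lab i) :
    (R.gadget s ≠ none ∧ ¬ R.IsHomeOutgoing s (R.leftMover s) ∧
      ¬ R.IsHomeIncoming s (R.rightMover s)) ∨
    ∃ c, lab c = i ∧ R.rightMover s = .incoming c := by
  by_cases hin : R.IsHomeIncoming s (R.rightMover s)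
  · obtain ⟨c, hc, hr⟩ := hin
    exact .inr ⟨c, Option.some_injective _ (hc.symm.trans hg), hr⟩
  · refine .inl ⟨by simp [hg], ?_, hin⟩
    rintro ⟨a, ha, hla⟩
    rw [hla] at hx
    exact hx (Option.some_injective _ (ha.symm.trans hg))

end Foreign

/- A token that does not belong to slot gadget `i` makes almost all of its left moves in it by
swapping with tame incoming tokens of `i`, each at most once. -/
lemma lt_add_card_crossing_of_foreign (hR : R.defect ≤ n) {i : Fin m} {x : Token m N}
    (hx : ¬ x.IsOwn lab i) {p q A B : ℕ} (hpq : p ≤ q) (hq : q ≤ S)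
    (hA : A < R.slotDepth i p x) (hB : R.slotDepth i q x ≤ B) :
    A < B + 2 * n + #{c | lab c = i ∧ R.IsTameIncoming c ∧ R.slotDepth i p (.incoming c) ≤ A ∧
      B < R.slotDepth i q (.incoming c)} := by
  set V := ({c | lab c = i ∧ R.IsTameIncoming c ∧ R.slotDepth i p (.incoming c) ≤ A ∧
      B < R.slotDepth i q (.incoming c)} : Finset (Fin N)) with hV
  set W := ({c | ¬ R.IsTameIncoming c} : Finset (Fin N)) with hW
  have hcover : ({s ∈ Ico p q | R.gadget s = some i ∧ R.leftMover s = x ∧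
      B < R.slotDepth i s x ∧ R.slotDepth i s x ≤ A + 1} : Finset ℕ) ⊆
      ({s ∈ range S | R.gadget s ≠ none ∧ ¬ R.IsHomeOutgoing s (R.leftMover s) ∧
        ¬ R.IsHomeIncoming s (R.rightMover s)} : Finset ℕ) ∪
      (({s ∈ range S | R.leftMover s = x ∧ ∃ c ∈ V, R.rightMover s = .incoming c} : Finset ℕ) ∪
      ({s ∈ range S | R.leftMover s = x ∧ ∃ c ∈ W, R.rightMover s = .incoming c} :
        Finset ℕ)) := by
    intro s hs
    obtain ⟨hspq, hg, rfl, hBs, hsA⟩ := mem_filter.1 hs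
    rw [mem_Ico] at hspq
    have hsS : s < S := by omega
    simp only [mem_union, mem_filter, mem_range]
    rcases R.foreign_step_or_rightMover_eq_incoming hg hx with hforeign | ⟨c, rfl, hr⟩
    · exact .inl ⟨hsS, hforeign⟩
    by_cases htame : R.IsTameIncoming c
    · refine .inr (.inl ⟨hsS, trivial, c, ?_, hr⟩)
      have hstep := R.slotDepth_of_gadget_eq_some hsS hg
      rw [hr] at hstep
      have := htame.slotDepth_mono hspq.1 hsS.le
      have := htame.slotDepth_mono (p := s + 1) hspq.2 hq
      simp only [hV, mem_filter, mem_univ, true_and]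
      exact ⟨htame, by omega, by omega⟩
    · exact .inr (.inr ⟨hsS, trivial, c, by simpa [hW] using htame, hr⟩)
  have hmoves := R.lt_add_card_leftMover i x B hpq hq hA
  rw [max_eq_left hB] at hmoves
  have := (card_le_card hcover).trans
    ((card_union_le _ _).trans (Nat.add_le_add_left (card_union_le _ _) _))
  have := R.card_foreign_steps_le_defect
  have := R.card_swaps_with_incoming_le x V
  have := R.card_swaps_with_incoming_le x W
  have hwild : #W ≤ R.defect := card_not_isTameIncoming_le
  omega

lemma lt_add_of_foreign_moves_left (hR : R.defect ≤ n) {i : Fin m} {x : Token m N}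
    (hx : ¬ x.IsOwn lab i) {p q A B : ℕ} (hpq : p ≤ q) (hq : q ≤ S)
    (hA : A < R.slotDepth i p x) (hB : R.slotDepth i q x ≤ B) (hBA : B ≤ A) :
    A + R.deepIncoming i A p < B + 2 * n + R.deepIncoming i B q := by
  have hcross := lt_add_card_crossing_of_foreign hR hx hpq hq hA hB
  have hsum : #{c | lab c = i ∧ R.IsTameIncoming c ∧ R.slotDepth i p (.incoming c) ≤ A ∧
      B < R.slotDepth i q (.incoming c)} + R.deepIncoming i A p ≤ R.deepIncoming i B q := by
    rw [deepIncoming, ← card_union_of_disjoint]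
    · refine card_le_card fun c => ?_
      simp only [mem_filter, mem_union, mem_univ, true_and]
      rintro (⟨rfl, htame, -, h⟩ | ⟨rfl, htame, h⟩)
      · exact ⟨rfl, htame, h⟩
      · have := htame.slotDepth_mono hpq hq
        exact ⟨rfl, htame, by omega⟩
    · simp only [disjoint_left, mem_filter, mem_univ, true_and]
      grind
  omega

lemma lt_add_of_foreign_moves_right (hR : R.defect ≤ n) {i : Fin m} {x : Token m N}
    (hx : ¬ x.IsOwn lab i) {p q A B : ℕ} (hpq : p ≤ q) (hq : q ≤ S)
    (hA : A < R.slotDepth i q x) (hB : R.slotDepth i p x ≤ B) (hBA : B ≤ A) :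
    A + R.deepOutgoing i A q < B + 2 * n + R.deepOutgoing i B p := by
  have hrev := lt_add_of_foreign_moves_left (R := R.reverse) (n := n) (x := x.reverse)
    (by rwa [reverse_defect]) (by rwa [Token.isOwn_reverse]) (p := S - q) (q := S - p) (A := A)
    (B := B) (by omega) (by omega) (by simpa [Nat.sub_sub_self hq] using hA)
    (by simpa [Nat.sub_sub_self (hpq.trans hq)] using hB) hBA
  rwa [reverse_deepIncoming, reverse_deepIncoming, Nat.sub_sub_self hq,
    Nat.sub_sub_self (hpq.trans hq)] at hrev

end SwapRun

/-! ### Own tokens in the nook -/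

namespace SwapRun

variable {m N k S : ℕ} {lab : Fin N → Fin m} (R : SwapRun m N k S lab)

/-- The depth of token `x` in slot gadget `i` at time `s`, where the nook counts as depth `k`, the
depth of its neighbour. With this convention no move between these two vertices changes depth. -/
noncomputable def cappedDepth (i : Fin m) (s : ℕ) (x : Token m N) : ℕ :=
  if R.pos s x = .nook i then k else R.slotDepth i s x

/-- The number of steps before time `s` that move an outgoing token back to the right, or an
incoming one back to the left, in its own slot gadget; a step may count twice. -/
noncomputable def backtrackCount (s : ℕ) : ℕ :=
  #{r ∈ range s | R.IsHomeOutgoing r (R.rightMover r)} +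
    #{r ∈ range s | R.IsHomeIncoming r (R.leftMover r)}

/-- A quantity that increases whenever an own token in a nook is replaced by another own token: the
replacement either involves a backtracking move or puts an incoming token in place of an outgoing
one. -/
noncomputable def nookPotential (s : ℕ) (x : Token m N) : ℕ :=
  2 * R.backtrackCount s + if x.IsIncoming then 1 else 0

lemma backtrackCount_mono {p q : ℕ} (hpq : p ≤ q) : R.backtrackCount p ≤ R.backtrackCount q :=
  Nat.add_le_add (card_le_card <| filter_subset_filter _ <| range_subset_range.2 hpq)
    (card_le_card <| filter_subset_filter _ <| range_subset_range.2 hpq)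

lemma backtrackCount_succ (s : ℕ) :
    R.backtrackCount (s + 1) = R.backtrackCount s +
      (if R.IsHomeOutgoing s (R.rightMover s) then 1 else 0) +
      if R.IsHomeIncoming s (R.leftMover s) then 1 else 0 := by
  simp only [backtrackCount, card_filter, sum_range_succ]
  omega

lemma backtrackCount_le {s : ℕ} (hs : s ≤ S) : R.backtrackCount s ≤ 2 * R.defect := by
  have := R.backtrackCount_mono hs
  have := R.card_rightMover_isHomeOutgoing_le_defect
  have := R.card_leftMover_isHomeIncoming_le_defect
  simp only [backtrackCount] at *
  omega

lemma nookPotential_le {s : ℕ} (hs : s ≤ S) (x : Token m N) :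
    R.nookPotential s x ≤ 4 * R.defect + 1 := by
  have := R.backtrackCount_le hs
  rw [nookPotential]
  split_ifs <;> omega

lemma nookPotential_mono {p q : ℕ} (hpq : p ≤ q) (x : Token m N) :
    R.nookPotential p x ≤ R.nookPotential q x :=
  Nat.add_le_add_right (Nat.mul_le_mul_left 2 (R.backtrackCount_mono hpq)) _

lemma nookPotential_leftMover_lt {i : Fin m} {s : ℕ} (hg : R.gadget s = some i)
    (hl : (R.leftMover s).IsOwn lab i) (hr : (R.rightMover s).IsOwn lab i) :
    R.nookPotential s (R.leftMover s) < R.nookPotential (s + 1) (R.rightMover s) := by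
  have hout : ∀ {x}, x.IsOwn lab i → ¬ x.IsIncoming → R.IsHomeOutgoing s x := by
    rintro (o | a | c) hx hnot
    · exact hx.elim
    · exact ⟨a, by rw [hg, ← hx], rfl⟩
    · exact (hnot ⟨c, rfl⟩).elim
  have hin : ∀ {x}, x.IsOwn lab i → x.IsIncoming → R.IsHomeIncoming s x := by
    rintro _ hx ⟨c, rfl⟩
    exact ⟨c, by rw [hg, ← hx], rfl⟩
  have := R.backtrackCount_succ s
  simp only [nookPotential]
  by_cases hil : (R.leftMover s).IsIncoming
  · have := hin hl hil
    by_cases hir : (R.rightMover s).IsIncoming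
    · simp_all
    · have := hout hr hir
      simp_all
      omega
  · by_cases hir : (R.rightMover s).IsIncoming
    · simp only [if_neg hil, if_pos hir]
      omega
    · have := hout hr hir
      simp_all
      omega

variable {R} {n : ℕ}

lemma cappedDepth_of_pos_eq_nook {i : Fin m} {s : ℕ} {x : Token m N} (h : R.pos s x = .nook i) :
    R.cappedDepth i s x = k :=
  if_pos h

lemma cappedDepth_of_pos_ne_nook {i : Fin m} {s : ℕ} {x : Token m N} (h : R.pos s x ≠ .nook i) :
    R.cappedDepth i s x = R.slotDepth i s x :=
  if_neg h

lemma cappedDepth_le_slotDepth (i : Fin m) (s : ℕ) (x : Token m N) :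
    R.cappedDepth i s x ≤ R.slotDepth i s x := by
  rw [cappedDepth]
  split_ifs with h
  · rw [slotDepth_of_pos_eq_nook h]
    omega
  · rfl

namespace IsTameIncoming

variable {c : Fin N} (hc : R.IsTameIncoming c)
include hc

lemma cappedDepth_succ_lt {s : ℕ} (hs : s < S) {x : Token m N}
    (h : R.cappedDepth (lab c) s x < R.slotDepth (lab c) s (.incoming c)) :
    R.cappedDepth (lab c) (s + 1) x < R.slotDepth (lab c) (s + 1) (.incoming c) := by
  refine lt_of_lt_of_le ?_ (hc.slotDepth_mono (Nat.le_succ s) hs)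
  by_cases hnook' : R.pos (s + 1) x = .nook (lab c)
  · rw [cappedDepth_of_pos_eq_nook hnook']
    rcases pos_of_pos_succ_eq_nook hs hnook' with hnook | ⟨-, -, hdepth, -⟩
    · rwa [cappedDepth_of_pos_eq_nook hnook] at h
    · rwa [cappedDepth_of_pos_ne_nook fun hnook => by
        have := slotDepth_of_pos_eq_nook hnook
        omega, hdepth] at h
  rw [cappedDepth_of_pos_ne_nook hnook']
  by_cases hnook : R.pos s x = .nook (lab c)
  · rw [cappedDepth_of_pos_eq_nook hnook] at h
    rcases pos_succ_of_pos_eq_nook hs hnook with hstay | ⟨-, -, hdepth, -⟩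
    · exact absurd hstay hnook'
    · rwa [hdepth]
  rw [cappedDepth_of_pos_ne_nook hnook] at h
  have hstep := R.slotDepth_step (lab c) hs x
  by_contra! hge
  obtain ⟨hg, rfl, hright⟩ := hstep.resolve_right (by omega)
  have hleft := (R.slotDepth_of_gadget_eq_some hs hg).1
  rw [R.pos_rightMover s hs] at hnook'
  exact hc s hs hg (eq_of_slotDepth_eq hs.le (by omega) (by omega) hnook' (hc.pos_ne_nook hs.le))

lemma cappedDepth_lt {p q : ℕ} (hpq : p ≤ q) (hq : q ≤ S) {x : Token m N}
    (h : R.cappedDepth (lab c) p x < R.slotDepth (lab c) p (.incoming c)) :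
    R.cappedDepth (lab c) q x < R.slotDepth (lab c) q (.incoming c) := by
  induction q, hpq using Nat.le_induction with
  | base => exact h
  | succ q _ ih => exact hc.cappedDepth_succ_lt hq (ih (by omega))

lemma cappedDepth_leftMover {s : ℕ} (hs : s < S) (hg : R.gadget s = some (lab c))
    (hr : R.rightMover s = .incoming c) :
    R.slotDepth (lab c) s (.incoming c) ≤ R.cappedDepth (lab c) s (R.leftMover s) ∧
      R.cappedDepth (lab c) (s + 1) (R.leftMover s) <
        R.slotDepth (lab c) (s + 1) (.incoming c) := by
  obtain ⟨hleft, hleft', hright'⟩ := R.slotDepth_of_gadget_eq_some hs hg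
  have hnook : R.pos s (R.leftMover s) ≠ .nook (lab c) := by
    rw [← R.pos_rightMover s hs, hr]
    exact hc.pos_ne_nook hs
  rw [← hr, cappedDepth_of_pos_ne_nook hnook]
  have := R.cappedDepth_le_slotDepth (lab c) (s + 1) (R.leftMover s)
  omega

end IsTameIncoming

section OwnInNook

variable {i : Fin m} {x y : ℕ} (hxy : x ≤ y) (hy : y ≤ S)
include hxy hy

lemma deepIncoming_le_of_outgoing_in_nook (b : Fin N)
    (h : ∀ s, x ≤ s → s ≤ y → R.pos s (.outgoing b) = .nook (lab b)) :
    R.deepIncoming (lab b) k y ≤ R.deepIncoming (lab b) k x + R.defect := by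
  /- Tokens that get past depth `k` meanwhile cannot swap with `b`: before the swap they are on the
  left of `b` and afterwards on its right, but `b` sits at capped depth `k`. -/
  have hmissed : ∀ c, lab c = lab b → R.IsTameIncoming c →
      k < R.slotDepth (lab b) y (.incoming c) → ¬ k < R.slotDepth (lab b) x (.incoming c) →
      R.MissedSwap b c := by
    intro c hlab htame hdeep hshallow
    have hexit := R.exitTime_le_of_ordDepth_eq_zero
      (R.ordDepth_eq_zero_of_slotDepth_pos (Nat.zero_lt_of_lt hdeep))
    have henter := R.le_enterTime hy (R.ordDepth_eq_zero_of_slotDepth_pos (i := lab b)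
      (by rw [slotDepth_of_pos_eq_nook (h y hxy le_rfl)]; exact k.succ_pos))
    refine ⟨hlab, hexit.trans henter, ?_⟩
    rintro ⟨s, hs, hg, hl, hr⟩
    rw [← hlab] at h hdeep hshallow hg
    obtain ⟨hbefore, hafter⟩ := htame.cappedDepth_leftMover hs hg hr
    rw [hl] at hbefore hafter
    have hx := cappedDepth_of_pos_eq_nook (h x le_rfl hxy)
    have hy' := cappedDepth_of_pos_eq_nook (h y hxy le_rfl)
    rcases Nat.lt_or_ge s x with hsx | hxs
    · have := htame.cappedDepth_lt hsx (hxy.trans hy) hafter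
      omega
    rcases Nat.lt_or_ge s y with hsy | hys
    · have hback := R.pos_leftMover s hs
      rw [hl, h (s + 1) (by omega) hsy, ← h s hxs hsy.le] at hback
      cases (R.pos_injective s hs.le hback).trans hr
    · have := htame.cappedDepth_lt hys hs.le (x := .outgoing b) (by omega)
      omega
  rw [deepIncoming, card_filter_eq_add _ fun c => k < R.slotDepth (lab b) x (.incoming c)]
  refine Nat.add_le_add (card_le_card <| monotone_filter_right _ fun c _ hc => ?_)
    ((card_le_card <| monotone_filter_right _ fun c _ hc => ?_).trans
      (R.card_missedSwap_left_le_defect b))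
  · exact ⟨hc.1.1, hc.1.2.1, hc.2⟩
  · exact hmissed c hc.1.1 hc.1.2.1 hc.1.2.2 hc.2

lemma deepIncoming_le_of_incoming_in_nook (hR : R.defect ≤ n) (b : Fin N)
    (h : ∀ s, x ≤ s → s ≤ y → R.pos s (.incoming b) = .nook (lab b)) :
    R.deepIncoming (lab b) k y ≤
      R.deepIncoming (lab b) k x + R.defect + 10 * tolerance m n := by
  have hrev := deepIncoming_le_of_outgoing_in_nook (R := R.reverse) (x := S - y) (y := S - x)
    (by omega) (by omega) b.rev fun s hs hs' => by
      simpa using h (S - s) (by omega) (by omega)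
  simp only [reverse_deepIncoming, Fin.rev_rev, Nat.sub_sub_self hy,
    Nat.sub_sub_self (hxy.trans hy), reverse_defect] at hrev
  have := deepOutgoing_add_deepIncoming_le (R := R) (lab b) k hy
  have := labelCount_sub_le_deepOutgoing_add_deepIncoming_add hR (lab b) k (hxy.trans hy)
  omega

lemma deepIncoming_le_of_isOwn_in_nook (hR : R.defect ≤ n) {z : Token m N}
    (hz : z.IsOwn lab i) (h : ∀ s, x ≤ s → s ≤ y → R.pos s z = .nook i) :
    R.deepIncoming i k y ≤ R.deepIncoming i k x + (n + 10 * tolerance m n) := by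
  rcases z with o | b | b
  · exact hz.elim
  · subst hz
    have := deepIncoming_le_of_outgoing_in_nook hxy hy b h
    omega
  · subst hz
    have := deepIncoming_le_of_incoming_in_nook hxy hy hR b h
    omega

/- Here `z` is the token in the nook at time `y`, and it has been there since time `w`. -/
lemma exists_nook_occupant_deepIncoming_le (hR : R.defect ≤ n)
    (hown : ∀ s, x ≤ s → s ≤ y → ∀ z, R.pos s z = .nook i → z.IsOwn lab i) :
    ∃ z w, w ≤ y ∧ (∀ s, w ≤ s → s ≤ y → R.pos s z = .nook i) ∧
      R.deepIncoming i k w ≤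
        R.deepIncoming i k x + (n + 10 * tolerance m n + 1) * R.nookPotential w z := by
  induction y, hxy using Nat.le_induction with
  | base =>
    obtain ⟨z, hz⟩ := R.exists_pos_eq x hy (.nook i) trivial
    exact ⟨z, x, le_rfl, fun s hs hs' => by rwa [hs'.antisymm hs],
      Nat.le_add_right _ _⟩
  | succ y hxy ih =>
    obtain ⟨z, w, hwy, hz, hle⟩ :=
      ih (by omega) fun s hs hs' => hown s hs (by omega)
    have hzy := hz y hwy le_rfl
    rcases pos_succ_of_pos_eq_nook hy hzy with hstay | ⟨rfl, hg, -, hnext⟩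
    · refine ⟨z, w, by omega, fun s hs hs' => ?_, hle⟩
      rcases hs'.lt_or_eq with hlt | rfl
      · exact hz s hs (by omega)
      · exact hstay
    · refine ⟨R.rightMover y, y + 1, le_rfl,
        fun s hs hs' => by rwa [hs'.antisymm hs], ?_⟩
      have hzown := hown y hxy y.le_succ _ hzy
      have := deepIncoming_succ_le (R := R) i k hy
      have := deepIncoming_le_of_isOwn_in_nook hwy (by omega) hR hzown hz
      have := R.nookPotential_mono hwy (R.leftMover y)
      have := R.nookPotential_leftMover_lt hg hzown (hown _ (by omega) le_rfl _ hnext)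
      have : (n + 10 * tolerance m n + 1) * (R.nookPotential w (R.leftMover y) + 1) ≤
          (n + 10 * tolerance m n + 1) * R.nookPotential (y + 1) (R.rightMover y) :=
        Nat.mul_le_mul_left _ (by omega)
      rw [Nat.mul_add_one] at this
      omega

lemma deepIncoming_le_of_forall_isOwn (hR : R.defect ≤ n)
    (hown : ∀ s, x ≤ s → s ≤ y → ∀ z, R.pos s z = .nook i → z.IsOwn lab i) :
    R.deepIncoming i k y ≤
      R.deepIncoming i k x + (n + 10 * tolerance m n + 1) * (4 * n + 2) := by
  obtain ⟨z, w, hwy, hz, hle⟩ := exists_nook_occupant_deepIncoming_le hxy hy hR hown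
  have := deepIncoming_le_of_isOwn_in_nook hwy hy hR
    (hown y hxy le_rfl z (hz y hwy le_rfl)) hz
  have hpot := R.nookPotential_le (hwy.trans hy) z
  have : (n + 10 * tolerance m n + 1) * (R.nookPotential w z + 1) ≤
      (n + 10 * tolerance m n + 1) * (4 * n + 2) := Nat.mul_le_mul_left _ (by omega)
  rw [Nat.mul_add_one] at this
  omega

end OwnInNook

end SwapRun

/-! ### Foreign tokens in the nook -/

lemma exists_maximal_interval_not {P : ℕ → Prop} {τ S : ℕ} (hτ : ¬ P τ) (hτS : τ ≤ S)
    (h0 : P 0) (hS : P S) :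
    ∃ p q, p < τ ∧ τ < q ∧ q ≤ S ∧ P p ∧ P q ∧ ∀ s, p < s → s < q → ¬ P s := by
  have hnext : ∃ q, τ ≤ q ∧ P q := ⟨S, hτS, hS⟩
  have hprev : P (Nat.findGreatest P τ) := Nat.findGreatest_spec (Nat.zero_le τ) h0
  obtain ⟨hle, hq⟩ := Nat.find_spec hnext
  refine ⟨Nat.findGreatest P τ, Nat.find hnext, ?_, ?_, Nat.find_min' hnext ⟨hτS, hS⟩, hprev, hq,
    fun s hps hsq hs => ?_⟩
  · exact (Nat.findGreatest_le τ).lt_of_ne fun h => hτ (h ▸ hprev)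
  · exact hle.lt_of_ne fun h => hτ (h ▸ hq)
  · rcases le_total s τ with hsτ | hτs
    · exact Nat.findGreatest_is_greatest hps hsτ hs
    · exact Nat.find_min hnext hsq ⟨hτs, hs⟩

lemma RightArc.eq_root {m k : ℕ} {u v : Vtx m} {i : Fin m} (h : RightArc k u v)
    (hu : u.slotDepth k i = 0) (hv : 0 < v.slotDepth k i) : u = .root := by
  cases h <;> simp_all [Vtx.slotDepth]
  all_goals grind

namespace SwapRun

variable {m N k S : ℕ} {lab : Fin N → Fin m} {R : SwapRun m N k S lab} {n : ℕ}

lemma pos_eq_root_of_slotDepth_succ_pos {i : Fin m} {s : ℕ} (hs : s < S) {x : Token m N}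
    (h : R.slotDepth i s x = 0) (h' : 0 < R.slotDepth i (s + 1) x) : R.pos s x = .root := by
  obtain ⟨hg, rfl, -⟩ := (R.slotDepth_step i hs x).resolve_right (by omega)
  have := (R.slotDepth_of_gadget_eq_some hs hg).1
  exact (R.arc s hs).eq_root h (by rw [slotDepth] at *; omega)

lemma pos_succ_eq_root_of_slotDepth_pos {i : Fin m} {s : ℕ} (hs : s < S) {x : Token m N}
    (h : 0 < R.slotDepth i s x) (h' : R.slotDepth i (s + 1) x = 0) :
    R.pos (s + 1) x = .root := by
  obtain ⟨-, rfl, -⟩ :=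
    ((R.slotDepth_step i hs x).resolve_left (by omega)).resolve_right (by omega)
  rw [slotDepth, R.pos_leftMover s hs] at h'
  rw [R.pos_leftMover s hs]
  exact (R.arc s hs).eq_root h' h

lemma slotDepth_of_pos_eq_root {s : ℕ} {x : Token m N} (h : R.pos s x = .root) (i : Fin m) :
    R.slotDepth i s x = 0 := by
  simp [slotDepth, h, Vtx.slotDepth]

lemma exitCount_le_deepIncoming_add_of_foreign_enters (hR : R.defect ≤ n) {i : Fin m}
    {x : Token m N} {p t : ℕ} (hpt : p ≤ t) (ht : t ≤ S) (hp : R.slotDepth i p x = 0)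
    (hx : R.pos t x = .nook i) :
    R.exitCount i p ≤ R.deepIncoming i k t + 5 * tolerance m n := by
  have hcover : R.exitCount i p ≤ R.deepIncoming i k t +
      (#{c | lab c = i ∧ R.exitTime c ≤ p ∧ R.slotDepth i p (.incoming c) = 0} +
        #{c | ¬ R.IsTameIncoming c}) := by
    refine le_trans (card_le_card fun c => ?_) ((card_union_le _ _).trans
      (Nat.add_le_add_left (card_union_le _ _) _))
    simp only [mem_filter, mem_union, mem_univ, true_and]
    rintro ⟨rfl, hexit⟩
    by_cases htame : R.IsTameIncoming c
    · by_cases hwait : R.slotDepth (lab c) p (.incoming c) = 0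
      · exact .inr (.inl ⟨rfl, hexit, hwait⟩)
      · have hcap := R.cappedDepth_le_slotDepth (lab c) p x
        have := htame.cappedDepth_lt hpt ht (x := x) (by omega)
        rw [cappedDepth_of_pos_eq_nook hx] at this
        exact .inl ⟨rfl, htame, this⟩
    · exact .inr (.inr htame)
  have := card_incoming_waiting_le hR i (hpt.trans ht)
  have := card_not_isTameIncoming_le (R := R)
  have := tolerance_eq m n
  omega

lemma deepIncoming_add_le_exitCount_of_foreign_leaves (hR : R.defect ≤ n) {i : Fin m}
    {x : Token m N} (hx : ¬ x.IsOwn lab i) {t q : ℕ} (htq : t ≤ q) (hq : q ≤ S)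
    (ht : R.pos t x = .nook i) (hxq : R.slotDepth i q x = 0) :
    R.deepIncoming i k t + k < R.exitCount i q + 2 * n := by
  have := lt_add_of_foreign_moves_left hR hx htq hq (A := k) (B := 0)
    (by rw [slotDepth_of_pos_eq_nook ht]; exact k.lt_succ_self) hxq.le k.zero_le
  have : R.deepIncoming i 0 q ≤ R.exitCount i q :=
    card_le_card <| monotone_filter_right _ fun c _ h =>
      ⟨h.1, R.exitTime_le_of_ordDepth_eq_zero (R.ordDepth_eq_zero_of_slotDepth_pos h.2.2)⟩
  omega

/- While the outgoing token `b` is away from its slot gadget, it does not swap there with any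
incoming token that exits meanwhile; those past the start of the gadget never meet `b` later. -/
lemma exitCount_le_of_outgoing_absent (hR : R.defect ≤ n) {b : Fin N} {p q : ℕ} (hpq : p ≤ q)
    (hq : q ≤ R.enterTime b) (h : ∀ s, p ≤ s → s ≤ q → R.slotDepth (lab b) s (.outgoing b) = 0) :
    R.exitCount (lab b) q ≤ R.exitCount (lab b) p + 5 * tolerance m n := by
  have hqS : q ≤ S := hq.trans (R.enterTime_lt b).le
  have hcover : R.exitCount (lab b) q ≤ R.exitCount (lab b) p + (#{c | R.MissedSwap b c} +
      (#{c | ¬ R.IsTameIncoming c} +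
        #{c | lab c = lab b ∧ R.exitTime c ≤ q ∧ R.slotDepth (lab b) q (.incoming c) = 0})) := by
    refine le_trans (card_le_card fun c => ?_) ((card_union_le _ _).trans (Nat.add_le_add_left
      ((card_union_le _ _).trans (Nat.add_le_add_left (card_union_le _ _) _)) _))
    simp only [mem_filter, mem_union, mem_univ, true_and]
    rintro ⟨hlab, hexit⟩
    by_contra! ⟨hp, hmissed, htame, hwait⟩
    refine hmissed ⟨hlab, hexit.trans hq, ?_⟩
    rintro ⟨s, hs, hg, hl, hr⟩
    have hord := R.ordDepth_eq_zero_of_gadget_ne_none hs (s := s) (by simp [hg])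
    have hleft := (R.slotDepth_of_gadget_eq_some hs hg).1
    rw [hl] at hleft hord
    rw [hr] at hord
    rcases Nat.lt_or_ge s p with hsp | hps
    · have := R.exitTime_le_of_ordDepth_eq_zero (a := c) (s := s) (by tauto)
      have := hp hlab
      omega
    rcases Nat.lt_or_ge s q with hsq | hqs
    · have := h s hps hsq.le
      omega
    · rw [← hlab] at h hg hwait
      have hbefore := (htame.cappedDepth_leftMover hs hg hr).1
      have hcap := R.cappedDepth_le_slotDepth (lab c) q (.outgoing b)
      have := h q hpq le_rfl
      have := hwait rfl hexit
      have := htame.cappedDepth_lt hqs hs.le (x := .outgoing b) (by omega)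
      rw [hl] at hbefore
      omega
  have := R.card_missedSwap_left_le_defect b
  have := card_not_isTameIncoming_le (R := R)
  have := card_incoming_waiting_le hR (lab b) hqS
  have := tolerance_eq m n
  omega

lemma exists_visit_of_outgoing_in_nook (hR : R.defect ≤ n) {i : Fin m} {b : Fin N}
    (hb : lab b ≠ i) {t : ℕ} (ht : t ≤ S) (h : R.pos t (.outgoing b) = .nook i) :
    ∃ p q, p ≤ q ∧ q ≤ S ∧ R.exitCount i p ≤ R.deepIncoming i k t + 5 * tolerance m n ∧
      R.deepIncoming i k t + k < R.exitCount i q + 2 * n ∧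
      R.exitCount (lab b) q ≤ R.exitCount (lab b) p + 5 * tolerance m n := by
  obtain ⟨p, q, hpt, htq, hqS, hp, hq, hinside⟩ :=
    exists_maximal_interval_not (P := fun s => R.slotDepth i s (.outgoing b) = 0)
      (by simp [slotDepth_of_pos_eq_nook h]) ht (by simp [slotDepth_zero_outgoing, hb])
      (R.slotDepth_last_outgoing b i)
  obtain ⟨r, rfl⟩ : ∃ r, q = r + 1 := ⟨q - 1, by omega⟩
  have hroot := pos_eq_root_of_slotDepth_succ_pos (by omega) hp
    (Nat.pos_of_ne_zero (hinside (p + 1) (by omega) (by omega)))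
  have hroot' := pos_succ_eq_root_of_slotDepth_pos (by omega)
    (Nat.pos_of_ne_zero (hinside r (by omega) (by omega))) hq
  refine ⟨p, r + 1, by omega, hqS, ?_, ?_, ?_⟩
  · exact exitCount_le_deepIncoming_add_of_foreign_enters hR hpt.le ht hp h
  · exact deepIncoming_add_le_exitCount_of_foreign_leaves hR (x := .outgoing b) hb htq.le hqS h hq
  · refine exitCount_le_of_outgoing_absent hR (by omega) ?_ fun s hs hs' => ?_
    · exact R.le_enterTime hqS (by simp [ordDepth, hroot', Vtx.ordDepth])
    rcases hs.lt_or_eq with hps | rfl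
    · rcases hs'.lt_or_eq with hsr | rfl
      · exact R.slotDepth_eq_zero_of_ne hb.symm (Nat.pos_of_ne_zero (hinside s hps hsr))
      · exact slotDepth_of_pos_eq_root hroot' _
    · exact slotDepth_of_pos_eq_root hroot _

lemma reverse_exitCount_add_enterCount (i : Fin m) {τ : ℕ} (hτ : τ ≤ S) :
    R.reverse.exitCount i τ + R.enterCount i (S - τ) = labelCount lab i := by
  have hrev : R.reverse.exitCount i τ = #{c | lab c = i ∧ ¬ R.enterTime c < S - τ} := by
    rw [exitCount, ← card_filter_rev]
    refine congrArg card (filter_congr fun c _ => ?_)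
    have := R.enterTime_lt c
    rw [reverse_exitTime, Fin.rev_rev]
    exact and_congr_right' (by omega)
  have := card_filter_eq_add (fun c => lab c = i) fun c => R.enterTime c < S - τ
  rw [hrev, enterCount, labelCount]
  omega

end SwapRun

/-- In the sequence of labels, whenever label `i` occurs about `k` times between positions `g` and
`g'` during which some other label hardly occurs at all, this is a single block of `i`, and it
starts after a number of occurrences of `i` close to a multiple of `k`. Here `k'` bounds the noise
and `n` is the number of blocks. -/
def HasSpreadBlocks {m N : ℕ} (lab : Fin N → Fin m) (k k' n : ℕ) : Prop :=
  ∀ i j g g', i ≠ j → g ≤ g' → g' ≤ N →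
    labelCountBefore lab j g' < labelCountBefore lab j g + k' →
    labelCountBefore lab i g + k ≤ labelCountBefore lab i g' + k' →
    ∃ p, p * k ≤ labelCountBefore lab i g ∧ labelCountBefore lab i g ≤ p * k + (n + 3) * k' ∧
      labelCountBefore lab i g' ≤ labelCountBefore lab i g + k + 2 * k'

namespace SwapRun

variable {m N k S : ℕ} {lab : Fin N → Fin m} {R : SwapRun m N k S lab} {n : ℕ}

lemma exists_enterCount_of_foreign_in_nook (hR : R.defect ≤ n) {i : Fin m}
    (hk : k ≤ labelCount lab i) {t : ℕ} (ht : t ≤ S) {z : Token m N} (hz : R.pos t z = .nook i)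
    (hforeign : ¬ z.IsOwn lab i) (hitem : ∀ o, z ≠ .item o) :
    ∃ j p q, i ≠ j ∧ p ≤ q ∧ R.enterCount i p ≤ R.deepIncoming i k t + 11 * tolerance m n ∧
      R.deepIncoming i k t + k ≤ R.enterCount i q + 5 * tolerance m n ∧
      R.enterCount j q ≤ R.enterCount j p + 7 * tolerance m n := by
  have htol := tolerance_eq m n
  rcases z with o | b | b
  · exact absurd rfl (hitem o)
  · obtain ⟨p, q, hpq, hqS, hlow, hhigh, hother⟩ :=
      exists_visit_of_outgoing_in_nook hR hforeign ht hz
    have := enterCount_le_exitCount_add hR i (hpq.trans hqS)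
    have := exitCount_le_enterCount_add hR i q
    have := enterCount_le_exitCount_add hR (lab b) hqS
    have := exitCount_le_enterCount_add hR (lab b) p
    exact ⟨lab b, p, q, Ne.symm hforeign, hpq, by omega, by omega, by omega⟩
  · obtain ⟨p, q, hpq, hqS, hlow, hhigh, hother⟩ :=
      exists_visit_of_outgoing_in_nook (R := R.reverse) (n := n) (by rwa [reverse_defect])
        (i := i) (b := b.rev) (fun h => hforeign (show lab b = i by simpa using h)) (t := S - t)
        (by omega) (by simpa [Nat.sub_sub_self ht] using hz)
    have := R.reverse_exitCount_add_enterCount i (hpq.trans hqS)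
    have := R.reverse_exitCount_add_enterCount i hqS
    have := R.reverse_exitCount_add_enterCount (lab b) (hpq.trans hqS)
    have := R.reverse_exitCount_add_enterCount (lab b) hqS
    rw [reverse_deepIncoming, Nat.sub_sub_self ht] at hlow hhigh
    rw [Fin.rev_rev] at hother
    have := deepOutgoing_add_deepIncoming_le (R := R) i k ht
    have := labelCount_sub_le_deepOutgoing_add_deepIncoming_add hR i k ht
    exact ⟨lab b, S - q, S - p, Ne.symm hforeign, by omega, by omega, by omega, by omega⟩

lemma exists_deepIncoming_near_mul (hR : R.defect ≤ n)
    (hslack : rankSlack lab R.enterTime ≤ n) {k' : ℕ} (hspread : HasSpreadBlocks lab k k' n)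
    (hk' : 18 * tolerance m n ≤ k') {i : Fin m} (hk : k ≤ labelCount lab i)
    {t : ℕ} (ht : t ≤ S) {z : Token m N} (hz : R.pos t z = .nook i) (hforeign : ¬ z.IsOwn lab i)
    (hitem : ∀ o, z ≠ .item o) :
    ∃ p, p * k ≤ R.deepIncoming i k t + k' ∧
      R.deepIncoming i k t ≤ p * k + (n + 6) * k' := by
  obtain ⟨j, p, q, hij, hpq, hlow, hhigh, hother⟩ :=
    exists_enterCount_of_foreign_in_nook hR hk ht hz hforeign hitem
  have := enterCount_le_labelCountBefore_add hslack i q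
  have := labelCountBefore_le_enterCount_add hslack i q
  have := labelCountBefore_le_enterCount_add hslack j q
  have := enterCount_le_labelCountBefore_add hslack i p
  have := labelCountBefore_le_enterCount_add hslack i p
  have := enterCount_le_labelCountBefore_add hslack j p
  have htol := tolerance_eq m n
  obtain ⟨r, hrp, hpr, hqp⟩ := hspread i j #{a | R.enterTime a < p} #{a | R.enterTime a < q} hij
    (card_le_card <| monotone_filter_right _ fun c _ h => h.trans_le hpq)
    ((card_le_univ _).trans (Fintype.card_fin N).le) (by omega) (by omega)
  refine ⟨r, by omega, ?_⟩
  have : (n + 6) * k' = (n + 3) * k' + 3 * k' := by ring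
  omega

end SwapRun

/-! ### Items stay deep -/

lemma exists_eq_of_succ_le_add_one {f : ℕ → ℕ} {p q v : ℕ} (hpq : p ≤ q)
    (hf : ∀ s, p ≤ s → s < q → f (s + 1) ≤ f s + 1) (hp : f p ≤ v) (hq : v ≤ f q) :
    ∃ s, p ≤ s ∧ s ≤ q ∧ f s = v := by
  induction q, hpq using Nat.le_induction with
  | base => exact ⟨p, le_rfl, le_rfl, hp.antisymm hq⟩
  | succ q hpq ih =>
    by_cases hv : v ≤ f q
    · obtain ⟨s, hps, hsq, hs⟩ := ih (fun s hs hs' => hf s hs (by omega)) hv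
      exact ⟨s, hps, by omega, hs⟩
    · exact ⟨q + 1, by omega, le_rfl, by have := hf q hpq (by omega); omega⟩

/- The targets lie in windows of length `w` after multiples of `k`; a function that rises by
`2 * (L + w) + 1 < k` passes at most one such window, but must hit two of them `w` apart. -/
lemma not_succ_le_add_one_of_near_mul {f : ℕ → ℕ} {p q k k' w L : ℕ} (hpq : p ≤ q)
    (hf : ∀ s, p ≤ s → s < q → f (s + 1) ≤ f s + 1)
    (hmono : ∀ x y, p ≤ x → x ≤ y → y ≤ q → f x ≤ f y)
    (hnear : ∀ x y, p ≤ x → x ≤ y → y ≤ q → f x + L ≤ f y →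
      ∃ s r, x ≤ s ∧ s ≤ y ∧ r * k ≤ f s + k' ∧ f s + k' ≤ r * k + w)
    (hk : 2 * (L + w) + 1 < k) : f q < f p + (2 * L + w + 1) := by
  by_contra! hgrow
  obtain ⟨y, hpy, hyq, hy⟩ := exists_eq_of_succ_le_add_one (v := f p + L) hpq hf (by omega)
    (by omega)
  obtain ⟨x', hyx, hxq, hx'⟩ := exists_eq_of_succ_le_add_one (v := f p + L + w + 1) hyq
    (fun s hs => hf s (by omega)) (by omega) (by omega)
  obtain ⟨y', hxy, hyq', hy'⟩ := exists_eq_of_succ_le_add_one (v := f p + 2 * L + w + 1) hxq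
    (fun s hs => hf s (by omega)) (by omega) (by omega)
  obtain ⟨s, r, hps, hsy, hr, hr'⟩ := hnear p y le_rfl hpy hyq (by omega)
  obtain ⟨s', r', hxs, hsy', hs, hs'⟩ := hnear x' y' (by omega) hxy hyq' (by omega)
  have := hmono p s le_rfl hps (by omega)
  have := hmono s y hps hsy hyq
  have := hmono x' s' (by omega) hxs (by omega)
  have := hmono s' y' (by omega) hsy' hyq'
  rcases Nat.lt_or_ge r r' with hlt | hge
  · have := Nat.mul_le_mul_right k hlt
    rw [Nat.succ_mul] at this
    omega
  · have := Nat.mul_le_mul_right k hge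
    omega

namespace SwapRun

variable {m N k S : ℕ} {lab : Fin N → Fin m} {R : SwapRun m N k S lab} {n : ℕ}

lemma deepIncoming_add_le_of_items_shallow (hR : R.defect ≤ n) {i : Fin m}
    (hk : k ≤ labelCount lab i) {p τ q B : ℕ} (hpτ : p ≤ τ) (hτq : τ ≤ q) (hq : q ≤ S)
    (hB : B + 2 ≤ k) (hτ : ∀ o, R.slotDepth i τ (.item o) ≤ B) {o o' : Option (Fin m)}
    (ho : k ≤ R.slotDepth i p (.item o) + 1) (ho' : k ≤ R.slotDepth i q (.item o') + 1) :
    R.deepIncoming i k p + k ≤ R.deepIncoming i k q + B + 10 * tolerance m n + 4 * n + 2 := by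
  have hleft := lt_add_of_foreign_moves_left hR (i := i) (x := .item o) (by simp [Token.IsOwn]) hpτ
    (hτq.trans hq) (A := k - 2) (by omega) (hτ o) (by omega)
  have hright := lt_add_of_foreign_moves_right hR (i := i) (x := .item o') (by simp [Token.IsOwn])
    hτq hq (A := k - 2) (by omega) (hτ o') (by omega)
  have hanti : R.deepIncoming i k p ≤ R.deepIncoming i (k - 2) p :=
    card_le_card <| monotone_filter_right _ fun c _ h => ⟨h.1, h.2.1, by have := h.2.2; omega⟩
  have hanti' : R.deepOutgoing i k q ≤ R.deepOutgoing i (k - 2) q :=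
    card_le_card <| monotone_filter_right _ fun c _ h => ⟨h.1, h.2.1, by have := h.2.2; omega⟩
  have := deepOutgoing_add_deepIncoming_le (R := R) i B (hτq.trans hq)
  have := labelCount_sub_le_deepOutgoing_add_deepIncoming_add hR i k hq
  omega

theorem exists_item_le_slotDepth (hR : R.defect ≤ n)
    (hslack : rankSlack lab R.enterTime ≤ n) {k' : ℕ} (hspread : HasSpreadBlocks lab k k' n)
    (hk' : 18 * tolerance m n ≤ k') {i : Fin m} (hk : k ≤ labelCount lab i)
    (h0 : ∃ o, R.pos 0 (.item o) = .nook i) (hS : ∃ o, R.pos S (.item o) = .nook i) {L D : ℕ}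
    (hL : (n + 10 * tolerance m n + 1) * (4 * n + 2) < L)
    (hkL : 2 * (L + (n + 7) * k') + 1 < k) (hD : 0 < D)
    (hkD : 2 * L + (n + 7) * k' + 10 * tolerance m n + 4 * n + 2 + D ≤ k) {τ : ℕ} (hτ : τ ≤ S) :
    ∃ o, D ≤ R.slotDepth i τ (.item o) := by
  by_contra! hshallow
  have hdeep : ∀ s, (∃ o, R.pos s (.item o) = .nook i) → ∃ o, k ≤ R.slotDepth i s (.item o) :=
    fun s ⟨o, ho⟩ => ⟨o, by rw [slotDepth_of_pos_eq_nook ho]; omega⟩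
  obtain ⟨p, q, hpτ, hτq, hqS, ⟨o, ho⟩, ⟨o', ho'⟩, hinside⟩ :=
    exists_maximal_interval_not (P := fun s => ∃ o, k ≤ R.slotDepth i s (.item o))
      (by push Not; exact fun o => (hshallow o).trans (by omega)) hτ (hdeep 0 h0) (hdeep S hS)
  obtain ⟨q, rfl⟩ : ∃ r, q = r + 1 := ⟨q - 1, by omega⟩
  have hstep := R.slotDepth_step i (s := p) (by omega) (.item o)
  have hstep' := R.slotDepth_step i (s := q) (by omega) (.item o')
  have hgrow := deepIncoming_add_le_of_items_shallow hR hk (p := p + 1) (τ := τ) (q := q) hpτ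
    (by omega) (by omega) (B := D - 1) (by omega) (fun o => Nat.le_sub_one_of_lt (hshallow o))
    (o := o) (o' := o') (by omega) (by omega)
  have hforeign : ∀ s, p + 1 ≤ s → s ≤ q → ∀ z, R.pos s z = .nook i → ∀ o, z ≠ .item o := by
    rintro s hs hs' _ hz o rfl
    exact hinside s hs (by omega) (hdeep s ⟨o, hz⟩)
  have := not_succ_le_add_one_of_near_mul (f := R.deepIncoming i k) (p := p + 1) (q := q)
    (k' := k') (w := (n + 7) * k') (L := L) (by omega)
    (fun s _ hs => deepIncoming_succ_le i k (by omega))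
    (fun x y _ hxy hy => deepIncoming_mono i k hxy (by omega)) ?_ hkL
  · omega
  intro x y hx hxy hy hxL
  by_contra! hnear
  refine absurd (deepIncoming_le_of_forall_isOwn (i := i) hxy (by omega) hR fun s hs hs' z hz => ?_)
    (by omega)
  by_contra hown
  obtain ⟨r, hr, hr'⟩ := exists_deepIncoming_near_mul hR hslack hspread hk' hk (by omega) hz hown
    (hforeign s (by omega) (by omega) z hz)
  have := hnear s r hs hs' hr
  have : (n + 7) * k' = (n + 6) * k' + k' := by ring
  omega

end SwapRun

/-! ### The pattern of segments in the ordering gadget -/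

section Counting

variable {α : Type*} [DecidableEq α] {N : ℕ} {lab : Fin N → α} {f : Fin N → ℕ}

lemma injOn_of_strictMono (hmono : ∀ ⦃c c'⦄, lab c = lab c' → c < c' → f c < f c') (i : α) :
    Set.InjOn f ({c | lab c = i} : Finset (Fin N)) := fun c hc c' hc' h => by
  simp only [coe_filter, mem_univ, true_and, Set.mem_ofPred_eq] at hc hc'
  rcases lt_trichotomy c c' with hlt | heq | hgt
  · exact absurd h (hmono (hc.trans hc'.symm) hlt).ne
  · exact heq
  · exact absurd h (hmono (hc'.trans hc.symm) hgt).ne'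

lemma image_eq_range_of_strictMono
    (hmono : ∀ ⦃c c'⦄, lab c = lab c' → c < c' → f c < f c')
    (hlt : ∀ c, f c < labelCount lab (lab c)) (i : α) :
    ({c | lab c = i} : Finset (Fin N)).image f = range (labelCount lab i) := by
  refine eq_of_subset_of_card_le (fun v hv => ?_) ?_
  · obtain ⟨c, hc, rfl⟩ := mem_image.1 hv
    obtain rfl := (mem_filter.1 hc).2
    exact mem_range.2 (hlt c)
  · rw [card_range, card_image_of_injOn (injOn_of_strictMono hmono i), labelCount]

lemma labelCountBefore_eq_of_strictMono
    (hmono : ∀ ⦃c c'⦄, lab c = lab c' → c < c' → f c < f c')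
    (hlt : ∀ c, f c < labelCount lab (lab c)) {i : α} {g q : ℕ} (hq : q ≤ labelCount lab i)
    (hg : ∀ c, lab c = i → (c.val < g ↔ f c < q)) : labelCountBefore lab i g = q := by
  have himage := image_eq_range_of_strictMono hmono hlt i
  have hsubset : ({c | lab c = i ∧ c.val < g} : Finset (Fin N)) ⊆
      ({c | lab c = i} : Finset (Fin N)) := monotone_filter_right _ fun _ _ h => h.1
  rw [labelCountBefore, ← card_image_of_injOn ((injOn_of_strictMono hmono i).mono
    (coe_subset.2 hsubset)), ← card_range q]
  congr 1
  ext v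
  constructor
  · intro hv
    obtain ⟨c, hc, rfl⟩ := mem_image.1 hv
    obtain ⟨hc, hcg⟩ := (mem_filter.1 hc).2
    exact mem_range.2 ((hg c hc).1 hcg)
  · intro hv
    obtain ⟨c, hc, rfl⟩ := mem_image.1 (himage ▸ mem_range.2 ((mem_range.1 hv).trans_le hq))
    have hc' := (mem_filter.1 hc).2
    exact mem_image_of_mem f (by simp [hc', (hg c hc').2 (mem_range.1 hv)])

lemma labelRank_eq_of_strictMono
    (hmono : ∀ ⦃c c'⦄, lab c = lab c' → c < c' → f c < f c')
    (hlt : ∀ c, f c < labelCount lab (lab c)) (c : Fin N) : labelRank lab c = f c := by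
  rw [← labelCountBefore_eq_of_strictMono hmono hlt (hlt c).le (g := c.val) fun c' h => ?_]
  · simp only [labelRank, labelCountBefore, and_comm, Fin.lt_def]
  · refine ⟨fun hlt => hmono h hlt, fun hlt => ?_⟩
    by_contra! hle
    rcases hle.lt_or_eq with hgt | heq
    · exact (hmono h.symm hgt).not_gt hlt
    · exact hlt.ne (congrArg f (Fin.ext heq.symm))

end Counting

lemma valueRank_lt {β : Type*} [LinearOrder β] {N : ℕ} (f : Fin N → β) (a : Fin N) :
    valueRank f a < N := by
  have := card_lt_card ((filter_ssubset (p := fun b => f b < f a)).2 ⟨a, mem_univ a, lt_irrefl _⟩)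
  rwa [card_univ, Fintype.card_fin] at this

section Segments

variable {m n : ℕ} (s : Fin n → Fin m)

/-- Sorts the labels by their place among the padding segments of block `j`, so that `rho s · j`
ranks its values. -/
def paddingKey (j : Fin n) (i : Fin m) : ℕ :=
  if some i = nxt s j then 0 else if i = s j then m + 1 else i + 1

lemma paddingKey_injective (j : Fin n) : (paddingKey s j).Injective := by
  intro i i' h
  unfold paddingKey at h
  grind

lemma rho_eq_valueRank (i : Fin m) (j : Fin n) : rho s i j = valueRank (paddingKey s j) i := by
  unfold rho valueRank
  split_ifs with hnext hlast hsome
  · simp [paddingKey, hnext]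
  · have hothers : ({i' | paddingKey s j i' < paddingKey s j i} : Finset (Fin m)) =
        univ.erase i := by
      ext i'
      rw [mem_filter_univ, mem_erase, paddingKey, paddingKey]
      grind
    rw [hothers, card_erase_of_mem (mem_univ i), card_univ, Fintype.card_fin]
  · obtain ⟨b, hb⟩ := Option.isSome_iff_exists.1 hsome
    have hinsert : ({i' | paddingKey s j i' < paddingKey s j i} : Finset (Fin m)) =
        insert b ({i' | i'.val < i.val ∧ i' ≠ s j ∧ some i' ≠ nxt s j} : Finset (Fin m)) := by
      ext i'
      simp only [mem_filter, mem_univ, true_and, mem_insert, paddingKey]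
      grind
    rw [hinsert, card_insert_of_notMem (by simp [hb]), add_comm]
  · rw [zero_add]
    congr 1
    ext i'
    simp only [mem_filter, mem_univ, true_and, paddingKey]
    grind

lemma rho_lt (i : Fin m) (j : Fin n) : rho s i j < m :=
  (rho_eq_valueRank s i j).trans_lt (valueRank_lt _ i)

lemma rho_injective (j : Fin n) : (fun i => rho s i j).Injective := by
  simpa only [rho_eq_valueRank] using valueRank_injective (paddingKey_injective s j)

/-- A position in the pattern of segments of the ordering gadget: the position at a given offset
in a big segment `x_j`, or in a padding segment `p_{i,j}`. -/
abbrev SegPos (m n : ℕ) := (Fin n × Fin (kk m n)) ⊕ (Fin m × Fin n × Fin (kk' m n))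

/-- The length of a block, that is a big segment and the padding segments following it. -/
def blockLength (m n : ℕ) : ℕ := kk m n + m * kk' m n

/-- The index of the block containing a position. -/
def segBlock : SegPos m n → Fin n
  | .inl (j, _) => j
  | .inr (_, j, _) => j

/-- The slot gadget to which the segment containing a position belongs in the target
configuration. -/
def segLabel : SegPos m n → Fin m
  | .inl (j, _) => s j
  | .inr (i, _, _) => i

/-- The offset of a position from the start of its block in the ordering gadget. -/
def segOffset : SegPos m n → ℕ
  | .inl (_, a) => a
  | .inr (i, j, a) => kk m n + rho s i j * kk' m n + a

/-- The place of the token at a position of `y_j` or `q_{i,j}` in its slot gadget, in the initial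
configuration. -/
def slotPos : SegPos m n → ℕ
  | .inl (j, a) => offQ s (s j) j + a
  | .inr (i, j, a) => offQ s i j + (if s j = i then kk m n else 0) + a

lemma segOffset_lt (x : SegPos m n) : segOffset s x < blockLength m n := by
  rcases x with ⟨_, a⟩ | ⟨i, j, a⟩
  · exact a.isLt.trans_le (Nat.le_add_right _ _)
  · have := Nat.mul_le_mul_right (kk' m n) (rho_lt s i j)
    rw [Nat.succ_mul] at this
    simp only [segOffset, blockLength]
    omega

lemma eq_of_segOffset_eq {x y : SegPos m n} (hblock : segBlock x = segBlock y)
    (h : segOffset s x = segOffset s y) : x = y := by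
  rcases x with ⟨j, a⟩ | ⟨i, j, a⟩ <;> rcases y with ⟨j', b⟩ | ⟨i', j', b⟩ <;>
    obtain rfl : j = j' := hblock <;> simp only [segOffset] at h
  · rw [Fin.ext h]
  · omega
  · omega
  · have hdiv : ∀ r (c : Fin (kk' m n)), (r * kk' m n + c) / kk' m n = r := fun r c => by
      rw [mul_comm, Nat.mul_add_div c.pos, Nat.div_eq_of_lt c.isLt, add_zero]
    have hrho := hdiv (rho s i j) a
    rw [show rho s i j * kk' m n + a = rho s i' j * kk' m n + b by omega, hdiv] at hrho
    obtain rfl := rho_injective s j hrho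
    rw [Fin.ext (show a.val = b.val by omega)]

lemma lenOrd_eq_mul_blockLength : lenOrd m n = n * blockLength m n := by
  unfold lenOrd blockLength
  ring

lemma segIndex_lt (x : SegPos m n) :
    (segBlock x).val * blockLength m n + segOffset s x < lenOrd m n := by
  have := Nat.mul_le_mul_right (blockLength m n) (segBlock x).isLt
  have := segOffset_lt s x
  rw [Nat.succ_mul] at *
  rw [lenOrd_eq_mul_blockLength]
  omega

lemma segIndex_div (x : SegPos m n) :
    ((segBlock x).val * blockLength m n + segOffset s x) / blockLength m n = segBlock x := by
  have hlt := segOffset_lt s x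
  rw [mul_comm, Nat.mul_add_div (by omega), Nat.div_eq_of_lt hlt, add_zero]

/-- The positions of the pattern, numbered from the root outward. -/
noncomputable def segIndex : SegPos m n ≃ Fin (lenOrd m n) :=
  Equiv.ofBijective (fun x => ⟨segBlock x * blockLength m n + segOffset s x, segIndex_lt s x⟩) <| by
    rw [Fintype.bijective_iff_injective_and_card]
    constructor
    · intro x y h
      have hblock := segIndex_div s x
      have h := Fin.mk.inj h
      rw [h, segIndex_div] at hblock
      exact eq_of_segOffset_eq s (Fin.ext hblock.symm) (by rw [hblock] at h; omega)
    · rw [Fintype.card_fin]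
      simp only [Fintype.card_sum, Fintype.card_prod, Fintype.card_fin, lenOrd]
      ring

lemma val_segIndex (x : SegPos m n) :
    (segIndex s x).val = segBlock x * blockLength m n + segOffset s x := rfl

/-- The slot gadget to which the ordering gadget's `c`-th token goes. -/
noncomputable def ordLabel (c : Fin (lenOrd m n)) : Fin m := segLabel s ((segIndex s).symm c)

lemma ordLabel_segIndex (x : SegPos m n) : ordLabel s (segIndex s x) = segLabel s x := by
  simp [ordLabel]

/-- The place where block `j` starts in slot gadget `i`, in the initial configuration: `offQ`
extended to all natural numbers. -/
def slotOffset (i : Fin m) (j : ℕ) : ℕ :=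
  ∑ j' : Fin n with j'.val < j, (kk' m n + if s j' = i then kk m n else 0)

lemma slotOffset_succ (i : Fin m) (j : Fin n) :
    slotOffset s i (j + 1) =
      slotOffset s i j + (kk' m n + if s j = i then kk m n else 0) := by
  have hinsert : ({j' | j'.val < j + 1} : Finset (Fin n)) =
      insert j ({j' | j'.val < j} : Finset (Fin n)) := by
    ext j'
    simp only [mem_filter, mem_univ, true_and, mem_insert, Fin.ext_iff]
    omega
  rw [slotOffset, hinsert, sum_insert (by simp), add_comm, slotOffset]

lemma slotOffset_mono (i : Fin m) : Monotone (slotOffset s i) := fun _ _ h =>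
  sum_le_sum_of_subset <| monotone_filter_right _ fun _ _ h' => h'.trans_le h

lemma slotOffset_eq_lenSlot (i : Fin m) : slotOffset s i n = lenSlot s i := by
  simp only [slotOffset, Fin.is_lt, filter_true, sum_add_distrib, ← sum_filter, sum_const,
    card_univ, Fintype.card_fin, smul_eq_mul, lenSlot, cnt, add_comm]

lemma slotOffset_le_lenSlot (i : Fin m) (j : ℕ) : slotOffset s i j ≤ lenSlot s i := by
  rw [← slotOffset_eq_lenSlot]
  exact sum_le_sum_of_subset <| monotone_filter_right _ fun j' _ _ => j'.isLt

lemma exists_slotOffset_eq (i : Fin m) {j : ℕ} (hj : j ≤ n) :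
    ∃ p, slotOffset s i j = p * kk m n + j * kk' m n := by
  induction j with
  | zero => exact ⟨0, by simp [slotOffset]⟩
  | succ j ih =>
    obtain ⟨p, hp⟩ := ih (by omega)
    have := slotOffset_succ s i ⟨j, hj⟩
    simp only at this
    rw [this, hp]
    split_ifs
    · exact ⟨p + 1, by ring⟩
    · exact ⟨p, by ring⟩

lemma slotOffset_add_two_le (hcons : ∀ (j : Fin n) (h : j.val + 1 < n), s j ≠ s ⟨j.val + 1, h⟩)
    (i : Fin m) (j : Fin n) :
    slotOffset s i (j + 2) ≤ slotOffset s i j + kk m n + 2 * kk' m n := by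
  have hj := slotOffset_succ s i j
  by_cases h : j.val + 1 < n
  · have hj' := slotOffset_succ s i ⟨j + 1, h⟩
    simp only at hj'
    have := hcons j h
    grind
  · have hsub : slotOffset s i (j + 2) ≤ slotOffset s i (j + 1) :=
      sum_le_sum_of_subset <| monotone_filter_right _ fun _ _ _ => by omega
    split_ifs at hj <;> omega

lemma slotPos_mem (x : SegPos m n) :
    slotOffset s (segLabel s x) (segBlock x) ≤ slotPos s x ∧
      slotPos s x < slotOffset s (segLabel s x) (segBlock x + 1) := by
  rw [slotOffset_succ]
  rcases x with ⟨j, a⟩ | ⟨i, j, a⟩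
  · have hoff : offQ s (s j) j = slotOffset s (s j) j := rfl
    simp only [segLabel, segBlock, slotPos, hoff, if_true]
    omega
  · have hoff : offQ s i j = slotOffset s i j := rfl
    change slotOffset s i j ≤ offQ s i j + (if s j = i then kk m n else 0) + a ∧
      offQ s i j + (if s j = i then kk m n else 0) + a <
        slotOffset s i j + (kk' m n + if s j = i then kk m n else 0)
    omega

lemma slotPos_lt_slotPos {x y : SegPos m n} (hlabel : segLabel s x = segLabel s y)
    (h : segIndex s x < segIndex s y) : slotPos s x < slotPos s y := by
  have hblock : segBlock x ≤ segBlock y := by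
    have := Nat.div_le_div_right (c := blockLength m n) (Fin.lt_def.1 h).le
    rwa [val_segIndex, val_segIndex, segIndex_div, segIndex_div] at this
  rcases hblock.lt_or_eq with hlt | heq
  · have := slotOffset_mono s (segLabel s y) (Nat.succ_le_of_lt hlt)
    have hx := (slotPos_mem s x).2
    rw [hlabel] at hx
    exact hx.trans_le (this.trans (slotPos_mem s y).1)
  · rw [Fin.lt_def, val_segIndex, val_segIndex, heq] at h
    rcases x with ⟨j, a⟩ | ⟨i, j, a⟩ <;> rcases y with ⟨j', b⟩ | ⟨i', j', b⟩ <;>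
      obtain rfl : j = j' := heq <;> simp only [segOffset] at h <;> simp only [segLabel] at hlabel
    · simp only [slotPos]
      omega
    · subst hlabel
      simp only [slotPos, if_true]
      omega
    · omega
    · subst hlabel
      simp only [slotPos]
      omega

lemma labelCount_ordLabel (i : Fin m) : labelCount (ordLabel s) i = lenSlot s i := by
  have hcount : labelCount (ordLabel s) i = #({x | segLabel s x = i} : Finset (SegPos m n)) :=
    card_equiv (segIndex s).symm fun c => by
      rw [mem_filter_univ, mem_filter_univ]
      rfl
  have hbig : ∑ x : Fin n × Fin (kk m n), (if s x.1 = i then 1 else 0) = cnt s i * kk m n :=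
    calc ∑ x : Fin n × Fin (kk m n), (if s x.1 = i then 1 else 0)
      _ = ∑ j, ∑ _ : Fin (kk m n), (if s j = i then 1 else 0) := Fintype.sum_prod_type _
      _ = cnt s i * kk m n := by
        rw [cnt, card_filter, sum_mul]
        exact sum_congr rfl fun j _ => by
          rw [sum_const, card_univ, Fintype.card_fin, smul_eq_mul, mul_comm]
  have hpadding : ∑ x : Fin m × Fin n × Fin (kk' m n), (if x.1 = i then 1 else 0) =
      n * kk' m n :=
    calc ∑ x : Fin m × Fin n × Fin (kk' m n), (if x.1 = i then 1 else 0)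
      _ = ∑ i', ∑ _ : Fin n × Fin (kk' m n), (if i' = i then 1 else 0) := Fintype.sum_prod_type _
      _ = n * kk' m n := by simp
  rw [hcount, card_filter, Fintype.sum_sum_type]
  exact congrArg₂ (· + ·) hbig hpadding

lemma ordLabel_strictMono ⦃c c' : Fin (lenOrd m n)⦄ (hlabel : ordLabel s c = ordLabel s c')
    (h : c < c') : slotPos s ((segIndex s).symm c) < slotPos s ((segIndex s).symm c') :=
  slotPos_lt_slotPos s hlabel (by simpa using h)

lemma slotPos_lt_labelCount (c : Fin (lenOrd m n)) :
    slotPos s ((segIndex s).symm c) < labelCount (ordLabel s) (ordLabel s c) := by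
  rw [labelCount_ordLabel]
  exact (slotPos_mem s _).2.trans_le (slotOffset_le_lenSlot s _ _)

lemma labelRank_segIndex (x : SegPos m n) :
    labelRank (ordLabel s) (segIndex s x) = slotPos s x := by
  rw [labelRank_eq_of_strictMono (ordLabel_strictMono s) (slotPos_lt_labelCount s),
    Equiv.symm_apply_apply]

lemma labelCountBefore_mul_blockLength (i : Fin m) (j : ℕ) :
    labelCountBefore (ordLabel s) i (j * blockLength m n) = slotOffset s i j := by
  refine labelCountBefore_eq_of_strictMono (ordLabel_strictMono s) (slotPos_lt_labelCount s)
    ((slotOffset_le_lenSlot s i j).trans_eq (labelCount_ordLabel s i).symm) ?_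
  rintro c rfl
  obtain ⟨x, rfl⟩ := (segIndex s).surjective c
  have hpos : 0 < blockLength m n := (Nat.zero_le _).trans_lt (segOffset_lt s x)
  rw [ordLabel_segIndex, Equiv.symm_apply_apply, ← Nat.div_lt_iff_lt_mul hpos, val_segIndex,
    segIndex_div]
  have hmem := slotPos_mem s x
  rcases Nat.lt_or_ge (segBlock x) j with hlt | hge
  · exact iff_of_true hlt (hmem.2.trans_le (slotOffset_mono s _ hlt))
  · exact iff_of_false hge.not_gt ((slotOffset_mono s _ hge).trans hmem.1).not_gt

/- Two consecutive blocks contain at most one big segment of each label, and a padding segment of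
every label separates them. -/
lemma hasSpreadBlocks_ordLabel
    (hcons : ∀ (j : Fin n) (h : j.val + 1 < n), s j ≠ s ⟨j.val + 1, h⟩) (hk : kk' m n < kk m n) :
    HasSpreadBlocks (ordLabel s) (kk m n) (kk' m n) n := by
  intro i i' g g' _ hgg' hg' hother hgrow
  have hmono := fun l {g g' : ℕ} (h : g ≤ g') => labelCountBefore_mono (ordLabel s) l h
  have hblock := labelCountBefore_mul_blockLength s
  have hB : 0 < blockLength m n := by unfold blockLength; omega
  rw [lenOrd_eq_mul_blockLength] at hg'
  have hjn : g / blockLength m n < n := by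
    refine (Nat.div_lt_iff_lt_mul hB).2 (lt_of_le_of_ne (hgg'.trans hg') ?_)
    rintro rfl
    obtain rfl := hgg'.antisymm hg'
    omega
  obtain ⟨j, hj⟩ : ∃ j : Fin n, j.val = g / blockLength m n := ⟨⟨_, hjn⟩, rfl⟩
  have hjg : j * blockLength m n ≤ g := hj ▸ Nat.div_mul_le_self _ _
  have hgj : g ≤ (j + 1) * blockLength m n := by
    rw [hj, mul_comm]
    exact (Nat.lt_mul_div_succ g hB).le
  have hg'j : g' ≤ (j + 2) * blockLength m n := by
    by_contra! hlt
    by_cases h : j.val + 1 < n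
    · have hstart := hmono i' hgj
      have hend := hmono i' hlt.le
      have hsucc := slotOffset_succ s i' ⟨j + 1, h⟩
      rw [hblock] at hstart hend
      rw [show j.val + 2 = j + 1 + 1 from rfl] at hend
      simp only at hsucc
      omega
    · have := Nat.mul_le_mul_right (blockLength m n) (show n ≤ j + 2 by omega)
      omega
  have hstart := hmono i hjg
  have hnext := hmono i hgj
  have hend := hmono i hg'j
  rw [hblock] at hstart hnext hend
  obtain ⟨p, hp⟩ := exists_slotOffset_eq s i j.isLt.le
  have := slotOffset_succ s i j
  have := slotOffset_add_two_le s hcons i j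
  have := Nat.mul_le_mul_right (kk' m n) j.isLt.le
  have : (n + 3) * kk' m n = n * kk' m n + 3 * kk' m n := by ring
  refine ⟨p, by omega, ?_, ?_⟩ <;> split_ifs at * <;> omega

lemma tOffP_add_offQ (i : Fin m) (j : Fin n) :
    tOffP s i j + (offQ s i j + (kk' m n + if s j = i then kk m n else 0)) = lenSlot s i := by
  have hoff : offQ s i j = slotOffset s i j := rfl
  rw [hoff, ← slotOffset_succ, ← slotOffset_eq_lenSlot, tOffP, slotOffset, slotOffset, add_comm,
    ← sum_union (disjoint_filter.2 fun _ _ _ => by omega)]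
  congr 1
  ext j'
  simp only [mem_union, mem_filter, mem_univ, true_and]
  omega

end Segments

/-! ### Distances in the tree -/

section Tree

variable {m lenOrd nd : ℕ} {len : Fin m → ℕ} {u v : Vtx m}

lemma rel.rightArc (h : rel len lenOrd nd u v) : RightArc nd u v ∨ RightArc nd v u := by
  cases u <;> cases v <;> simp only [rel] at h
  · obtain ⟨rfl, -⟩ := h
    exact .inr .ord_root
  · obtain ⟨rfl, -⟩ := h
    exact .inl (.root_slot _)
  · obtain ⟨rfl, -⟩ := h
    exact .inr (.ord_ord _)
  · obtain ⟨rfl, rfl, -⟩ := h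
    exact .inl (.slot_slot _ _)
  · obtain ⟨rfl, h, -⟩ := h
    exact .inl (.slot_nook _ _ h)

lemma rightArc_of_adj (h : (Tree len lenOrd nd).Adj u v) : RightArc nd u v ∨ RightArc nd v u :=
  (SimpleGraph.fromRel_adj _ _ _).1 h |>.2.elim rel.rightArc fun h => h.rightArc.symm

lemma adj_of_rel (hne : u ≠ v) (h : rel len lenOrd nd u v) : (Tree len lenOrd nd).Adj u v :=
  (SimpleGraph.fromRel_adj _ _ _).2 ⟨hne, .inl h⟩

lemma exists_walk_ord_length_eq {d : ℕ} (hd : d < lenOrd) :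
    ∃ w : (Tree len lenOrd nd).Walk .root (.ord d), w.length = d + 1 := by
  induction d with
  | zero =>
    have hadj : (Tree len lenOrd nd).Adj .root (.ord 0) := adj_of_rel (by simp) ⟨rfl, hd⟩
    exact ⟨hadj.toWalk, rfl⟩
  | succ d ih =>
    obtain ⟨w, hw⟩ := ih (by omega)
    exact ⟨w.concat (adj_of_rel (by simp) ⟨rfl, hd⟩), by rw [w.length_concat, hw]⟩

lemma exists_walk_slot_length_eq {i : Fin m} {d : ℕ} (hd : d < len i) :
    ∃ w : (Tree len lenOrd nd).Walk .root (.slot i d), w.length = d + 1 := by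
  induction d with
  | zero =>
    have hadj : (Tree len lenOrd nd).Adj .root (.slot i 0) := adj_of_rel (by simp) ⟨rfl, hd⟩
    exact ⟨hadj.toWalk, rfl⟩
  | succ d ih =>
    obtain ⟨w, hw⟩ := ih (by omega)
    exact ⟨w.concat (adj_of_rel (by simp) ⟨rfl, rfl, hd⟩), by rw [w.length_concat, hw]⟩

lemma reachable_nook {i : Fin m} (hnd : 0 < nd) (hi : nd ≤ len i) :
    (Tree len lenOrd nd).Reachable .root (.nook i) := by
  have hlt : nd - 1 < len i := by omega
  have hadj : (Tree len lenOrd nd).Adj (.slot i (nd - 1)) (.nook i) :=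
    adj_of_rel (by simp) ⟨rfl, by omega, hlt⟩
  exact (exists_walk_slot_length_eq hlt).choose.reachable.trans hadj.reachable

lemma dist_ord_slot_le {i : Fin m} {d e : ℕ} (hd : d < lenOrd) (he : e < len i) :
    (Tree len lenOrd nd).dist (.ord d) (.slot i e) ≤ d + e + 2 := by
  obtain ⟨w, hw⟩ := exists_walk_ord_length_eq (len := len) (nd := nd) hd
  obtain ⟨w', hw'⟩ := exists_walk_slot_length_eq (lenOrd := lenOrd) (nd := nd) he
  have := SimpleGraph.dist_le (w.reverse.append w')
  rw [SimpleGraph.Walk.length_append, SimpleGraph.Walk.length_reverse] at this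
  omega

lemma slotDepth_le_add_length (i : Fin m) (w : (Tree len lenOrd nd).Walk u v) :
    v.slotDepth nd i ≤ u.slotDepth nd i + w.length := by
  induction w with
  | nil => simp
  | @cons a b c hadj w ih =>
    have hstep : b.slotDepth nd i ≤ a.slotDepth nd i + 1 := by
      rcases rightArc_of_adj hadj with h | h <;> rw [h.slotDepth_eq i] <;> split_ifs <;> omega
    rw [SimpleGraph.Walk.length_cons]
    omega

lemma slotDepth_le_dist_root (i : Fin m) (hv : (Tree len lenOrd nd).Reachable .root v) :
    v.slotDepth nd i ≤ (Tree len lenOrd nd).dist .root v := by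
  obtain ⟨w, hw⟩ := hv.exists_walk_length_eq_dist
  simpa [hw, Vtx.slotDepth] using slotDepth_le_add_length i w

lemma memGadget_of_slotDepth_pos {k : ℕ} {i : Fin m} (h : 0 < v.slotDepth k i) :
    memGadget v (some i) := by
  cases v <;> simp only [Vtx.slotDepth, memGadget] at * <;> grind

end Tree

section Construction

variable {m n : ℕ} (s : Fin n → Fin m)

lemma isVertex_ordLabel_of_adj {u v : Vtx m} (h : (TheGraph s).Adj u v) :
    IsVertex (ordLabel s) u ∧ IsVertex (ordLabel s) v := by
  have hrel {u v : Vtx m} (h : rel (lenSlot s) (lenOrd m n) (kk m n) u v) :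
      IsVertex (ordLabel s) u ∧ IsVertex (ordLabel s) v := by
    cases u <;> cases v <;> simp only [rel, IsVertex, labelCount_ordLabel] at h ⊢ <;> grind
  exact (SimpleGraph.fromRel_adj _ _ _).1 h |>.2.elim hrel fun h => (hrel h).symm

lemma reachable_root (hk : 0 < kk m n) (hlen : ∀ i, kk m n ≤ lenSlot s i) {v : Vtx m}
    (hv : IsVertex (ordLabel s) v) : (TheGraph s).Reachable .root v := by
  cases v with
  | root => exact SimpleGraph.Reachable.refl _
  | ord d => exact (exists_walk_ord_length_eq hv).choose.reachable
  | slot i d =>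
    rw [IsVertex, labelCount_ordLabel] at hv
    exact (exists_walk_slot_length_eq hv).choose.reachable
  | nook i => exact reachable_nook hk (hlen i)

/-! ### The tokens of the construction -/

/-- The token of a segment `y_j` or `q_{i,j}` at a given position. -/
def outgoingTok : SegPos m n → Tok m n
  | .inl x => .inr (.inr (.inl x))
  | .inr x => .inr (.inr (.inr (.inr x)))

/-- The token of a segment `x_j` or `p_{i,j}` at a given position. -/
def incomingTok : SegPos m n → Tok m n
  | .inl x => .inr (.inl x)
  | .inr x => .inr (.inr (.inr (.inl x)))

/-- The token of the construction which plays the role of a given token of a swap run. -/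
noncomputable def toTok : Token m (lenOrd m n) → Tok m n
  | .item o => .inl o
  | .outgoing c => outgoingTok ((segIndex s).symm c)
  | .incoming c => incomingTok ((segIndex s).symm c)

lemma sum_nonItem (f : Tok m n → ℕ) :
    ∑ t : NonItem m n, f (.inr t) =
      ∑ c, (f (toTok s (.outgoing c)) + f (toTok s (.incoming c))) := by
  rw [← Equiv.sum_comp (segIndex s)]
  simp only [toTok, Equiv.symm_apply_apply, NonItem, Fintype.sum_sum_type, outgoingTok, incomingTok,
    sum_add_distrib]
  ring

lemma initTok_item_none : initTok s (toTok s (.item none)) = .root := rfl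

lemma initTok_item_some (i : Fin m) : initTok s (toTok s (.item (some i))) = .nook i := rfl

lemma initTok_outgoing (c : Fin (lenOrd m n)) :
    initTok s (toTok s (.outgoing c)) = .slot (ordLabel s c) (slotPos s ((segIndex s).symm c)) := by
  rw [toTok, ordLabel]
  rcases (segIndex s).symm c with _ | _ <;> rfl

lemma labelRank_ordLabel (c : Fin (lenOrd m n)) :
    labelRank (ordLabel s) c = slotPos s ((segIndex s).symm c) := by
  rw [← labelRank_segIndex, Equiv.apply_symm_apply]

lemma initTok_incoming (c : Fin (lenOrd m n)) : initTok s (toTok s (.incoming c)) = .ord c := by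
  obtain ⟨x, rfl⟩ := (segIndex s).surjective c
  rw [toTok, Equiv.symm_apply_apply, val_segIndex]
  rcases x with ⟨j, a⟩ | ⟨i, j, a⟩
  · rfl
  · exact congrArg Vtx.ord (by simp only [segBlock, segOffset, blockLength]; ring)

variable (π : Equiv.Perm (Option (Fin m)))

lemma tgtTok_outgoing (c : Fin (lenOrd m n)) :
    tgtTok s π (toTok s (.outgoing c)) = .ord (lenOrd m n - 1 - c) := by
  obtain ⟨x, rfl⟩ := (segIndex s).surjective c
  rw [toTok, Equiv.symm_apply_apply, val_segIndex]
  rcases x with ⟨j, a⟩ | ⟨i, j, a⟩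
  · rfl
  · exact congrArg Vtx.ord (by simp only [segBlock, segOffset, blockLength, add_assoc])

lemma tgtTok_incoming (c : Fin (lenOrd m n)) :
    tgtTok s π (toTok s (.incoming c)) =
      .slot (ordLabel s c)
        (labelCount (ordLabel s) (ordLabel s c) - 1 - labelRank (ordLabel s) c) := by
  rw [labelRank_ordLabel, labelCount_ordLabel, toTok, ordLabel]
  rcases (segIndex s).symm c with ⟨j, a⟩ | ⟨i, j, a⟩
  · have := tOffP_add_offQ s (s j) j
    rw [if_pos rfl] at this
    have := a.isLt
    exact congrArg (Vtx.slot _) (by simp only [segLabel, slotPos]; omega)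
  · have := tOffP_add_offQ s i j
    have := a.isLt
    exact congrArg (Vtx.slot _) (by simp only [segLabel, slotPos]; omega)

lemma isRootOrNook_initTok (o : Option (Fin m)) :
    IsRootOrNook (initTok s (toTok s (.item o))) := by
  cases o <;> trivial

lemma isRootOrNook_tgtTok (o : Option (Fin m)) :
    IsRootOrNook (tgtTok s π (toTok s (.item o))) := by
  rw [toTok, tgtTok]
  cases π o <;> trivial

lemma tgtTok_item (o : Option (Fin m)) :
    tgtTok s π (toTok s (.item o)) = initTok s (toTok s (.item (π o))) := by
  rw [toTok, toTok, tgtTok]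
  cases π o <;> rfl

lemma bijOn_initTok :
    Set.BijOn (fun x => initTok s (toTok s x)) Set.univ {v | IsVertex (ordLabel s) v} := by
  refine ⟨fun x _ => ?_, fun x _ y _ h => ?_, fun v hv => ?_⟩
  · rcases x with (_ | i) | c | c
    · trivial
    · trivial
    · change IsVertex (ordLabel s) (initTok s (toTok s (.outgoing c)))
      rw [initTok_outgoing]
      exact slotPos_lt_labelCount s c
    · change IsVertex (ordLabel s) (initTok s (toTok s (.incoming c)))
      rw [initTok_incoming]
      exact c.isLt
  · rcases x with (_ | i) | c | c <;> rcases y with (_ | i') | c' | c' <;>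
      simp only [initTok_outgoing, initTok_incoming, initTok_item_none, initTok_item_some,
        Vtx.nook.injEq,
        Vtx.slot.injEq, Vtx.ord.injEq, reduceCtorEq] at h
    · rfl
    · rw [h]
    · rw [injOn_of_strictMono (ordLabel_strictMono s) (ordLabel s c) (by simp)
        (by simpa using h.1.symm) h.2]
    · rw [Fin.ext h]
  · cases v with
    | root => exact ⟨.item none, trivial, rfl⟩
    | ord d => exact ⟨.incoming ⟨d, hv⟩, trivial, initTok_incoming s _⟩
    | slot i d =>
      rw [Set.mem_ofPred_eq, IsVertex, ← mem_range,
        ← image_eq_range_of_strictMono (ordLabel_strictMono s) (slotPos_lt_labelCount s)] at hv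
      obtain ⟨c, hc, rfl⟩ := mem_image.1 hv
      obtain rfl := (mem_filter.1 hc).2
      exact ⟨.outgoing c, trivial, initTok_outgoing s c⟩
    | nook i => exact ⟨.item (some i), trivial, rfl⟩

end Construction

/-! ### Swap sequences as swap runs -/

section SwapV

variable {V : Type*} [DecidableEq V] (e : V × V)

lemma swapV_swapV (v : V) : swapV e (swapV e v) = v := by
  unfold swapV
  split_ifs <;> simp_all

lemma swapV_fst : swapV e e.1 = e.2 := if_pos rfl

lemma swapV_snd : swapV e e.2 = e.1 := by
  conv_lhs => rw [← swapV_fst]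
  rw [swapV_swapV]

lemma bijOn_swapV {s : Set V} (h₁ : e.1 ∈ s) (h₂ : e.2 ∈ s) : Set.BijOn (swapV e) s s := by
  have hmaps : Set.MapsTo (swapV e) s s := fun v hv => by
    unfold swapV
    split_ifs
    exacts [h₂, h₁, hv]
  exact Set.InvOn.bijOn ⟨fun v _ => swapV_swapV e v, fun v _ => swapV_swapV e v⟩ hmaps hmaps

end SwapV

section PlaceAt

variable {m n : ℕ} {σ : List (Vtx m × Vtx m)} {f : Tok m n → Vtx m} {τ : ℕ} {t t₁ t₂ : Tok m n}

lemma placeAt_succ (h : τ < σ.length) (t : Tok m n) :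
    placeAt σ f (τ + 1) t = swapV σ[τ] (placeAt σ f τ t) := by
  unfold placeAt applySwaps
  rw [List.take_add_one, List.getElem?_eq_getElem h, List.foldl_append]
  rfl

lemma placeAt_length : placeAt σ f σ.length = applySwaps σ f := by
  rw [placeAt, List.take_length]

lemma swapsPairAt.symm (h : swapsPairAt σ f τ t₁ t₂) : swapsPairAt σ f τ t₂ t₁ :=
  ⟨h.1, h.2.symm.imp And.symm And.symm⟩

lemma swapsPairAt.placeAt_succ_left (h : swapsPairAt σ f τ t₁ t₂) :
    placeAt σ f (τ + 1) t₁ = placeAt σ f τ t₂ := by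
  obtain ⟨hτ, ⟨h₁, h₂⟩ | ⟨h₁, h₂⟩⟩ := h <;> rw [placeAt_succ hτ, h₁, h₂]
  exacts [swapV_fst _, swapV_snd _]

lemma swapsPairAt.placeAt_succ_of_ne (h : swapsPairAt σ f τ t₁ t₂)
    (hne₁ : placeAt σ f τ t ≠ placeAt σ f τ t₁) (hne₂ : placeAt σ f τ t ≠ placeAt σ f τ t₂) :
    placeAt σ f (τ + 1) t = placeAt σ f τ t := by
  obtain ⟨hτ, ⟨h₁, h₂⟩ | ⟨h₁, h₂⟩⟩ := h <;> rw [h₁] at hne₁ <;> rw [h₂] at hne₂ <;>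
    rw [placeAt_succ hτ, swapV]
  exacts [(if_neg hne₁).trans (if_neg hne₂), (if_neg hne₂).trans (if_neg hne₁)]

lemma MinimalSeq.not_swapsPairAt_of_ne {τ' : ℕ} (hmin : MinimalSeq σ f) (hne : τ ≠ τ')
    (h : swapsPairAt σ f τ t₁ t₂) : ¬ swapsPairAt σ f τ' t₁ t₂ := fun h' =>
  hne.lt_or_gt.elim (fun hlt => hmin _ _ _ _ hlt h h') fun hlt => hmin _ _ _ _ hlt h' h

end PlaceAt

section Solution

variable {m n : ℕ} {s : Fin n → Fin m} {π : Equiv.Perm (Option (Fin m))}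
  {σ : List (Vtx m × Vtx m)} {τ : ℕ}

variable (s σ τ) in
/-- The vertex at which token `x` of the construction stands after `τ` swaps of `σ`. -/
noncomputable def runPos (x : Token m (lenOrd m n)) : Vtx m :=
  placeAt σ (initTok s) τ (toTok s x)

lemma runPos_length (hsol : applySwaps σ (initTok s) = tgtTok s π) (x : Token m (lenOrd m n)) :
    runPos s σ σ.length x = tgtTok s π (toTok s x) := by
  rw [runPos, placeAt_length, hsol]

lemma bijOn_runPos (hedges : ∀ e ∈ σ, (TheGraph s).Adj e.1 e.2) (hτ : τ ≤ σ.length) :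
    Set.BijOn (runPos s σ τ) Set.univ {v | IsVertex (ordLabel s) v} := by
  induction τ with
  | zero => exact bijOn_initTok s
  | succ τ ih =>
    obtain ⟨h₁, h₂⟩ := isVertex_ordLabel_of_adj s (hedges _ (List.getElem_mem hτ))
    refine ((bijOn_swapV σ[τ] h₁ h₂).comp (ih (by omega))).congr fun x _ => ?_
    exact (placeAt_succ hτ _).symm

lemma exists_movers (hedges : ∀ e ∈ σ, (TheGraph s).Adj e.1 e.2) (hτ : τ < σ.length) :
    ∃ x y, RightArc (kk m n) (runPos s σ τ y) (runPos s σ τ x) ∧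
      swapsPairAt σ (initTok s) τ (toTok s x) (toTok s y) := by
  have hadj := hedges _ (List.getElem_mem hτ)
  obtain ⟨h₁, h₂⟩ := isVertex_ordLabel_of_adj s hadj
  obtain ⟨x, -, hx⟩ := (bijOn_runPos hedges hτ.le).surjOn h₁
  obtain ⟨y, -, hy⟩ := (bijOn_runPos hedges hτ.le).surjOn h₂
  rcases rightArc_of_adj hadj with harc | harc
  · exact ⟨y, x, by rwa [hx, hy], hτ, .inr ⟨hy, hx⟩⟩
  · exact ⟨x, y, by rwa [hx, hy], hτ, .inl ⟨hx, hy⟩⟩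

lemma exists_swapRun (hedges : ∀ e ∈ σ, (TheGraph s).Adj e.1 e.2)
    (hsol : applySwaps σ (initTok s) = tgtTok s π) (hmin : MinimalSeq σ (initTok s)) :
    ∃ R : SwapRun m (lenOrd m n) (kk m n) σ.length (ordLabel s), R.pos = runPos s σ := by
  have hmovers (τ : ℕ) : ∃ x y, τ < σ.length →
      RightArc (kk m n) (runPos s σ τ y) (runPos s σ τ x) ∧
        swapsPairAt σ (initTok s) τ (toTok s x) (toTok s y) := by
    by_cases hτ : τ < σ.length
    · obtain ⟨x, y, h⟩ := exists_movers hedges hτ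
      exact ⟨x, y, fun _ => h⟩
    · exact ⟨.item none, .item none, fun h => absurd h hτ⟩
  choose left right hmovers using hmovers
  have hbij {τ : ℕ} (hτ : τ ≤ σ.length) := bijOn_runPos hedges hτ
  have hinj {τ : ℕ} (hτ : τ ≤ σ.length) : (runPos s σ τ).Injective :=
    Set.injOn_univ.1 (hbij hτ).injOn
  refine ⟨{ pos := runPos s σ, leftMover := left, rightMover := right
            arc := fun τ hτ => (hmovers τ hτ).1
            pos_leftMover := fun τ hτ => (hmovers τ hτ).2.placeAt_succ_left
            pos_rightMover := fun τ hτ => (hmovers τ hτ).2.symm.placeAt_succ_left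
            pos_of_ne := fun τ hτ x hl hr =>
              (hmovers τ hτ).2.placeAt_succ_of_ne ((hinj hτ.le).ne hl) ((hinj hτ.le).ne hr)
            pos_injective := fun τ hτ => hinj hτ
            isVertex_pos := fun τ hτ x => (hbij hτ).mapsTo (Set.mem_univ x)
            exists_pos_eq := fun τ hτ v hv =>
              let ⟨x, _, hx⟩ := (hbij hτ).surjOn hv
              ⟨x, hx⟩
            pos_zero_outgoing := fun c => by
              rw [labelRank_ordLabel]
              exact initTok_outgoing s c
            pos_last_outgoing := fun c => by rw [runPos_length hsol, tgtTok_outgoing]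
            pos_zero_incoming := initTok_incoming s
            pos_last_incoming := fun c => by rw [runPos_length hsol, tgtTok_incoming]
            pos_zero_item := isRootOrNook_initTok s
            pos_last_item := fun o => by
              rw [runPos_length hsol]
              exact isRootOrNook_tgtTok s π o
            not_swap_twice := fun τ τ' hτ hτ' hne h => ?_ }, rfl⟩
  have hnot := hmin.not_swapsPairAt_of_ne hne (hmovers τ hτ).2
  rcases h with ⟨hl, hr⟩ | ⟨hl, hr⟩ <;> rw [hl, hr] at hnot
  exacts [hnot (hmovers τ' hτ').2, hnot (hmovers τ' hτ').2.symm]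

end Solution

/-! ### Cost of a solution -/

/-- The distance from the root, counted negatively in the slot gadgets; left moves increase it
by `1`. -/
def Vtx.height {m : ℕ} (k : ℕ) : Vtx m → ℤ
  | .root => 0
  | .ord d => d + 1
  | .slot _ d => -(d + 1)
  | .nook _ => -(k + 1)

lemma RightArc.height_eq {m k : ℕ} {u v : Vtx m} (h : RightArc k u v) :
    u.height k = v.height k + 1 := by
  cases h <;> simp only [Vtx.height] <;> omega

lemma Token.sum_eq {m N : ℕ} (f : Token m N → ℤ) :
    ∑ x, f x = ∑ o, f (.item o) + ∑ c, (f (.outgoing c) + f (.incoming c)) := by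
  let e : Option (Fin m) ⊕ Fin N ⊕ Fin N ≃ Token m N :=
    { toFun := Sum.elim .item (Sum.elim .outgoing .incoming)
      invFun := fun
        | .item o => .inl o
        | .outgoing c => .inr (.inl c)
        | .incoming c => .inr (.inr c)
      left_inv := by rintro (_ | _ | _) <;> rfl
      right_inv := by rintro (_ | _ | _) <;> rfl }
  rw [← e.sum_comp, Fintype.sum_sum_type, Fintype.sum_sum_type, sum_add_distrib]
  rfl

/-- `-1` for the tokens that have to move right, that is, the incoming ones, and `1` for the
others. -/
noncomputable def Token.sign {m N : ℕ} (x : Token m N) : ℤ := if x.IsIncoming then -1 else 1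

namespace SwapRun

variable {m N k S : ℕ} {lab : Fin N → Fin m} (R : SwapRun m N k S lab)

lemma height_pos_succ {s : ℕ} (hs : s < S) (x : Token m N) :
    (R.pos (s + 1) x).height k = (R.pos s x).height k +
      ((if x = R.leftMover s then 1 else 0) - if x = R.rightMover s then 1 else 0) := by
  have hne := R.leftMover_ne_rightMover hs
  have harc := (R.arc s hs).height_eq
  by_cases hl : x = R.leftMover s
  · rw [if_pos hl, if_neg (hl ▸ hne), hl, R.pos_leftMover s hs]
    omega
  by_cases hr : x = R.rightMover s
  · rw [if_neg hl, if_pos hr, hr, R.pos_rightMover s hs]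
    omega
  · rw [if_neg hl, if_neg hr, R.pos_of_ne s hs x hl hr]
    omega

/- A swap changes the signed sum of the heights by `2`, minus `2` for each of its contrary moves. -/
lemma sum_sign_mul_height_add :
    ∑ x, x.sign * (R.pos S x).height k + 2 * R.contraryMoves (fun _ => True) =
      ∑ x, x.sign * (R.pos 0 x).height k + 2 * S := by
  have hstep : ∀ s ∈ range S,
      ∑ x, x.sign * (R.pos (s + 1) x).height k - ∑ x, x.sign * (R.pos s x).height k =
        2 - 2 * (if (R.leftMover s).IsIncoming then 1 else 0) -
          2 * (if ¬ (R.rightMover s).IsIncoming then 1 else 0) := by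
    intro s hs
    rw [← sum_sub_distrib]
    simp only [R.height_pos_succ (mem_range.1 hs), mul_add, mul_sub, add_sub_cancel_left,
      sum_sub_distrib, mul_ite, mul_one, mul_zero, sum_ite_eq', mem_univ, if_true, Token.sign]
    split_ifs <;> rfl
  have htotal := sum_congr rfl hstep
  rw [sum_range_sub fun s => ∑ x, x.sign * (R.pos s x).height k] at htotal
  simp only [sum_sub_distrib, ← mul_sum, sum_boole, sum_const, card_range, nsmul_eq_mul] at htotal
  simp only [contraryMoves, true_and]
  push_cast
  linarith

lemma contraryMoves_le {n : ℕ} (π : Equiv.Perm (Option (Fin m)))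
    (hitem : ∀ o, R.pos S (.item o) = R.pos 0 (.item (π o)))
    (hlen : (2 * S : ℤ) ≤ ∑ c,
      ((R.pos S (.outgoing c)).height k - (R.pos 0 (.outgoing c)).height k + 1 +
        ((R.pos 0 (.incoming c)).height k - (R.pos S (.incoming c)).height k + 1)) + 2 * n) :
    R.contraryMoves (fun _ => True) ≤ N + n := by
  have htotal := R.sum_sign_mul_height_add
  have hitems : ∑ o, (R.pos S (.item o)).height k = ∑ o, (R.pos 0 (.item o)).height k := by
    simp only [hitem]
    exact Equiv.sum_comp π fun o => (R.pos 0 (.item o)).height k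
  simp only [Token.sum_eq, Token.sign, Token.IsIncoming, reduceCtorEq, exists_false, if_false,
    one_mul, Token.incoming.injEq, exists_eq', if_true, hitems, neg_mul, sum_add_distrib,
    sum_neg_distrib] at htotal
  simp only [sum_add_distrib, sum_sub_distrib, sum_const, card_univ, Fintype.card_fin,
    nsmul_eq_mul, mul_one] at hlen
  omega

end SwapRun

section Construction

variable {m n : ℕ} (s : Fin n → Fin m) (π : Equiv.Perm (Option (Fin m))) (c : Fin (lenOrd m n))

lemma dd_outgoing_le :
    (dd s π (toTok s (.outgoing c)) : ℤ) ≤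
      (tgtTok s π (toTok s (.outgoing c))).height (kk m n) -
        (initTok s (toTok s (.outgoing c))).height (kk m n) := by
  have hslot := slotPos_lt_labelCount s c
  rw [labelCount_ordLabel] at hslot
  rw [dd, TheGraph, initTok_outgoing, tgtTok_outgoing, SimpleGraph.dist_comm]
  have hord : lenOrd m n - 1 - c < lenOrd m n := by omega
  have := dist_ord_slot_le (nd := kk m n) hord hslot
  simp only [Vtx.height]
  omega

lemma dd_incoming_le :
    (dd s π (toTok s (.incoming c)) : ℤ) ≤
      (initTok s (toTok s (.incoming c))).height (kk m n) -
        (tgtTok s π (toTok s (.incoming c))).height (kk m n) := by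
  have hrank := labelRank_lt_labelCount (ordLabel s) c
  rw [dd, TheGraph, initTok_incoming, tgtTok_incoming, labelCount_ordLabel]
  rw [labelCount_ordLabel] at hrank
  have hslot : lenSlot s (ordLabel s c) - 1 - labelRank (ordLabel s) c <
      lenSlot s (ordLabel s c) := by omega
  have := dist_ord_slot_le (nd := kk m n) c.isLt hslot
  simp only [Vtx.height]
  omega

variable {s π} in
lemma SwapRun.contraryMoves_le_of_solves {σ : List (Vtx m × Vtx m)}
    {R : SwapRun m (lenOrd m n) (kk m n) σ.length (ordLabel s)} (hpos : R.pos = runPos s σ)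
    (hsol : applySwaps σ (initTok s) = tgtTok s π)
    (hlen : 2 * σ.length ≤ (∑ t : NonItem m n, (dd s π (Sum.inr t) + 1)) + 2 * n) :
    R.contraryMoves (fun _ => True) ≤ lenOrd m n + n := by
  have hzero (x) : R.pos 0 x = initTok s (toTok s x) := by
    rw [hpos]
    rfl
  have hlast (x) : R.pos σ.length x = tgtTok s π (toTok s x) := by rw [hpos, runPos_length hsol]
  refine R.contraryMoves_le π (fun o => by rw [hlast, hzero, tgtTok_item]) ?_
  rw [sum_nonItem s fun t => dd s π t + 1] at hlen
  zify at hlen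
  refine hlen.trans ?_
  simp only [hlast, hzero]
  gcongr with c
  exacts [dd_outgoing_le s π c, dd_incoming_le s π c]

end Construction

/-! ### Choice of the lengths -/

section Lengths

variable {m n : ℕ}

lemma kk_eq : kk m n = n ^ 8 * kk' m n := by
  have hdvd : n ^ 8 ∣ kk m n := by
    rw [kk, mul_pow]
    exact (pow_dvd_pow n (by norm_num)).mul_left _
  exact (Nat.mul_div_cancel' hdvd).symm

lemma mul_sq_le_kk' (hm : 1 < m) (hn : 1 < n) : 4 ^ 10 * (m * n) ^ 2 ≤ kk' m n := by
  have hk' : kk' m n = m ^ 25 * n ^ 17 :=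
    Nat.eq_of_mul_eq_mul_left (by positivity : 0 < n ^ 8)
      (by rw [← kk_eq, kk]; ring)
  calc 4 ^ 10 * (m * n) ^ 2 ≤ (m * n) ^ 10 * (m * n) ^ 2 := by
        gcongr
        nlinarith
    _ ≤ (m * n) ^ 12 * (m ^ 13 * n ^ 5) := by
        rw [← pow_add]
        exact Nat.le_mul_of_pos_right _ (by positivity)
    _ = kk' m n := by rw [hk']; ring

lemma tolerance_lt (hm : 1 < m) (hn : 1 < n) : tolerance m n < 5 * (m * n) := by
  rw [tolerance]
  nlinarith

lemma detour_lt_kk' (hm : 1 < m) (hn : 1 < n) :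
    2 * ((n + 10 * tolerance m n + 1) * (4 * n + 2)) + 10 * tolerance m n + 4 * n + 5 <
      kk' m n := by
  have htol := tolerance_lt hm hn
  have hk' := mul_sq_le_kk' hm hn
  have hmn : 2 * n ≤ m * n := by gcongr; omega
  have hprod : (n + 10 * tolerance m n + 1) * (4 * n + 2) ≤ 51 * (m * n) * (3 * (m * n)) := by
    gcongr <;> omega
  nlinarith

lemma four_mul_mul_kk'_le (hn : 1 < n) : (n + 8) * kk' m n * (4 * n) ≤ kk m n := by
  have hpow : 2 ^ 6 ≤ n ^ 6 := Nat.pow_le_pow_left hn 6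
  rw [kk_eq]
  calc (n + 8) * kk' m n * (4 * n) = 4 * n * (n + 8) * kk' m n := by ring
    _ ≤ n ^ 2 * 2 ^ 6 * kk' m n := by
        gcongr ?_ * _
        nlinarith
    _ ≤ n ^ 2 * n ^ 6 * kk' m n := by gcongr
    _ = n ^ 8 * kk' m n := by ring

end Lengths

section Main

variable {m n : ℕ} {s : Fin n → Fin m}

lemma kk_le_lenSlot {i : Fin m} (hi : ∃ j, s j = i) : kk m n ≤ lenSlot s i := by
  obtain ⟨j, hj⟩ := hi
  have hcnt : 0 < cnt s i := card_pos.2 ⟨j, mem_filter.2 ⟨mem_univ j, hj⟩⟩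
  exact (Nat.le_mul_of_pos_left _ hcnt).trans (Nat.le_add_right _ _)

lemma SwapRun.exists_item_near_nook {S : ℕ}
    (R : SwapRun m (lenOrd m n) (kk m n) S (ordLabel s)) (hm : 1 < m) (hn : 1 < n)
    (hcons : ∀ (j : Fin n) (h : j.val + 1 < n), s j ≠ s ⟨j.val + 1, h⟩)
    (hcost : R.contraryMoves (fun _ => True) ≤ lenOrd m n + n) {i : Fin m}
    (hi : ∃ j, s j = i) (h0 : ∃ o, R.pos 0 (.item o) = .nook i)
    (hS : ∃ o, R.pos S (.item o) = .nook i) {τ : ℕ} (hτ : τ ≤ S) :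
    ∃ o, kk m n - kk m n / (4 * n) ≤ R.slotDepth i τ (.item o) := by
  have hbalance := R.defect_add_rankSlack_le hcost
  have hdetour := detour_lt_kk' hm hn
  have hdiv : (n + 8) * kk' m n ≤ kk m n / (4 * n) :=
    (Nat.le_div_iff_mul_le (by omega)).2 (four_mul_mul_kk'_le hn)
  have hquarter : kk m n / (4 * n) * 4 ≤ kk m n :=
    (Nat.mul_le_mul_left _ (by omega)).trans (Nat.div_mul_le_self _ (4 * n))
  have htol : 18 * tolerance m n ≤ kk' m n := by nlinarith
  rw [show n + 8 = n + 7 + 1 from rfl, add_one_mul] at hdiv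
  have hlt : kk' m n < kk m n := by omega
  refine R.exists_item_le_slotDepth (by omega) (by omega) (hasSpreadBlocks_ordLabel s hcons hlt)
    htol (by rw [labelCount_ordLabel]; exact kk_le_lenSlot hi) h0 hS (lt_add_one _)
    ?_ ?_ ?_ hτ <;> omega

end Main

theorem item_token_deep_in_slot_gadget_general {m n : ℕ} (hn : 1 < n)
    (s : Fin n → Fin m) (π : Equiv.Perm (Option (Fin m)))
    (hocc : ∀ i : Fin m, ∃ j, s j = i)
    (hcons : ∀ (j : Fin n) (h : j.val + 1 < n), s j ≠ s ⟨j.val + 1, h⟩)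
    (σ : List (Vtx m × Vtx m))
    (hedges : ∀ e ∈ σ, (TheGraph s).Adj e.1 e.2)
    (hsol : applySwaps σ (initTok s) = tgtTok s π)
    (hlen : 2 * σ.length ≤ (∑ t : NonItem m n, (dd s π (Sum.inr t) + 1)) + 2 * n)
    (hmin : MinimalSeq σ (initTok s)) :
    ∀ τ ≤ σ.length, ∀ i : Fin m, ∃ o : Option (Fin m),
      memGadget (placeAt σ (initTok s) τ (Sum.inl o)) (some i) ∧
      kk m n * (4 * n - 1) ≤
        4 * n * (TheGraph s).dist Vtx.root (placeAt σ (initTok s) τ (Sum.inl o)) := by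
  intro τ hτ i
  have hm : 1 < m := by
    have := Fin.val_ne_of_ne (hcons ⟨0, by omega⟩ hn)
    omega
  have hk : 0 < kk m n := by
    rw [kk]
    positivity
  obtain ⟨R, hR⟩ := exists_swapRun hedges hsol hmin
  obtain ⟨o, ho⟩ := R.exists_item_near_nook hm hn hcons (R.contraryMoves_le_of_solves hR hsol hlen)
    (hocc i) ⟨some i, by rw [hR]; rfl⟩
    ⟨π.symm (some i), by rw [hR, runPos_length hsol, tgtTok_item, π.apply_symm_apply]; rfl⟩ hτ
  have hv := R.isVertex_pos τ hτ (.item o)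
  rw [SwapRun.slotDepth] at ho
  rw [hR] at ho hv
  have hfrac : kk m n * (4 * n - 1) ≤ 4 * n * (kk m n - kk m n / (4 * n)) := by
    rw [Nat.mul_sub, Nat.mul_sub, mul_one, mul_comm (4 * n)]
    exact Nat.sub_le_sub_left (Nat.mul_div_le _ _) _
  have hdepth_pos : 0 < kk m n - kk m n / (4 * n) :=
    Nat.sub_pos_of_lt (Nat.div_lt_self hk (by omega))
  refine ⟨o, memGadget_of_slotDepth_pos (hdepth_pos.trans_le ho), hfrac.trans ?_⟩
  exact Nat.mul_le_mul_left _ (ho.trans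
    (slotDepth_le_dist_root i (reachable_root s hk (fun i => kk_le_lenSlot (hocc i)) hv)))

end UnweightedTS

namespace UnweightedTS

/-!
STATEMENT 9: Suppose `m, n > 5` and fix a swap sequence of length at most `K`
transforming the initial placement of the constructed instance into its target
placement, in which no pair of tokens swaps with each other more than once.  Then at
every point in time, every slot gadget contains at least one item token at distance
at least `k·(1 − 1/(4n))` from the root.  (The length bound is stated in the doubled
form `2·σ.length ≤ Σ_{t∈A}(d_t+1) + 2n`, and the distance bound
`dist ≥ k·(1 − 1/(4n))` in the equivalent form `k·(4n − 1) ≤ 4n·dist` with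
`k = (mn)^25`.)
-/
theorem item_token_deep_in_slot_gadget {m n : ℕ} (hm : 5 < m) (hn : 5 < n)
    (s : Fin n → Fin m) (π : Equiv.Perm (Option (Fin m)))
    (hπ0 : π none = none)
    (hocc : ∀ i : Fin m, ∃ j, s j = i)
    (hcons : ∀ (j : Fin n) (h : j.val + 1 < n), s j ≠ s ⟨j.val + 1, h⟩)
    (σ : List (Vtx m × Vtx m))
    (hedges : ∀ e ∈ σ, (TheGraph s).Adj e.1 e.2)
    (hsol : applySwaps σ (initTok s) = tgtTok s π)
    (hlen : 2 * σ.length ≤ (∑ t : NonItem m n, (dd s π (Sum.inr t) + 1)) + 2 * n)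
    (hmin : MinimalSeq σ (initTok s)) :
    ∀ τ ≤ σ.length, ∀ i : Fin m, ∃ o : Option (Fin m),
      memGadget (placeAt σ (initTok s) τ (Sum.inl o)) (some i) ∧
      kk m n * (4 * n - 1) ≤
        4 * n * (TheGraph s).dist Vtx.root (placeAt σ (initTok s) τ (Sum.inl o)) :=
  item_token_deep_in_slot_gadget_general (by omega) s π hocc hcons σ hedges hsol hlen hmin

end UnweightedTS
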